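/- arXiv:0911.5472 — 3 statements merged into one kernel-verified Lean document; each statement's English description precedes it below -/
import Mathlib

section
/- Case E1: Let l1, l2 be distinct odd primes with l1 ≡ 3 (mod 4) and l2 ≡ 1 (mod 4), let r1, r2 ≥ 1, and let N = 2 l1^{r1} l2^{r2}. Assume the multiplicative order of p modulo l1^{r1} is φ(l1^{r1}), the multiplicative order of p modulo l2^{r2} is φ(l2^{r2}), and f = φ(N)/2. Set h12 = h(Q(√-l1 l2)). If l1 l2 ≡ 7 (mod 8) then G(χ) = -p^{f/2}. If l1 l2 ≡ 3 (mod 8) then there exist integers a', b' with 4 p^{h12} = (a')² + l1 l2 (b')² and a' ≡ 2 p^{h12/2} (mod l1) such that G(χ) = -p^{f/2 - h12} ((a' + b' √-(l1 l2))/2)². -/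
open Complex Polynomial IntermediateField

/-- The complex primitive `p`-th root of unity `exp(2πi/p)`. -/
noncomputable def zetaP (p : ℕ) : ℂ := Complex.exp (2 * Real.pi * Complex.I / p)

/-- The Gauss sum `G(χ^λ) = ∑_{x ∈ F, x ≠ 0} χ^λ(x) ζ_p^{T(x)}`, where
`T` is the trace map from `F` down to `ZMod p`. -/
noncomputable def gaussSumN (p : ℕ) {F : Type} [Field F] [Fintype F] [Algebra (ZMod p) F]
    (χ : MulChar F ℂ) (lam : ℕ) : ℂ :=
  letI : DecidableEq F := Classical.decEq F
  ∑ x ∈ Finset.univ.filter (fun x : F => x ≠ 0),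
    (χ ^ lam) x * zetaP p ^ (Algebra.trace (ZMod p) F x).val

/-- `√-m = i√m ∈ ℂ`. -/
noncomputable def sqrtNeg (m : ℕ) : ℂ := Real.sqrt m * Complex.I

theorem sqrtNeg_sq (m : ℕ) : sqrtNeg m ^ 2 = -(m : ℂ) := by
  have h : ((Real.sqrt m : ℝ) : ℂ) ^ 2 = ((m : ℝ) : ℂ) := by
    rw [← Complex.ofReal_pow, Real.sq_sqrt (by positivity)]
  simp only [sqrtNeg, mul_pow, Complex.I_sq, h]
  push_cast
  ring

theorem isIntegral_sqrtNeg (m : ℕ) : IsIntegral ℚ (sqrtNeg m) := by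
  refine ⟨X ^ 2 + C (m : ℚ), monic_X_pow_add_C _ (by norm_num), ?_⟩
  simp [sqrtNeg_sq]

/-- The class number `h(ℚ(√-m))` of the quadratic field `ℚ(√-m) ⊆ ℂ`. -/
noncomputable def classNumSqrtNeg (m : ℕ) : ℕ :=
  haveI : FiniteDimensional ℚ ℚ⟮sqrtNeg m⟯ :=
    IntermediateField.adjoin.finiteDimensional (isIntegral_sqrtNeg m)
  haveI : CharZero ℚ⟮sqrtNeg m⟯ :=
    charZero_of_injective_algebraMap (algebraMap ℚ ℚ⟮sqrtNeg m⟯).injective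
  haveI : NumberField ℚ⟮sqrtNeg m⟯ := ⟨⟩
  NumberField.classNumber ℚ⟮sqrtNeg m⟯

/-- `√p* = √p` if `p ≡ 1 (mod 4)` and `i√p` if `p ≡ 3 (mod 4)`. -/
noncomputable def sqrtPStar (p : ℕ) : ℂ :=
  if p % 4 = 1 then (Real.sqrt p : ℂ) else (Real.sqrt p : ℂ) * Complex.I


section A1
open NumberField
variable {K : Type*} [Field K] [NumberField K]

theorem qf_indep (θ : K) (d : ℕ) (hd : 0 < d) (hθ : θ ^ 2 = -(d : K)) :
    LinearIndependent ℚ ![(1:K), θ] := by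
  rw [LinearIndependent.pair_iff]
  intro s t h
  have h' : (s:K) + t * θ = 0 := by simpa [Algebra.smul_def] using h
  have h2 : (s:K)^2 = t^2 * (-(d:K)) := by
    rw [← hθ]; have : (s:K) = -(t*θ) := by linear_combination h'
    rw [this]; ring
  have h3 : s^2 = t^2 * (-(d:ℚ)) := by exact_mod_cast h2
  have hd' : (0:ℚ) < d := by exact_mod_cast hd
  have ht : t = 0 := by
    by_contra ht
    have : 0 < t^2 := by positivity
    nlinarith [sq_nonneg s, mul_pos this hd']
  subst ht
  simp at h3
  exact ⟨h3, rfl⟩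

noncomputable def qfBasis (θ : K) (d : ℕ) (hd : 0 < d) (hθ : θ ^ 2 = -(d : K))
    (hspan : ∀ x : K, ∃ u v : ℚ, x = u + v * θ) : Module.Basis (Fin 2) ℚ K :=
  Module.Basis.mk (qf_indep θ d hd hθ) (by
    intro x _
    obtain ⟨u, v, rfl⟩ := hspan x
    have : (u:K) + v * θ = u • (1:K) + v • θ := by simp [Algebra.smul_def]
    rw [this]
    refine Submodule.add_mem _ (Submodule.smul_mem _ _ (Submodule.subset_span ⟨0, rfl⟩))
      (Submodule.smul_mem _ _ (Submodule.subset_span ⟨1, rfl⟩)))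

variable (θ : K) (d : ℕ) (hd : 0 < d) (hθ : θ ^ 2 = -(d : K))
    (hspan : ∀ x : K, ∃ u v : ℚ, x = u + v * θ)

theorem qfBasis_zero : qfBasis θ d hd hθ hspan 0 = 1 := by simp [qfBasis]
theorem qfBasis_one : qfBasis θ d hd hθ hspan 1 = θ := by simp [qfBasis]

include hd hθ hspan in
theorem qf_leftMul (u v : ℚ) : Algebra.leftMulMatrix (qfBasis θ d hd hθ hspan) ((u:K) + v * θ)
    = !![u, -(d * v); v, u] := by
  have e0 : ((u:K) + v * θ) * qfBasis θ d hd hθ hspan 0 = u • qfBasis θ d hd hθ hspan 0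
      + v • qfBasis θ d hd hθ hspan 1 := by
    rw [qfBasis_zero, qfBasis_one]; simp [Algebra.smul_def]
  have e1 : ((u:K) + v * θ) * qfBasis θ d hd hθ hspan 1 = (-(d*v)) • qfBasis θ d hd hθ hspan 0
      + u • qfBasis θ d hd hθ hspan 1 := by
    rw [qfBasis_zero, qfBasis_one]; simp [Algebra.smul_def]
    linear_combination (v:K) * hθ
  ext i j
  rw [Algebra.leftMulMatrix_eq_repr_mul]
  fin_cases j
  · simp only [Fin.zero_eta, e0]
    fin_cases i <;> simp
  · simp only [Fin.mk_one, e1]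
    fin_cases i <;> simp

include hd hθ hspan in
theorem qf_norm (u v : ℚ) : Algebra.norm ℚ ((u:K) + v * θ) = u^2 + d * v^2 := by
  rw [Algebra.norm_eq_matrix_det (qfBasis θ d hd hθ hspan), qf_leftMul, Matrix.det_fin_two]
  simp; ring

include hd hθ hspan in
theorem qf_trace (u v : ℚ) : Algebra.trace ℚ K ((u:K) + v * θ) = 2 * u := by
  rw [Algebra.trace_eq_matrix_trace (qfBasis θ d hd hθ hspan), qf_leftMul, Matrix.trace_fin_two]
  simp; ring

include hd hθ hspan in
theorem qf_finrank : Module.finrank ℚ K = 2 := by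
  rw [Module.finrank_eq_card_basis (qfBasis θ d hd hθ hspan)]; simp

include hd hθ hspan in
theorem qf_discr_basis : Algebra.discr ℚ (qfBasis θ d hd hθ hspan) = -(4 * d) := by
  have t (u v : ℚ) := qf_trace θ d hd hθ hspan u v
  rw [Algebra.discr_def, Matrix.det_fin_two]
  simp only [Algebra.traceMatrix_apply, Algebra.traceForm_apply, qfBasis_zero, qfBasis_one]
  have t1 := t 1 0
  have t2 := t 0 1
  have t3 := t (-d) 0
  simp at t1 t2 t3
  rw [← sq θ, hθ]; simp [t1, t2, t3]; ring

include hd hθ hspan in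
theorem qf_discr : ∃ k : ℤ, discr K * k^2 = -(4 * d) := by
  classical
  have hint : ∀ i, IsIntegral ℤ (qfBasis θ d hd hθ hspan i) := by
    intro i
    fin_cases i
    · simp only [Fin.zero_eta, qfBasis_zero]; exact isIntegral_one
    · simp only [Fin.mk_one, qfBasis_one]
      refine IsIntegral.of_pow (n := 2) (by norm_num) ?_
      rw [hθ]; exact (isIntegral_natCast d).neg
  let B := RingOfIntegers.basis K
  have hcard : Fintype.card (Module.Free.ChooseBasisIndex ℤ (𝓞 K)) = 2 := by
    rw [← Module.finrank_eq_card_basis (integralBasis K)]; exact qf_finrank θ d hd hθ hspan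
  let e : Module.Free.ChooseBasisIndex ℤ (𝓞 K) ≃ Fin 2 := Fintype.equivFinOfCardEq hcard
  let c : Module.Basis (Fin 2) ℚ K := (integralBasis K).reindex e
  let b' : Fin 2 → 𝓞 K := fun i => ⟨qfBasis θ d hd hθ hspan i, hint i⟩
  let P : Matrix (Fin 2) (Fin 2) ℤ := Matrix.of fun i j => B.repr (b' i) (e.symm j)
  have hP : (⇑(qfBasis θ d hd hθ hspan) : Fin 2 → K) = ((P.map (algebraMap ℤ ℚ)).map (algebraMap ℚ K)).mulVec c := by
    funext i
    have h1 := B.sum_repr (b' i)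
    have h2 := congrArg (algebraMap (𝓞 K) K) h1
    have h3 : (algebraMap (𝓞 K) K) (b' i) = qfBasis θ d hd hθ hspan i := rfl
    rw [h3, map_sum] at h2
    rw [← h2, ← e.symm.sum_comp]
    simp [Matrix.mulVec, dotProduct, c, P, integralBasis_apply, B, Algebra.smul_def, Matrix.map_apply]
  have h := qf_discr_basis θ d hd hθ hspan
  rw [hP, Algebra.discr_of_matrix_mulVec] at h
  have hc : Algebra.discr ℚ c = (discr K : ℚ) := by
    rw [coe_discr, ← Algebra.discr_reindex ℚ (integralBasis K) e]
    congr 1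
    funext i; simp [c]
  rw [hc] at h
  refine ⟨P.det, ?_⟩
  have hdet : (P.map (algebraMap ℤ ℚ)).det = (P.det : ℚ) := by
    rw [← RingHom.mapMatrix_apply, ← RingHom.map_det]; simp
  rw [hdet] at h
  have : ((discr K * P.det^2 : ℤ) : ℚ) = ((-(4*d) : ℤ) : ℚ) := by
    rw [Int.cast_mul, Int.cast_pow, mul_comm, h]; push_cast; ring
  exact Int.cast_injective this

theorem rat_int_of_sq (d : ℕ) (hsq : Squarefree d) (w : ℚ) (n : ℤ) (h : (d:ℚ) * w^2 = n) :
    ∃ b : ℤ, w = b := by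
  have hden : (w.den : ℤ)^2 ∣ d := by
    have h1 : (d:ℚ) * (w.num:ℚ)^2 = n * (w.den:ℚ)^2 := by
      rw [← h]; nth_rw 2 [← Rat.num_div_den w]
      have : (w.den:ℚ) ≠ 0 := by exact_mod_cast w.den_nz
      field_simp
    have h2 : (d:ℤ) * w.num^2 = n * (w.den:ℤ)^2 := by exact_mod_cast h1
    have hc : IsCoprime ((w.den:ℤ)^2) (w.num^2) := by
      apply IsCoprime.pow
      rw [Int.isCoprime_iff_gcd_eq_one, Int.gcd_comm]
      exact w.reduced
    exact hc.dvd_of_dvd_mul_right ⟨n, by rw [h2]; ring⟩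
  have h3 : w.den * w.den ∣ d := by rw [← sq]; exact_mod_cast hden
  have h4 := Nat.isUnit_iff.mp (hsq _ h3)
  exact ⟨w.num, (Rat.coe_int_num_of_den_eq_one h4).symm⟩

include hd hθ hspan in
/-- integers of the quadratic field -/
theorem qf_int (hsq : Squarefree d) (x : 𝓞 K) : ∃ a b : ℤ, (x:K) = ((a/2 : ℚ) : K) + ((b/2:ℚ):K) * θ ∧
    (a^2 + d * b^2 = 4 * Algebra.norm ℤ x) := by
  obtain ⟨u, v, huv⟩ := hspan (x:K)
  have hn := qf_norm θ d hd hθ hspan u v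
  have ht := qf_trace θ d hd hθ hspan u v
  rw [← huv] at hn ht
  rw [← Algebra.coe_norm_int] at hn
  rw [← Algebra.coe_trace_int] at ht
  have h1 : (d:ℚ) * (2*v)^2 = ((4 * Algebra.norm ℤ x - (Algebra.trace ℤ (𝓞 K) x)^2 : ℤ):ℚ) := by
    push_cast; rw [hn, ht]; ring
  obtain ⟨b, hb⟩ := rat_int_of_sq d hsq _ _ h1
  refine ⟨Algebra.trace ℤ (𝓞 K) x, b, ?_, ?_⟩
  · rw [huv, ht, ← hb]
    congr 2
    · norm_cast; ring
    · norm_cast; ring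
  · have : (((Algebra.trace ℤ (𝓞 K) x)^2 + d * b^2 : ℤ):ℚ) = ((4 * Algebra.norm ℤ x:ℤ):ℚ) := by
      push_cast; rw [← hb, hn, ht]; ring
    exact_mod_cast this
end A1

section A2
open NumberField
variable {K : Type*} [Field K] [NumberField K] 

noncomputable def idCount (K : Type*) [Field K] [NumberField K] (n : ℕ) : ℕ :=
  Nat.card {I : Ideal (𝓞 K) // Ideal.absNorm I = n}

theorem finite_idCount (n : ℕ) : Finite {I : Ideal (𝓞 K) // Ideal.absNorm I = n} :=
  Ideal.finite_setOfPred_absNorm_eq n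

theorem coprime_of_norm {I J : Ideal (𝓞 K)} (h : (Ideal.absNorm I).Coprime (Ideal.absNorm J)) :
    IsCoprime I J := by
  rw [Ideal.isCoprime_iff_exists]
  obtain ⟨u, v, huv⟩ := Int.isCoprime_iff_gcd_eq_one.mpr (show Int.gcd (Ideal.absNorm I : ℤ) (Ideal.absNorm J : ℤ) = 1 from h)
  refine ⟨(u : 𝓞 K) * (Ideal.absNorm I : 𝓞 K), I.mul_mem_left _ (Ideal.absNorm_mem I),
    (v : 𝓞 K) * (Ideal.absNorm J : 𝓞 K), J.mul_mem_left _ (Ideal.absNorm_mem J), ?_⟩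
  exact_mod_cast congrArg (Int.cast : ℤ → 𝓞 K) huv

theorem idCount_mul {m n : ℕ} (h : m.Coprime n) : idCount K m * idCount K n ≤ idCount K (m * n) := by
  unfold idCount
  rw [← Nat.card_prod]
  haveI := finite_idCount (K := K) (m * n)
  refine Nat.card_le_card_of_injective
    (fun x : {I : Ideal (𝓞 K) // Ideal.absNorm I = m} × {I : Ideal (𝓞 K) // Ideal.absNorm I = n} =>
      (⟨x.1.1 * x.2.1, by rw [map_mul, x.1.2, x.2.2]⟩ : {I : Ideal (𝓞 K) // Ideal.absNorm I = m * n})) ?_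
  rintro ⟨⟨I, hI⟩, ⟨J, hJ⟩⟩ ⟨⟨I', hI'⟩, ⟨J', hJ'⟩⟩ hh
  simp only [Subtype.mk.injEq] at hh
  have key : ∀ {I J I' J' : Ideal (𝓞 K)}, IsCoprime I J' → I * J = I' * J' → I ∣ I' := by
    intro I J I' J' hc h
    exact hc.dvd_of_dvd_mul_right ⟨J, h.symm⟩
  have c1 : IsCoprime I J' := coprime_of_norm (by rw [hI, hJ']; exact h)
  have c2 : IsCoprime I' J := coprime_of_norm (by rw [hI', hJ]; exact h)
  have c3 : IsCoprime J I' := c2.symm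
  have c4 : IsCoprime J' I := c1.symm
  have e1 : I = I' := dvd_antisymm (key c1 hh) (key c2 hh.symm)
  have e2 : J = J' := dvd_antisymm (key c3 (by rw [mul_comm, hh, mul_comm])) (key c4 (by rw [mul_comm, ← hh, mul_comm]))
  subst e1; subst e2; rfl

theorem idCount_pos {n : ℕ} (I : Ideal (𝓞 K)) (h : Ideal.absNorm I = n) : 1 ≤ idCount K n := by
  haveI := finite_idCount (K := K) n
  haveI : Nonempty {I : Ideal (𝓞 K) // Ideal.absNorm I = n} := ⟨⟨I, h⟩⟩
  exact Nat.card_pos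

theorem idCount_split {p : ℕ} (hp : p.Prime) (P Q : Ideal (𝓞 K)) (hP : Ideal.absNorm P = p)
    (hQ : Ideal.absNorm Q = p) (hPQ : P ≠ Q) (k : ℕ) : k + 1 ≤ idCount K (p ^ k) := by
  have hne : ∀ {R : Ideal (𝓞 K)}, Ideal.absNorm R = p → R ≠ ⊥ := by
    rintro R h rfl; simp at h; exact hp.ne_zero h.symm
  have hprime : ∀ {R : Ideal (𝓞 K)}, Ideal.absNorm R = p → R.IsPrime := by
    intro R h
    exact Ideal.isPrime_of_irreducible_absNorm (by rw [h]; exact hp)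
  have hmax : ∀ {R : Ideal (𝓞 K)}, Ideal.absNorm R = p → R.IsMaximal := fun h => (hprime h).isMaximal (hne h)
  have hc : IsCoprime P Q := by
    rw [Ideal.isCoprime_iff_sup_eq]
    exact (hmax hP).coprime_of_ne (hmax hQ) hPQ
  haveI := finite_idCount (K := K) (p ^ k)
  have : Nat.card (Fin (k+1)) ≤ idCount K (p ^ k) := by
    refine Nat.card_le_card_of_injective
      (fun i : Fin (k+1) => (⟨P ^ (i:ℕ) * Q ^ (k - (i:ℕ)), by
        rw [map_mul, map_pow, map_pow, hP, hQ, ← pow_add]; congr 1; omega⟩ : {I : Ideal (𝓞 K) // Ideal.absNorm I = p ^ k})) ?_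
    intro i j hij
    simp only [Subtype.mk.injEq] at hij
    have key : ∀ {i j : ℕ}, P ^ i * Q ^ (k - i) = P ^ j * Q ^ (k-j) → i ≤ j := by
      intro i j h
      have h1 : P ^ i ∣ P ^ j := (hc.pow (m := i) (n := k - j)).dvd_of_dvd_mul_right ⟨_, h.symm⟩
      have h2 := Ideal.absNorm_dvd_absNorm_of_le (Ideal.le_of_dvd h1)
      rw [map_pow, map_pow, hP] at h2
      exact (Nat.pow_dvd_pow_iff_le_right hp.one_lt).mp h2
    exact Fin.ext (le_antisymm (key hij) (key hij.symm))
  simpa using this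

open scoped ComplexOrder in
theorem zetaMul_le {N : ℕ} (χ : DirichletCharacter ℂ N) (hχ : χ ^ 2 = 1)
    (h2 : ∀ p : ℕ, Ideal.absNorm (Ideal.span {(p : 𝓞 K)}) = p ^ 2)
    (hsplit : ∀ p : ℕ, p.Prime → χ p = 1 → ∃ P Q : Ideal (𝓞 K), Ideal.absNorm P = p ∧ Ideal.absNorm Q = p ∧ P ≠ Q)
    (hram : ∀ p : ℕ, p.Prime → χ p = 0 → ∃ P : Ideal (𝓞 K), Ideal.absNorm P = p) (n : ℕ) (hn : n ≠ 0) :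
    χ.zetaMul n ≤ (idCount K n : ℂ) := by
  induction n using Nat.recOnPosPrimePosCoprime with
  | zero => exact absurd rfl hn
  | one => 
    rw [χ.isMultiplicative_zetaMul.map_one]
    have := idCount_pos (K := K) (n := 1) ⊤ (by simp)
    exact_mod_cast this
  | prime_pow p k hp hk =>
    have e : χ.zetaMul (p ^ k) = ∑ i ∈ Finset.range (k+1), χ p ^ i := by
      rw [DirichletCharacter.zetaMul, ArithmeticFunction.coe_zeta_mul_apply, Nat.sum_divisors_prime_pow hp]
      refine Finset.sum_congr rfl fun i _ => ?_
      rw [← DirichletCharacter.apply_eq_toArithmeticFunction_apply χ (pow_ne_zero i hp.ne_zero), Nat.cast_pow, map_pow]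
    rw [e]
    rcases MulChar.isQuadratic_iff_sq_eq_one.mpr hχ p with h | h | h
    · obtain ⟨P, hP⟩ := hram p hp h
      have := idCount_pos (K := K) (P ^ k) (by rw [map_pow, hP])
      rw [h, Finset.sum_range_succ']
      simp
      exact_mod_cast this
    · obtain ⟨P, Q, hP, hQ, hPQ⟩ := hsplit p hp h
      have := idCount_split hp P Q hP hQ hPQ k
      simp only [h, one_pow, Finset.sum_const, Finset.card_range, nsmul_eq_mul, mul_one]
      exact_mod_cast this
    · simp only [h, neg_one_geom_sum]
      split_ifs with hk2
      · positivity
      · have hk3 : Even k := by rw [Nat.not_even_iff_odd] at hk2; rcases hk2 with ⟨r, hr⟩; exact ⟨r, by omega⟩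
        obtain ⟨r, rfl⟩ := hk3
        have := idCount_pos (K := K) (Ideal.span {(p : 𝓞 K)} ^ r) (n := p ^ (r + r)) (by rw [map_pow, h2, ← pow_mul]; congr 1; ring)
        exact_mod_cast this
  | coprime a b ha hb hab iha ihb =>
    rw [χ.isMultiplicative_zetaMul.map_mul_of_coprime hab]
    calc _ ≤ (idCount K a : ℂ) * (idCount K b : ℂ) := 
          mul_le_mul (iha (by omega)) (ihb (by omega)) (DirichletCharacter.zetaMul_nonneg hχ b) (by positivity)
      _ ≤ _ := by exact_mod_cast idCount_mul hab

variable (θ : K) (d : ℕ) (hd : 0 < d) (hθ : θ ^ 2 = -(d : K))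
    (hspan : ∀ x : K, ∃ u v : ℚ, x = u + v * θ)

include hd hθ hspan in
theorem absNorm_span_nat (n : ℕ) : Ideal.absNorm (Ideal.span {(n : 𝓞 K)}) = n ^ 2 := by
  rw [Ideal.absNorm_span_singleton]
  have h := qf_norm θ d hd hθ hspan n 0
  simp only [Rat.cast_natCast, Rat.cast_zero, zero_mul, add_zero, ne_eq, OfNat.ofNat_ne_zero, not_false_eq_true, zero_pow, mul_zero] at h
  have h2 := Algebra.coe_norm_int (K := K) (n : 𝓞 K)
  rw [show (((n : 𝓞 K) : K)) = (n : K) by simp, h] at h2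
  have h3 : Algebra.norm ℤ (n : 𝓞 K) = (n:ℤ)^2 := by exact_mod_cast h2
  rw [h3]; simp [Int.natAbs_pow]

include hd hθ hspan in
/-- coefficient of `θ` test for divisibility by `p` -/
theorem coeff_of_mem (hsq : Squarefree d) (p : ℕ) (x : 𝓞 K) (u v : ℤ) (hx : (x : K) = u + v * θ)
    (hmem : x ∈ Ideal.span {(p : 𝓞 K)}) : (p : ℤ) ∣ 2 * v := by
  rw [Ideal.mem_span_singleton] at hmem
  obtain ⟨y, rfl⟩ := hmem
  obtain ⟨a, b, hab, -⟩ := qf_int θ d hd hθ hspan hsq y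
  have h1 : ((p * (a/2) - u : ℚ) : K) + ((p * (b/2) - v : ℚ):K) * θ = 0 := by
    have : ((p : 𝓞 K) * y : 𝓞 K) = (p:K) * (y:K) := by simp
    rw [this, hab] at hx
    push_cast at hx ⊢
    linear_combination hx
  have h2 := (LinearIndependent.pair_iff.mp (qf_indep θ d hd hθ)) _ _ (by simpa only [Algebra.smul_def, mul_one, eq_ratCast] using h1)
  have h3 : (2 * v : ℚ) = p * b := by linarith [h2.2]
  exact ⟨b, by exact_mod_cast h3⟩

include hd hθ hspan in
theorem exists_primes (hsq : Squarefree d) (p : ℕ) (hp : p.Prime) (hp2 : p ≠ 2) (c : ℤ)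
    (hc : (p : ℤ) ∣ c ^ 2 + d) : ∃ P Q : Ideal (𝓞 K), Ideal.absNorm P = p ∧ Ideal.absNorm Q = p ∧
      (¬ p ∣ d → P ≠ Q) := by
  have hpo : Odd p := hp.odd_of_ne_two hp2
  have hθi : IsIntegral ℤ θ := by
    refine IsIntegral.of_pow (n := 2) (by norm_num) ?_
    rw [hθ]; exact (isIntegral_natCast d).neg
  let t : 𝓞 K := ⟨θ, hθi⟩
  have htK : (t : K) = θ := rfl
  have ht : t ^ 2 = -(d : 𝓞 K) := by
    apply RingOfIntegers.ext
    simp [htK, hθ]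
  have hpZ : Prime (p:ℤ) := Nat.prime_iff_prime_int.mp hp
  have h2p : ¬ (p:ℤ) ∣ 2 := by
    intro h
    have : p ∣ 2 := by exact_mod_cast h
    rw [Nat.prime_dvd_prime_iff_eq hp Nat.prime_two] at this
    exact hp2 this
  set I : Ideal (𝓞 K) := Ideal.span {(p : 𝓞 K)} with hI
  have hIn : Ideal.absNorm I = p ^ 2 := absNorm_span_nat θ d hd hθ hspan p
  have hItop : I ≠ ⊤ := by
    intro h; rw [h, Ideal.absNorm_top] at hIn; have := hp.two_le; nlinarith
  have hnot : ∀ e : ℤ, t + (e : 𝓞 K) ∉ I := by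
    intro e he
    have := coeff_of_mem θ d hd hθ hspan hsq p (t + (e : 𝓞 K)) e 1 (by simp [htK]; ring) he
    simp at this
    exact h2p this
  have hnp : ¬ I.IsPrime := by
    intro hpr
    have hmem : (t + ((c:ℤ) : 𝓞 K)) * (t + ((-c:ℤ) : 𝓞 K)) ∈ I := by
      have : (t + ((c:ℤ) : 𝓞 K)) * (t + ((-c:ℤ) : 𝓞 K)) = -((c^2+d : ℤ) : 𝓞 K) := by
        push_cast; linear_combination ht
      rw [this, neg_mem_iff]
      obtain ⟨w, hw⟩ := hc
      rw [hw]; push_cast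
      exact I.mul_mem_right _ (Ideal.mem_span_singleton_self _)
    rcases hpr.mem_or_mem hmem with h | h
    · exact hnot _ h
    · exact hnot _ h
  obtain ⟨P, hPmax, hPI⟩ := Ideal.exists_le_maximal I hItop
  obtain ⟨Q, hQ⟩ := Ideal.dvd_iff_le.mpr hPI
  have hmul : Ideal.absNorm P * Ideal.absNorm Q = p ^ 2 := by rw [← map_mul, ← hQ, hIn]
  have hPd : Ideal.absNorm P ∣ p ^ 2 := ⟨_, hmul.symm⟩
  obtain ⟨j, hj, hPj⟩ := (Nat.dvd_prime_pow hp).mp hPd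
  have hP : Ideal.absNorm P = p := by
    interval_cases j
    · simp [Ideal.absNorm_eq_one_iff] at hPj
      exact absurd hPj hPmax.ne_top
    · simpa using hPj
    · exfalso
      rw [hPj] at hmul
      have hQ1 : Ideal.absNorm Q = 1 := by
        have : 0 < p ^ 2 := pow_pos hp.pos 2
        exact Nat.eq_of_mul_eq_mul_left this (by rw [hmul, mul_one])
      rw [Ideal.absNorm_eq_one_iff] at hQ1
      rw [hQ1, Ideal.mul_top] at hQ
      rw [hQ] at hnp
      exact hnp hPmax.isPrime
  have hQn : Ideal.absNorm Q = p := by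
    rw [hP, sq] at hmul
    exact Nat.eq_of_mul_eq_mul_left hp.pos hmul
  refine ⟨P, Q, hP, hQn, ?_⟩
  rintro hpd rfl
  have hpc : ¬ (p:ℤ) ∣ c := by
    intro h
    apply hpd
    have : (p:ℤ) ∣ d := by
      have := dvd_sub hc (dvd_pow h (n := 2) (by norm_num))
      simpa using this
    exact_mod_cast this
  -- one of t ± c lies in P
  have hmem : (t + ((c:ℤ) : 𝓞 K)) * (t + ((-c:ℤ) : 𝓞 K)) ∈ I := by
    have : (t + ((c:ℤ) : 𝓞 K)) * (t + ((-c:ℤ) : 𝓞 K)) = -((c^2+d : ℤ) : 𝓞 K) := by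
      push_cast; linear_combination ht
    rw [this, neg_mem_iff]
    obtain ⟨w, hw⟩ := hc
    rw [hw]; push_cast
    exact I.mul_mem_right _ (Ideal.mem_span_singleton_self _)
  have fin : ∀ e : ℤ, ¬ (p:ℤ) ∣ e → t + (e : 𝓞 K) ∉ P := by
    intro e he hm
    have h1 : (t + (e : 𝓞 K)) * (t + (e : 𝓞 K)) ∈ I := by rw [hQ]; exact Ideal.mul_mem_mul hm hm
    have := coeff_of_mem θ d hd hθ hspan hsq p _ (e^2 - d) (2 * e) (by
      simp [htK]; linear_combination hθ) h1
    rcases hpZ.dvd_or_dvd this with h | h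
    · exact h2p h
    · rcases hpZ.dvd_or_dvd h with h | h
      · exact h2p h
      · exact he h
  rcases hPmax.isPrime.mem_or_mem (hPI hmem) with h | h
  · exact fin _ hpc h
  · exact fin _ (by rwa [dvd_neg]) h

end A2

section A3
open NumberField
variable {K : Type*} [Field K] [NumberField K] 

open Filter Topology in
theorem norm_LFunction_one_le {N : ℕ} [NeZero N] (χ : DirichletCharacter ℂ N) (hχ : χ ≠ 1) 
    (hle : ∀ n, n ≠ 0 → ‖χ.zetaMul n‖ ≤ (idCount K n : ℝ)) : 
    ‖χ.LFunction 1‖ ≤ dedekindZeta_residue K := by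
  have t1 : Tendsto (fun s : ℝ ↦ ‖(s - 1 : ℂ) * dedekindZeta K s‖) (𝓝[>] 1) (𝓝 (dedekindZeta_residue K)) := by
    have := (tendsto_sub_one_mul_dedekindZeta_nhdsGT K).norm
    simpa [abs_of_pos (dedekindZeta_residue_pos K)] using this
  have hcast : Tendsto (fun s : ℝ => (s : ℂ)) (𝓝[>] 1) (𝓝[≠] 1) := by
    refine tendsto_nhdsWithin_iff.mpr ⟨?_, ?_⟩
    · exact (Complex.continuous_ofReal.tendsto' 1 1 (by simp)).mono_left nhdsWithin_le_nhds
    · filter_upwards [self_mem_nhdsWithin] with s hs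
      simp only [Set.mem_compl_iff, Set.mem_singleton_iff]
      exact_mod_cast (ne_of_gt hs)
  have t2 : Tendsto (fun s : ℝ ↦ ‖((s - 1 : ℂ) * riemannZeta s) * χ.LFunction s‖) (𝓝[>] 1) (𝓝 ‖χ.LFunction 1‖) := by
    have h1 := riemannZeta_residue_one.comp hcast
    have h2 : Tendsto (fun s : ℝ => χ.LFunction s) (𝓝[>] 1) (𝓝 (χ.LFunction 1)) :=
      ((DirichletCharacter.differentiable_LFunction hχ).continuous.tendsto 1).comp 
        (hcast.mono_right nhdsWithin_le_nhds)
    simpa using (h1.mul h2).norm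
  have hne : ∀ᶠ s : ℝ in 𝓝[>] 1, ‖(s - 1 : ℂ) * dedekindZeta K s‖ ≠ 0 :=
    t1.eventually_ne (dedekindZeta_residue_ne_zero K)
  refine le_of_tendsto_of_tendsto t2 t1 ?_
  filter_upwards [hne, self_mem_nhdsWithin] with s hs hs1
  have hs1' : 1 < s := hs1
  have hre : 1 < (s : ℂ).re := by simpa using hs1'
  have hsum : LSeriesSummable (fun n ↦ (Nat.card {I : Ideal (𝓞 K) // Ideal.absNorm I = n} : ℂ)) s := by
    by_contra hns
    apply hs
    have : dedekindZeta K s = 0 := tsum_eq_zero_of_not_summable hns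
    rw [this]; simp
  have hsumr : Summable (fun n => ‖LSeries.term (fun n ↦ (Nat.card {I : Ideal (𝓞 K) // Ideal.absNorm I = n} : ℂ)) s n‖) := hsum.norm
  have e1 : riemannZeta s * χ.LFunction s = LSeries χ.zetaMul s := by
    rw [DirichletCharacter.zetaMul, ← ArithmeticFunction.coe_mul, LSeries_convolution']
    · rw [χ.LFunction_eq_LSeries hre]
      congr 1
      · simp_rw [← ArithmeticFunction.LSeries_zeta_eq_riemannZeta hre, ← ArithmeticFunction.natCoe_apply]
      · exact LSeries_congr (DirichletCharacter.apply_eq_toArithmeticFunction_apply χ) s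
    · exact ArithmeticFunction.LSeriesSummable_zeta_iff.mpr hre
    · exact (LSeriesSummable_congr _ fun h ↦ (DirichletCharacter.apply_eq_toArithmeticFunction_apply χ h).symm).mpr <|
        ZMod.LSeriesSummable_of_one_lt_re χ hre
  have hterm : ∀ n, ‖LSeries.term χ.zetaMul s n‖ ≤ ‖LSeries.term (fun n ↦ (Nat.card {I : Ideal (𝓞 K) // Ideal.absNorm I = n} : ℂ)) s n‖ := by
    intro n
    refine LSeries.norm_term_le s ?_ 
    by_cases hn : n = 0
    · subst hn; simp
    · simpa [idCount] using hle n hn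
  have hnn : dedekindZeta K s = ((∑' n, ‖LSeries.term (fun n ↦ (Nat.card {I : Ideal (𝓞 K) // Ideal.absNorm I = n} : ℂ)) s n‖ : ℝ) : ℂ) := by
    rw [dedekindZeta, LSeries, Complex.ofReal_tsum]
    refine tsum_congr fun n => ?_
    rw [LSeries.norm_term_eq]
    by_cases hn : n = 0
    · subst hn; simp
    · rw [LSeries.term_of_ne_zero hn, if_neg hn]
      push_cast [Complex.ofReal_cpow (Nat.cast_nonneg n)]
      simp
  rw [mul_assoc, e1, norm_mul, norm_mul]
  refine mul_le_mul_of_nonneg_left ?_ (norm_nonneg _)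
  calc ‖LSeries χ.zetaMul s‖ ≤ ∑' n, ‖LSeries.term χ.zetaMul s n‖ := norm_tsum_le_tsum_norm (Summable.of_nonneg_of_le (fun _ => norm_nonneg _) hterm hsumr)
    _ ≤ _ := Summable.tsum_le_tsum hterm (Summable.of_nonneg_of_le (fun _ => norm_nonneg _) hterm hsumr) hsumr
    _ ≤ _ := by
      rw [hnn, Complex.norm_real]; exact le_abs_self _

theorem abs_det_empty {n : Type*} [DecidableEq n] [Fintype n] [IsEmpty n] (M : Matrix n n ℝ) : |M.det| = 1 := by
  rw [Matrix.det_isEmpty, abs_one]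

variable (θ : K) (d : ℕ) (hd : 0 < d) (hθ : θ ^ 2 = -(d : K))
    (hspan : ∀ x : K, ∃ u v : ℚ, x = u + v * θ)

include hd hθ hspan in
theorem residue_le (hodd : Odd d) (hsq : Squarefree d) :
    dedekindZeta_residue K ≤ Real.pi * classNumber K / Real.sqrt d := by
  have hr := qf_finrank θ d hd hθ hspan
  haveI : IsTotallyComplex K := by
    refine ⟨fun v => ?_⟩
    by_contra hv
    rw [InfinitePlace.not_isComplex_iff_isReal] at hv
    have h1 := congrArg (InfinitePlace.embedding_of_isReal hv) hθ
    rw [map_pow, map_neg, map_natCast] at h1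
    have : (0:ℝ) < d := by exact_mod_cast hd
    nlinarith [sq_nonneg (InfinitePlace.embedding_of_isReal hv θ)]
  have h0 := IsTotallyComplex.nrRealPlaces_eq_zero K
  have h1 : InfinitePlace.nrComplexPlaces K = 1 := by
    have := IsTotallyComplex.finrank K
    omega
  have hrank : Units.rank K = 0 := by
    rw [Units.rank, InfinitePlace.card_eq_nrRealPlaces_add_nrComplexPlaces, h0, h1]
  haveI : IsEmpty (Fin (Units.rank K)) := by rw [hrank]; infer_instance
  have hreg : Units.regulator K = 1 := by
    rw [Units.regulator_eq_det']
    haveI : IsEmpty {w : InfinitePlace K // w ≠ Units.dirichletUnitTheorem.w₀} := (Units.equivFinRank K).symm.isEmpty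
    exact @abs_det_empty _ (_) (_) _ _
  have htor : 2 ≤ Units.torsionOrder K := by
    obtain ⟨r, hr⟩ := Units.even_torsionOrder K
    have := Units.torsionOrder_pos K
    omega
  have hdis : (d : ℝ) ≤ |(discr K : ℝ)| := by
    obtain ⟨k, hk⟩ := qf_discr θ d hd hθ hspan
    have hk2 : (discr K).natAbs * k.natAbs ^ 2 = 4 * d := by
      have := congrArg Int.natAbs hk
      rw [Int.natAbs_mul, Int.natAbs_pow, Int.natAbs_neg] at this
      rw [this]; norm_cast
    have hk3 : k.natAbs ∣ 2 := by
      have hk0 : k.natAbs ≠ 0 := by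
        rintro h; rw [h] at hk2; simp at hk2; omega
      have hk0' : (k.natAbs : ℚ) ≠ 0 := by exact_mod_cast hk0
      obtain ⟨b, hb⟩ := rat_int_of_sq d hsq (2 / k.natAbs) (discr K).natAbs (by
        have : ((discr K).natAbs : ℚ) * (k.natAbs : ℚ) ^ 2 = 4 * d := by exact_mod_cast hk2
        rw [div_pow, mul_div_assoc', div_eq_iff (by positivity)]
        rw [Int.cast_natCast, this]; ring)
      rw [div_eq_iff hk0'] at hb
      have hb' : (2:ℤ) = b * (k.natAbs : ℤ) := by
        apply Int.cast_injective (α := ℚ); rw [Int.cast_mul, Int.cast_natCast, ← hb]; norm_num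
      exact Int.natCast_dvd_natCast.mp ⟨b, by rw [mul_comm]; exact hb'⟩
    have : k.natAbs ≤ 2 := Nat.le_of_dvd (by norm_num) hk3
    have h5 : d ≤ (discr K).natAbs := by
      have h6 : k.natAbs^2 ≤ 2^2 := Nat.pow_le_pow_left this 2
      nlinarith
    rw [← Int.cast_abs, Int.abs_eq_natAbs]
    exact_mod_cast h5
  rw [dedekindZeta_residue_def, h0, h1, hreg]
  have hd' : (0:ℝ) < d := by exact_mod_cast hd
  have hs : Real.sqrt d ≤ Real.sqrt |(discr K : ℝ)| := Real.sqrt_le_sqrt hdis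
  have hs0 : 0 < Real.sqrt d := Real.sqrt_pos.mpr hd'
  have ht' : (2:ℝ) ≤ Units.torsionOrder K := by exact_mod_cast htor
  calc _ = (2 * (Real.pi * classNumber K)) / (Units.torsionOrder K * Real.sqrt |(discr K:ℝ)|) := by ring
    _ ≤ (2 * (Real.pi * classNumber K)) / (2 * Real.sqrt d) := by
      have := Real.pi_pos
      gcongr
    _ = _ := by rw [mul_div_mul_left _ _ (by norm_num)]

end A3

section A4
open Filter Topology HurwitzZeta

theorem rpow_diff_bound (x : ℝ) (hx0 : 0 < x) (hx1 : x < 1) (s : ℝ) (hs1 : 1 ≤ s) (hs2 : s ≤ 2) (n : ℕ) :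
    |((n + x) ^ s)⁻¹ - ((n + 1 - x) ^ s)⁻¹| ≤ (x⁻¹ ^ 2 + (1 - x)⁻¹ ^ 2 + 4) / (n + 1 : ℝ) ^ 2 := by
  have hx1' : 0 < 1 - x := by linarith
  rcases Nat.eq_zero_or_pos n with rfl | hn
  · have key : ∀ y : ℝ, 0 < y → y < 1 → 0 ≤ (y ^ s)⁻¹ ∧ (y ^ s)⁻¹ ≤ y⁻¹ ^ 2 := by
      intro y hy hy1
      refine ⟨by positivity, ?_⟩
      rw [inv_pow]
      apply inv_anti₀ (by positivity)
      have := Real.rpow_le_rpow_of_exponent_ge hy hy1.le hs2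
      rwa [Real.rpow_two] at this
    have h1 := key x hx0 hx1
    have h2 := key (1 - x) hx1' (by linarith)
    simp only [Nat.cast_zero, zero_add, one_pow, div_one]
    rw [abs_le]
    constructor <;> linarith [h1.1, h1.2, h2.1, h2.2, sq_nonneg (x⁻¹), sq_nonneg ((1-x)⁻¹)]
  · have hn' : (1:ℝ) ≤ n := by exact_mod_cast hn
    have hn0 : (0:ℝ) < n := by linarith
    have key : ∀ y : ℝ, n ≤ y → y ≤ n + 1 → (((n:ℝ)+1) ^ s)⁻¹ ≤ (y ^ s)⁻¹ ∧ (y ^ s)⁻¹ ≤ ((n:ℝ) ^ s)⁻¹ := by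
      intro y h1 h2
      have hy : 0 < y := by linarith
      constructor
      · apply inv_anti₀ (by positivity)
        exact Real.rpow_le_rpow hy.le h2 (by linarith)
      · apply inv_anti₀ (by positivity)
        exact Real.rpow_le_rpow hn0.le h1 (by linarith)
    have h1 := key (n + x) (by linarith) (by linarith)
    have h2 := key (n + 1 - x) (by linarith) (by linarith)
    have h3 : ((n:ℝ) ^ s)⁻¹ - (((n:ℝ)+1) ^ s)⁻¹ ≤ 4 / (n + 1 : ℝ) ^ 2 := by
      have e : (((n:ℝ)+1) ^ s)⁻¹ = ((n:ℝ) ^ s)⁻¹ * ((n:ℝ) / (n+1)) ^ s := by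
        rw [Real.div_rpow hn0.le (by linarith)]
        field_simp
      have e2 : ((n:ℝ) / (n+1)) ^ 2 ≤ ((n:ℝ) / (n+1)) ^ s := by
        have := Real.rpow_le_rpow_of_exponent_ge (x := (n:ℝ)/(n+1)) (by positivity) (by rw [div_le_one (by linarith)]; linarith) hs2
        rwa [Real.rpow_two] at this
      have e3 : ((n:ℝ) ^ s)⁻¹ ≤ (n:ℝ)⁻¹ := by
        apply inv_anti₀ hn0
        have := Real.rpow_le_rpow_of_exponent_le hn' hs1
        rwa [Real.rpow_one] at this
      have e4 : 0 ≤ 1 - ((n:ℝ) / (n+1)) ^ 2 := by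
        have : (n:ℝ)/(n+1) ≤ 1 := by rw [div_le_one (by linarith)]; linarith
        have h0 : 0 ≤ (n:ℝ)/(n+1) := by positivity
        nlinarith
      calc ((n:ℝ) ^ s)⁻¹ - (((n:ℝ)+1) ^ s)⁻¹ = ((n:ℝ) ^ s)⁻¹ * (1 - ((n:ℝ) / (n+1)) ^ s) := by rw [e]; ring
        _ ≤ ((n:ℝ) ^ s)⁻¹ * (1 - ((n:ℝ) / (n+1)) ^ 2) := by gcongr
        _ ≤ (n:ℝ)⁻¹ * (1 - ((n:ℝ) / (n+1)) ^ 2) := by gcongr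
        _ ≤ 4 / (n + 1 : ℝ) ^ 2 := by
          rw [show (n:ℝ)⁻¹ * (1 - ((n:ℝ) / (n+1)) ^ 2) = (2 * n + 1) / n / (n+1)^2 by field_simp; ring]
          gcongr
          rw [div_le_iff₀ hn0]; linarith
    have h4 : 4 / (n + 1 : ℝ) ^ 2 ≤ (x⁻¹ ^ 2 + (1 - x)⁻¹ ^ 2 + 4) / (n + 1 : ℝ) ^ 2 := by
      gcongr
      linarith [sq_nonneg (x⁻¹), sq_nonneg ((1-x)⁻¹)]
    rw [abs_le]
    constructor <;> linarith [h1.1, h1.2, h2.1, h2.2]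

theorem hurwitzZetaOdd_one (x : ℝ) (hx0 : 0 < x) (hx1 : x < 1) :
    hurwitzZetaOdd x 1 = Real.pi / 2 * Complex.cot (Real.pi * x) := by
  have hx1' : 0 < 1 - x := by linarith
  set g : ℝ → ℕ → ℝ := fun s n => (((n + x) ^ s)⁻¹ - ((n + 1 - x) ^ s)⁻¹) / 2 with hg
  have hbs : Summable (fun n : ℕ => (x⁻¹ ^ 2 + (1 - x)⁻¹ ^ 2 + 4) / (n + 1 : ℝ) ^ 2) := by
    have := ((summable_nat_add_iff 1).mpr (Real.summable_one_div_nat_pow.mpr (one_lt_two))).mul_left (x⁻¹ ^ 2 + (1 - x)⁻¹ ^ 2 + 4)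
    simpa [div_eq_mul_inv] using this
  have hbd : ∀ s : ℝ, 1 ≤ s → s ≤ 2 → ∀ n, ‖g s n‖ ≤ (x⁻¹ ^ 2 + (1 - x)⁻¹ ^ 2 + 4) / (n + 1 : ℝ) ^ 2 := by
    intro s h1 h2 n
    have := rpow_diff_bound x hx0 hx1 s h1 h2 n
    rw [hg, Real.norm_eq_abs, abs_div, abs_two]
    linarith [abs_nonneg (((n + x) ^ s)⁻¹ - ((n + 1 - x) ^ s)⁻¹)]
  have hlim : Tendsto (fun s : ℝ => ∑' n, g s n) (𝓝[>] 1) (𝓝 (∑' n, g 1 n)) := by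
    refine tendsto_tsum_of_dominated_convergence hbs ?_ ?_
    · intro n
      have hc : ContinuousAt (fun s : ℝ => g s n) 1 := by
        have p1 : (n + x : ℝ) ≠ 0 := by positivity
        have p2 : (n + 1 - x : ℝ) ≠ 0 := by
          have : (0:ℝ) ≤ n := by positivity
          linarith
        have q1 : ((n + x : ℝ) ^ (1:ℝ)) ≠ 0 := by simpa using p1
        have q2 : ((n + 1 - x : ℝ) ^ (1:ℝ)) ≠ 0 := by simpa using p2
        simp only [hg]
        refine (ContinuousAt.sub (ContinuousAt.inv₀ (Real.continuousAt_const_rpow p1) q1) (ContinuousAt.inv₀ (Real.continuousAt_const_rpow p2) q2)).div_const 2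
      exact hc.tendsto.mono_left nhdsWithin_le_nhds
    · filter_upwards [Ioo_mem_nhdsGT (show (1:ℝ) < 2 by norm_num)] with s hs n
      exact hbd s hs.1.le hs.2.le n
  have hval : ∀ s : ℝ, 1 < s → hurwitzZetaOdd x s = ((∑' n, g s n : ℝ) : ℂ) := by
    intro s hs
    have := (hasSum_nat_hurwitzZetaOdd_of_mem_Icc (a := x) ⟨hx0.le, hx1.le⟩ (s := s) (by simpa using hs)).tsum_eq
    rw [← this, Complex.ofReal_tsum]
    refine tsum_congr fun n => ?_
    have p1 : (0:ℝ) ≤ (n + x : ℝ) := by positivity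
    have p2 : (0:ℝ) ≤ (n + 1 - x : ℝ) := by
      have : (0:ℝ) ≤ n := by positivity
      linarith
    simp only [hg]
    push_cast [Complex.ofReal_cpow p1, Complex.ofReal_cpow p2]
    simp
  have hlim2 : Tendsto (fun s : ℝ => hurwitzZetaOdd x s) (𝓝[>] 1) (𝓝 (hurwitzZetaOdd x 1)) := by
    have hcast : Tendsto (fun s : ℝ => (s : ℂ)) (𝓝[>] 1) (𝓝 1) :=
      (Complex.continuous_ofReal.tendsto' 1 1 (by simp)).mono_left nhdsWithin_le_nhds
    exact ((differentiable_hurwitzZetaOdd x).continuous.tendsto 1).comp hcast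
  have hlim3 : Tendsto (fun s : ℝ => hurwitzZetaOdd x s) (𝓝[>] 1) (𝓝 ((∑' n, g 1 n : ℝ) : ℂ)) := by
    refine ((Complex.continuous_ofReal.tendsto _).comp hlim).congr' ?_
    filter_upwards [self_mem_nhdsWithin] with s hs
    exact (hval s hs).symm
  rw [tendsto_nhds_unique hlim2 hlim3]
  -- now cot series
  have hz : (x : ℂ) ∈ Complex.integerComplement := by
    rintro ⟨k, hk⟩
    have hk' : (k : ℝ) = x := by exact_mod_cast hk
    rw [← hk'] at hx0 hx1
    have a1 : 0 < k := by exact_mod_cast hx0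
    have a2 : k < 1 := by exact_mod_cast hx1
    omega
  have hS : Summable (g 1) := Summable.of_norm_bounded hbs (hbd 1 le_rfl one_le_two)
  have t1 : Tendsto (fun M => ((∑ n ∈ Finset.range M, g 1 n : ℝ) : ℂ)) atTop (𝓝 ((∑' n, g 1 n : ℝ) : ℂ)) :=
    (Complex.continuous_ofReal.tendsto _).comp hS.hasSum.tendsto_sum_nat
  have t2 := tendsto_logDeriv_euler_cot_sub hz
  have e : ∀ M : ℕ, ((∑ n ∈ Finset.range M, g 1 n : ℝ) : ℂ) = 
      (1 / (x:ℂ) + ∑ n ∈ Finset.range M, cotTerm x n - (((x + M)⁻¹ : ℝ) : ℂ)) / 2 := by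
    intro M
    induction M with
    | zero => simp
    | succ M ih =>
      rw [Finset.sum_range_succ, Finset.sum_range_succ, Complex.ofReal_add, ih]
      simp only [hg, cotTerm, Real.rpow_one]
      have p1 : (x:ℂ) + M ≠ 0 := by
        have : x + M ≠ 0 := by positivity
        exact_mod_cast this
      have p2 : (M:ℂ) + x ≠ 0 := by rwa [add_comm]
      have p3 : (M:ℂ) + 1 - x ≠ 0 := by
        have : (M:ℝ) + 1 - x ≠ 0 := by
          have : (0:ℝ) ≤ M := by positivity
          linarith
        exact_mod_cast this
      have p4 : (x:ℂ) - (M + 1) ≠ 0 := by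
        intro h; apply p3; linear_combination -h
      have p5 : (x:ℂ) + (M + 1) ≠ 0 := by
        have : x + (M + 1) ≠ 0 := by positivity
        exact_mod_cast this
      push_cast
      have h1 : ((M:ℂ) + 1 - x)⁻¹ = - (1 / ((x:ℂ) - (M+1))) := by
        rw [one_div, ← inv_neg]; congr 1; ring
      rw [h1, add_comm (M:ℂ) x]
      ring
  have t3 : Tendsto (fun M : ℕ => (((x + M)⁻¹ : ℝ) : ℂ)) atTop (𝓝 ((0:ℝ):ℂ)) := by
    refine (Complex.continuous_ofReal.tendsto _).comp ?_
    exact tendsto_inv_atTop_zero.comp (tendsto_atTop_add_const_left _ _ tendsto_natCast_atTop_atTop)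
  have t4 := ((((tendsto_const_nhds (x := 1 / (x:ℂ))).add t2).sub t3).div_const 2)
  rw [tendsto_nhds_unique (t1.congr e) t4]
  push_cast
  ring

end A4

section A5
open HurwitzZeta ZMod

theorem sum_k_mul_pow (N : ℕ) (w : ℂ) (hw1 : w ≠ 1) (hwN : w ^ N = 1) :
    ∑ k ∈ Finset.range N, (k : ℂ) * w ^ k = N / (w - 1) := by
  have h0 : w - 1 ≠ 0 := sub_ne_zero.mpr hw1
  rw [eq_div_iff h0]
  have : ∀ M : ℕ, (∑ k ∈ Finset.range M, (k : ℂ) * w ^ k) * (w - 1) = M * w ^ M - ∑ k ∈ Finset.range M, w ^ (k+1) := by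
    intro M
    induction M with
    | zero => simp
    | succ M ih =>
      rw [Finset.sum_range_succ, Finset.sum_range_succ, add_mul, ih]
      push_cast; ring
  rw [this, hwN, mul_one]
  simp_rw [pow_succ]
  rw [← Finset.sum_mul, geom_sum_eq hw1, hwN]
  simp

theorem cot_eq (N : ℕ) [NeZero N] (j : ZMod N) (hj : j ≠ 0) :
    Complex.cot (Real.pi * ((j.val / N : ℝ) : ℂ)) = Complex.I * (1 + 2 / N * ∑ k : ZMod N, (k.val : ℂ) * stdAddChar (k * j)) := by
  have hN : (N : ℂ) ≠ 0 := by exact_mod_cast NeZero.ne N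
  have hw : stdAddChar j = Complex.exp (2 * Real.pi * Complex.I * ((j.val / N : ℝ) : ℂ)) := by
    have := stdAddChar_coe (N := N) (j.val : ℤ)
    simp only [Int.cast_natCast, natCast_zmod_val] at this
    rw [this]; congr 1; push_cast; ring
  have hw1 : stdAddChar j ≠ 1 := by
    intro h
    rw [← (stdAddChar (N := N)).map_zero_eq_one, injective_stdAddChar.eq_iff] at h
    exact hj h
  have hwN : (stdAddChar j) ^ N = 1 := by
    rw [← AddChar.map_nsmul_eq_pow]; simp
  have hsum : ∑ k : ZMod N, (k.val : ℂ) * stdAddChar (k * j) = ∑ k ∈ Finset.range N, (k : ℂ) * (stdAddChar j) ^ k := by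
    refine Finset.sum_bij' (fun k _ => k.val) (fun k _ => (k : ZMod N)) ?_ ?_ ?_ ?_ ?_
    · intro k _; exact Finset.mem_range.mpr (ZMod.val_lt k)
    · intro k _; exact Finset.mem_univ _
    · intro k _; simp
    · intro k hk; exact ZMod.val_cast_of_lt (Finset.mem_range.mp hk)
    · intro k _
      rw [← AddChar.map_nsmul_eq_pow, nsmul_eq_mul, natCast_zmod_val]
  rw [hsum, sum_k_mul_pow N _ hw1 hwN, Complex.cot_pi_eq_exp_ratio, ← hw]
  have h0 : stdAddChar j - 1 ≠ 0 := sub_ne_zero.mpr hw1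
  have h1 : 1 - stdAddChar j ≠ 0 := by intro h; apply h0; linear_combination -h
  have hI := Complex.I_ne_zero
  have hI2 := Complex.I_sq
  field_simp
  ring_nf
  simp only [hI2]
  ring

theorem gaussSum_std_sq {N : ℕ} [NeZero N] (χ : DirichletCharacter ℂ N) (hprim : χ.IsPrimitive) (hχ : χ ^ 2 = 1)
    (hodd : χ.Odd) : gaussSum χ stdAddChar ^ 2 = -(N : ℂ) := by
  have hinv : χ⁻¹ = χ := by rw [inv_eq_iff_mul_eq_one, ← sq, hχ]
  set τ := gaussSum χ stdAddChar with hτ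
  have h1 : 𝓕 (χ : ZMod N → ℂ) = (-τ) • (χ : ZMod N → ℂ) := by
    ext k
    rw [hprim.fourierTransform_eq_inv_mul_gaussSum, hinv, hodd.eval_neg]
    simp [hτ]; ring
  have h2 := congrFun (dft_dft (χ : ZMod N → ℂ)) 1
  rw [h1, _root_.map_smul, h1] at h2
  simp only [Pi.smul_apply, smul_eq_mul, map_one] at h2
  rw [hodd] at h2
  linear_combination h2

theorem LFunction_one_eq {N : ℕ} [NeZero N] (hN1 : N ≠ 1) (χ : DirichletCharacter ℂ N) (hprim : χ.IsPrimitive) (hχ : χ ^ 2 = 1)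
    (hodd : χ.Odd) : χ.LFunction 1 = Real.pi * Complex.I / N ^ 2 * gaussSum χ stdAddChar * ∑ k : ZMod N, (k.val : ℂ) * χ k := by
  have hN : (N : ℂ) ≠ 0 := by exact_mod_cast NeZero.ne N
  have hinv : χ⁻¹ = χ := by rw [inv_eq_iff_mul_eq_one, ← sq, hχ]
  haveI : Fact (1 < N) := ⟨by have := NeZero.ne N; omega⟩
  rw [DirichletCharacter.LFunction, LFunction_def_odd hodd.to_fun]
  have e1 : ∀ j : ZMod N, χ j * hurwitzZetaOdd (toAddCircle j) 1 = 
      Real.pi / 2 * Complex.I * χ j + Real.pi * Complex.I / N * ∑ k : ZMod N, (k.val : ℂ) * (χ j * stdAddChar (k * j)) := by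
    intro j
    by_cases hj : j = 0
    · subst hj; rw [χ.map_nonunit (by simp)]; simp
    · rw [toAddCircle_apply, hurwitzZetaOdd_one, cot_eq N j hj]
      · simp_rw [mul_left_comm _ (χ j)]
        rw [← Finset.mul_sum]
        field_simp
      · have : 0 < j.val := Nat.pos_of_ne_zero (by rwa [Ne, ZMod.val_eq_zero])
        have := NeZero.pos N
        positivity
      · have := NeZero.pos N
        rw [div_lt_one (by exact_mod_cast this)]
        exact_mod_cast ZMod.val_lt j
  rw [Finset.sum_congr rfl (fun j _ => e1 j), Finset.sum_add_distrib, ← Finset.mul_sum, ← Finset.mul_sum, Finset.sum_comm]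
  have hne : χ ≠ 1 := by
    rintro rfl
    have : ((1 : DirichletCharacter ℂ N) (-1)) = -1 := hodd
    rw [MulChar.one_apply (by simp)] at this
    norm_num at this
  rw [χ.sum_eq_zero_of_ne_one hne]
  have e2 : ∀ k : ZMod N, ∑ j, (k.val : ℂ) * (χ j * stdAddChar (k * j)) = (k.val : ℂ) * χ k * gaussSum χ stdAddChar := by
    intro k
    rw [← Finset.mul_sum, mul_assoc]
    congr 1
    have := gaussSum_mulShift_of_isPrimitive stdAddChar hprim k
    rw [hinv] at this
    rw [← this]; rfl
  rw [Finset.sum_congr rfl (fun k _ => e2 k), ← Finset.sum_mul, Complex.cpow_neg_one]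
  field_simp
  ring

theorem norm_LFunction_one {N : ℕ} [NeZero N] (hN1 : N ≠ 1) (χ : DirichletCharacter ℂ N) (hprim : χ.IsPrimitive) (hχ : χ ^ 2 = 1)
    (hodd : χ.Odd) : ‖χ.LFunction 1‖ * (N * Real.sqrt N) = Real.pi * ‖∑ k : ZMod N, (k.val : ℂ) * χ k‖ := by
  have h1 : ‖gaussSum χ (stdAddChar (N := N))‖ = Real.sqrt N := by
    have := congrArg norm (gaussSum_std_sq χ hprim hχ hodd)
    rw [norm_pow, norm_neg, Complex.norm_natCast] at this
    rw [← this, Real.sqrt_sq (norm_nonneg _)]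
  rw [LFunction_one_eq hN1 χ hprim hχ hodd, norm_mul, norm_mul, h1, norm_div, norm_mul, norm_pow]
  have hN : (0:ℝ) < N := by exact_mod_cast NeZero.pos N
  have := Real.mul_self_sqrt hN.le
  simp only [Complex.norm_real, Complex.norm_I, Complex.norm_natCast, Real.norm_eq_abs, abs_of_pos Real.pi_pos]
  field_simp
  rw [Real.sq_sqrt hN.le]

end A5

section A6
open NumberField

/-- the Jacobi symbol as a Dirichlet character -/
noncomputable def jchar (d : ℕ) [NeZero d] : DirichletCharacter ℂ d where
  toFun a := (jacobiSym (a.val : ℤ) d : ℂ)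
  map_one' := by
    have : (((1 : ZMod d).val : ℕ) : ℤ) % d = 1 % d := by
      have h := (ZMod.intCast_eq_intCast_iff (((1 : ZMod d).val : ℕ) : ℤ) 1 d).mp (by simp)
      exact h
    rw [jacobiSym.mod_left' this, jacobiSym.one_left]; simp
  map_mul' a b := by
    have : (((a * b).val : ℕ) : ℤ) % d = ((a.val : ℤ) * b.val) % d := by
      have h := (ZMod.intCast_eq_intCast_iff (((a * b).val : ℕ) : ℤ) ((a.val : ℤ) * b.val) d).mp (by simp)
      exact h
    rw [jacobiSym.mod_left' this, jacobiSym.mul_left]; push_cast; rfl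
  map_nonunit' a ha := by
    have : jacobiSym (a.val : ℤ) d = 0 := by
      rw [jacobiSym.eq_zero_iff_not_coprime]
      intro h
      apply ha
      rw [← ZMod.natCast_zmod_val a, ZMod.isUnit_iff_coprime]
      exact h
    rw [this]; simp

theorem jchar_int (d : ℕ) [NeZero d] (a : ℤ) : jchar d (a : ZMod d) = (jacobiSym a d : ℂ) := by
  change (jacobiSym (((a : ZMod d).val : ℕ) : ℤ) d : ℂ) = _
  have : ((((a : ZMod d)).val : ℕ) : ℤ) % d = a % d := by
    have h := (ZMod.intCast_eq_intCast_iff ((((a : ZMod d)).val : ℕ) : ℤ) a d).mp (by simp)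
    exact h
  rw [jacobiSym.mod_left' this]

theorem jchar_nat (d : ℕ) [NeZero d] (a : ℕ) : jchar d (a : ZMod d) = (jacobiSym a d : ℂ) := by
  simpa using jchar_int d a

theorem jchar_val (d : ℕ) [NeZero d] (a : ZMod d) : jchar d a = (jacobiSym (a.val : ℤ) d : ℂ) := rfl

theorem jchar_sq (d : ℕ) [NeZero d] : jchar d ^ 2 = 1 := by
  ext a
  rw [MulChar.pow_apply' _ two_ne_zero, MulChar.one_apply a.isUnit, jchar_val]
  have : Int.gcd ((a : ZMod d).val : ℤ) d = 1 := by
    have := (ZMod.isUnit_iff_coprime (a : ZMod d).val d).mp (by simp)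
    exact this
  exact_mod_cast jacobiSym.sq_one this

theorem jchar_odd (d : ℕ) [NeZero d] (hd : d % 4 = 3) : (jchar d).Odd := by
  have h := jchar_int d (-1)
  rw [jacobiSym.at_neg_one (Nat.odd_iff.mpr (by omega)), ZMod.χ₄_nat_three_mod_four hd] at h
  rw [DirichletCharacter.Odd]
  simpa using h

theorem exists_nonres (l : ℕ) (hl : l.Prime) (hl2 : l ≠ 2) : ∃ a : ℤ, jacobiSym a l = -1 := by
  haveI := Fact.mk hl
  obtain ⟨a, ha⟩ := FiniteField.exists_nonsquare (F := ZMod l) (by rwa [ZMod.ringChar_zmod_n])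
  refine ⟨a.val, ?_⟩
  rw [ZMod.nonsquare_iff_jacobiSym_eq_neg_one]
  simpa using ha

theorem exists_nonres' (l : ℕ) (hl : l.Prime) (hl2 : l ≠ 2) (M : ℕ) (hM : l.Coprime M) :
    ∃ a : ℤ, jacobiSym a l = -1 ∧ (a : ZMod M) = 1 := by
  obtain ⟨b, hb⟩ := exists_nonres l hl hl2
  obtain ⟨u, v, huv⟩ := Int.isCoprime_iff_gcd_eq_one.mpr (show Int.gcd (l : ℤ) (M : ℤ) = 1 from hM)
  refine ⟨b * (v * M) + u * l, ?_, ?_⟩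
  · rw [← hb]
    apply jacobiSym.mod_left'
    have : b * (v * M) + u * l = b + l * (u - b * u) := by linear_combination b * huv
    rw [this]; simp
  · have := congrArg (Int.cast : ℤ → ZMod M) huv
    push_cast at this ⊢
    simpa using this

theorem jchar_prim_aux (l l' d : ℕ) [NeZero d] (hl : l.Prime) (hl' : l'.Prime) (hl2 : l ≠ 2) (hne : l ≠ l') (hd : d = l * l') :
    ¬ (jchar d).FactorsThrough l' := by
  rintro ⟨h, χ₀, hχ⟩
  have hc : l.Coprime l' := (Nat.coprime_primes hl hl').mpr hne
  obtain ⟨a, ha, ha'⟩ := exists_nonres' l hl hl2 l' hc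
  have hj : jacobiSym a l' = 1 := by
    rw [← jacobiSym.one_left l']
    apply jacobiSym.mod_left'
    have := (ZMod.intCast_eq_intCast_iff a 1 l').mp (by simpa using ha')
    exact this
  have hJ : jacobiSym a d = -1 := by
    rw [hd, jacobiSym.mul_right' a hl.ne_zero hl'.ne_zero, ha, hj]; norm_num
  have hco : IsCoprime a (d : ℤ) := by
    rw [Int.isCoprime_iff_gcd_eq_one]
    by_contra hh
    rw [jacobiSym.eq_zero_iff_not_coprime.mpr hh] at hJ
    norm_num at hJ
  have h1 := jchar_int d a
  rw [hχ, DirichletCharacter.changeLevel_eq_cast_of_dvd' χ₀ h hco, ha', map_one, hJ] at h1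
  norm_num at h1

theorem jchar_prim (l1 l2 d : ℕ) [NeZero d] (h1 : l1.Prime) (h2 : l2.Prime) (h12 : l1 ≠ 2) (h22 : l2 ≠ 2) (hne : l1 ≠ l2)
    (hd : d = l1 * l2) : (jchar d).IsPrimitive := by
  rw [DirichletCharacter.isPrimitive_def]
  have hc := DirichletCharacter.conductor_dvd_level (jchar d)
  have hf := DirichletCharacter.factorsThrough_conductor (jchar d)
  have hd1 : l1 ∣ d := ⟨_, hd⟩
  have hd2 : l2 ∣ d := ⟨l1, by rw [hd, mul_comm]⟩
  have hc' := hc.trans (dvd_of_eq hd)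
  obtain ⟨a, b, ha, hb, hab⟩ := (Nat.dvd_mul).mp hc'
  rcases (Nat.dvd_prime h1).mp ha with rfl | rfl
  · exfalso
    refine jchar_prim_aux l1 l2 d h1 h2 h12 hne hd (hf.mono _ ?_ hd2)
    rw [← hab, one_mul]; exact hb
  · rcases (Nat.dvd_prime h2).mp hb with rfl | rfl
    · exfalso
      refine jchar_prim_aux l2 a d h2 h1 h22 hne.symm (by rw [hd, mul_comm]) (hf.mono _ ?_ hd1)
      rw [← hab, mul_one]
    · rw [← hab, hd]

variable {K : Type*} [Field K] [NumberField K] 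
variable (θ : K) (d : ℕ) (hd : 0 < d) (hθ : θ ^ 2 = -(d : K))
    (hspan : ∀ x : K, ∃ u v : ℚ, x = u + v * θ)

theorem neg_square_of_jacobi (d r : ℕ) (hd8 : d % 8 = 3) (hr : r.Prime) (hJ : jacobiSym r d = 1) :
    r ≠ 2 ∧ ∃ c : ℤ, (r : ℤ) ∣ c ^ 2 + d := by
  have hdo : Odd d := Nat.odd_iff.mpr (by omega)
  have hr2 : r ≠ 2 := by
    rintro rfl
    have h := jacobiSym.at_two hdo
    have h8 : ZMod.χ₈ (d : ZMod 8) = -1 := by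
      rw [ZMod.χ₈_nat_eq_if_mod_eight, if_neg (by omega), if_neg (by omega)]
    rw [h8] at h
    rw [Nat.cast_ofNat, h] at hJ
    norm_num at hJ
  refine ⟨hr2, ?_⟩
  haveI := Fact.mk hr
  have hro : Odd r := hr.odd_of_ne_two hr2
  have h1 : jacobiSym (-(d:ℤ)) r = 1 := by
    rw [jacobiSym.neg _ hro]
    rcases Nat.odd_mod_four_iff.mp (Nat.odd_iff.mp hro) with h | h
    · rw [ZMod.χ₄_nat_one_mod_four h, one_mul, ← hJ]
      exact (jacobiSym.quadratic_reciprocity_one_mod_four' hdo h)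
    · rw [ZMod.χ₄_nat_three_mod_four h, jacobiSym.quadratic_reciprocity_three_mod_four (by omega) h, hJ]
      norm_num
  obtain ⟨c, hc⟩ := ZMod.isSquare_of_jacobiSym_eq_one h1
  refine ⟨c.val, ?_⟩
  rw [← ZMod.intCast_zmod_eq_zero_iff_dvd _ r]
  push_cast at hc ⊢
  rw [ZMod.natCast_zmod_val, sq, ← hc]; ring

open scoped ComplexOrder in
include hd hθ hspan in
theorem class_ineq (l1 l2 : ℕ) (h1 : l1.Prime) (h2 : l2.Prime) (hne : l1 ≠ l2)
    (hdl : d = l1 * l2) (hd8 : d % 8 = 3) :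
    |∑ k ∈ Finset.range d, (k : ℤ) * jacobiSym k d| ≤ d * classNumber K := by
  haveI : NeZero d := ⟨hd.ne'⟩
  have hdo : Odd d := Nat.odd_iff.mpr (by omega)
  have h12 : l1 ≠ 2 := by rintro rfl; omega
  have h22 : l2 ≠ 2 := by rintro rfl; omega
  have hsq : Squarefree d := by
    rw [hdl, Nat.squarefree_mul ((Nat.coprime_primes h1 h2).mpr hne)]
    exact ⟨h1.prime.squarefree, h2.prime.squarefree⟩
  have hprim := jchar_prim l1 l2 d h1 h2 h12 h22 hne hdl
  have hodd := jchar_odd d (by omega)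
  have hd1 : d ≠ 1 := by omega
  have hne1 : jchar d ≠ 1 := by
    intro h
    have : (jchar d) (-1) = -1 := hodd
    rw [h, MulChar.one_apply (by simp)] at this
    norm_num at this
  have hle := zetaMul_le (K := K) (jchar d) (jchar_sq d) (absNorm_span_nat θ d hd hθ hspan) (by
    intro r hr h
    rw [jchar_nat] at h
    have hJ : jacobiSym r d = 1 := by exact_mod_cast h
    obtain ⟨hr2, c, hc⟩ := neg_square_of_jacobi d r hd8 hr hJ
    obtain ⟨P, Q, hP, hQ, hPQ⟩ := exists_primes θ d hd hθ hspan hsq r hr hr2 c hc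
    refine ⟨P, Q, hP, hQ, hPQ ?_⟩
    intro hdv
    have : jacobiSym r d = 0 := by
      rw [jacobiSym.eq_zero_iff_not_coprime]
      intro h
      have h' : Nat.gcd r d = 1 := h
      rw [Nat.gcd_eq_left hdv] at h'
      exact hr.one_lt.ne' h'
    rw [this] at hJ; norm_num at hJ) (by
    intro r hr h
    rw [jchar_nat] at h
    have hJ : jacobiSym r d = 0 := by exact_mod_cast h
    rw [jacobiSym.eq_zero_iff_not_coprime] at hJ
    have hdv : r ∣ d := by
      by_contra hh
      exact hJ ((Nat.Prime.coprime_iff_not_dvd hr).mpr hh)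
    have hr2 : r ≠ 2 := by
      rintro rfl; exact (Nat.not_even_iff_odd.mpr hdo) (even_iff_two_dvd.mpr hdv)
    obtain ⟨P, Q, hP, hQ, hPQ⟩ := exists_primes θ d hd hθ hspan hsq r hr hr2 0 (by simpa using Int.natCast_dvd_natCast.mpr hdv)
    exact ⟨P, hP⟩)
  have hL := norm_LFunction_one_le (K := K) (jchar d) hne1 (by
    intro n hn
    have h := hle n hn
    have h0 := DirichletCharacter.zetaMul_nonneg (jchar_sq d) n
    have := CStarAlgebra.norm_le_norm_of_nonneg_of_le h0 h
    simpa using this)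
  have hres := residue_le θ d hd hθ hspan hdo hsq
  have hn := norm_LFunction_one hd1 (jchar d) hprim (jchar_sq d) hodd
  have hd0 : (0:ℝ) < d := by exact_mod_cast hd
  have hs0 : 0 < Real.sqrt d := Real.sqrt_pos.mpr hd0
  have hfin : Real.pi * ‖∑ k : ZMod d, (k.val : ℂ) * jchar d k‖ ≤ Real.pi * (d * classNumber K) := by
    rw [← hn]
    calc _ ≤ (Real.pi * classNumber K / Real.sqrt d) * (d * Real.sqrt d) := by
          gcongr; exact hL.trans hres
      _ = _ := by field_simp
  have hfin2 := le_of_mul_le_mul_left hfin Real.pi_pos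
  have hsum : ∑ k : ZMod d, (k.val : ℂ) * jchar d k = ((∑ k ∈ Finset.range d, (k : ℤ) * jacobiSym k d : ℤ) : ℂ) := by
    push_cast
    refine Finset.sum_bij' (fun k _ => k.val) (fun k _ => (k : ZMod d)) ?_ ?_ ?_ ?_ ?_
    · intro k _; exact Finset.mem_range.mpr (ZMod.val_lt k)
    · intro k _; exact Finset.mem_univ _
    · intro k _; simp
    · intro k hk; exact ZMod.val_cast_of_lt (Finset.mem_range.mp hk)
    · intro k _; rw [jchar_val]
  rw [hsum, Complex.norm_intCast] at hfin2
  exact_mod_cast hfin2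

end A6

section A7
open NumberField
variable {K : Type*} [Field K] [NumberField K] 
variable (θ : K) (d : ℕ) (hd : 0 < d) (hθ : θ ^ 2 = -(d : K))
    (hspan : ∀ x : K, ∃ u v : ℚ, x = u + v * θ)

include hd hθ hspan in
theorem class_even (hsq : Squarefree d) (hd8 : d % 8 = 3) (l1 p : ℕ) (hl1d : l1 ∣ d) (hl1 : l1.Prime) (hl2 : l1 ≠ 2) (hp : p.Prime)
    (hJ : jacobiSym p d = 1) (hJ1 : jacobiSym p l1 = -1) : Even (classNumber K) := by
  obtain ⟨hp2, c, hc⟩ := neg_square_of_jacobi d p hd8 hp hJ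
  obtain ⟨P, Q, hP, -, -⟩ := exists_primes θ d hd hθ hspan hsq p hp hp2 c hc
  have hP0 : P ≠ ⊥ := by
    rintro rfl; simp at hP; exact hp.ne_zero hP.symm
  have hpr : (P ^ classNumber K).IsPrincipal := by
    have h1 : (ClassGroup.mk0 ⟨P, mem_nonZeroDivisors_iff_ne_zero.mpr hP0⟩) ^ (classNumber K) = 1 := by
      rw [classNumber]; exact pow_card_eq_one
    rw [← map_pow, ClassGroup.mk0_eq_one_iff] at h1
    exact h1
  obtain ⟨α, hα⟩ := hpr
  have hn : (Algebra.norm ℤ α).natAbs = p ^ classNumber K := by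
    rw [← Ideal.absNorm_span_singleton, ← Ideal.submodule_span_eq, ← hα, map_pow, hP]
  obtain ⟨a, b, -, hab⟩ := qf_int θ d hd hθ hspan hsq α
  have hn2 : Algebra.norm ℤ α = (p:ℤ) ^ classNumber K := by
    have h0 : 0 ≤ Algebra.norm ℤ α := by
      have : 0 ≤ a^2 + (d:ℤ) * b^2 := by positivity
      omega
    rw [← Int.natAbs_of_nonneg h0, hn]; push_cast; rfl
  rw [hn2] at hab
  by_contra hodd
  rw [Nat.not_even_iff_odd] at hodd
  haveI := Fact.mk hl1
  have hJ4 : jacobiSym (4 * (p:ℤ) ^ classNumber K) l1 = -1 := by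
    rw [jacobiSym.mul_left, jacobiSym.pow_left, hJ1, hodd.neg_one_pow, jacobiSym.at_four (hl1.odd_of_ne_two hl2)]
    norm_num
  apply ZMod.nonsquare_of_jacobiSym_eq_neg_one hJ4
  refine ⟨(a : ZMod l1), ?_⟩
  have hd0 : (d : ZMod l1) = 0 := (ZMod.natCast_eq_zero_iff d l1).mpr hl1d
  have := congrArg (Int.cast : ℤ → ZMod l1) hab
  push_cast at this ⊢
  rw [hd0] at this
  rw [← this]; ring

/-- generator of the quadratic field -/
noncomputable def qgen (d : ℕ) : ℚ⟮sqrtNeg d⟯ := AdjoinSimple.gen ℚ (sqrtNeg d)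

theorem qgen_sq (d : ℕ) : qgen d ^ 2 = -(d : ℚ⟮sqrtNeg d⟯) := by
  apply Subtype.ext
  have : ((qgen d : ℚ⟮sqrtNeg d⟯) : ℂ) = sqrtNeg d := AdjoinSimple.coe_gen ℚ (sqrtNeg d)
  push_cast
  rw [this, sqrtNeg_sq]

theorem qgen_span (d : ℕ) (x : ℚ⟮sqrtNeg d⟯) : ∃ u v : ℚ, x = u + v * qgen d := by
  have hx : (x : ℂ) ∈ ℚ⟮sqrtNeg d⟯ := x.2
  have hg : ((qgen d : ℚ⟮sqrtNeg d⟯) : ℂ) = sqrtNeg d := AdjoinSimple.coe_gen ℚ (sqrtNeg d)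
  have halg : IsAlgebraic ℚ (sqrtNeg d) := (isIntegral_sqrtNeg d).isAlgebraic
  rw [← IntermediateField.mem_toSubalgebra, IntermediateField.adjoin_simple_toSubalgebra_of_isAlgebraic halg] at hx
  have key : ∀ y ∈ Algebra.adjoin ℚ {sqrtNeg d}, ∃ u v : ℚ, y = u + v * sqrtNeg d := by
    intro y hy
    induction hy using Algebra.adjoin_induction with
    | mem y hy => 
      rw [Set.mem_singleton_iff] at hy
      exact ⟨0, 1, by rw [hy]; simp⟩
    | algebraMap r => exact ⟨r, 0, by simp⟩
    | add y z _ _ hy hz =>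
      obtain ⟨u, v, rfl⟩ := hy
      obtain ⟨u', v', rfl⟩ := hz
      exact ⟨u + u', v + v', by push_cast; ring⟩
    | mul y z _ _ hy hz =>
      obtain ⟨u, v, rfl⟩ := hy
      obtain ⟨u', v', rfl⟩ := hz
      refine ⟨u * u' - d * (v * v'), u * v' + v * u', ?_⟩
      push_cast
      linear_combination (v * v' : ℂ) * sqrtNeg_sq d
  obtain ⟨u, v, huv⟩ := key _ hx
  refine ⟨u, v, Subtype.ext ?_⟩
  push_cast
  rw [hg, huv]

theorem class_ineq' (l1 l2 : ℕ) (h1 : l1.Prime) (h2 : l2.Prime) (hne : l1 ≠ l2)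
    (hd8 : l1 * l2 % 8 = 3) :
    |∑ k ∈ Finset.range (l1 * l2), (k : ℤ) * jacobiSym k (l1 * l2)| ≤ (l1 * l2 : ℕ) * classNumSqrtNeg (l1 * l2) := by
  unfold classNumSqrtNeg
  have : FiniteDimensional ℚ ℚ⟮sqrtNeg (l1 * l2)⟯ :=
    IntermediateField.adjoin.finiteDimensional (isIntegral_sqrtNeg (l1 * l2))
  have : CharZero ℚ⟮sqrtNeg (l1 * l2)⟯ :=
    charZero_of_injective_algebraMap (algebraMap ℚ ℚ⟮sqrtNeg (l1 * l2)⟯).injective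
  have : NumberField ℚ⟮sqrtNeg (l1 * l2)⟯ := ⟨⟩
  exact class_ineq (K := ℚ⟮sqrtNeg (l1 * l2)⟯) (qgen _) (l1 * l2) (Nat.mul_pos h1.pos h2.pos) (qgen_sq _) (qgen_span _) l1 l2 h1 h2 hne rfl hd8

theorem class_even' (l1 l2 p : ℕ) (h1 : l1.Prime) (h2 : l2.Prime) (hne : l1 ≠ l2)
    (hd8 : l1 * l2 % 8 = 3) (hp : p.Prime)
    (hJ : jacobiSym p (l1 * l2) = 1) (hJ1 : jacobiSym p l1 = -1) : Even (classNumSqrtNeg (l1 * l2)) := by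
  unfold classNumSqrtNeg
  have : FiniteDimensional ℚ ℚ⟮sqrtNeg (l1 * l2)⟯ :=
    IntermediateField.adjoin.finiteDimensional (isIntegral_sqrtNeg (l1 * l2))
  have : CharZero ℚ⟮sqrtNeg (l1 * l2)⟯ :=
    charZero_of_injective_algebraMap (algebraMap ℚ ℚ⟮sqrtNeg (l1 * l2)⟯).injective
  have : NumberField ℚ⟮sqrtNeg (l1 * l2)⟯ := ⟨⟩
  have hsq : Squarefree (l1 * l2) := by
    rw [Nat.squarefree_mul ((Nat.coprime_primes h1 h2).mpr hne)]
    exact ⟨h1.prime.squarefree, h2.prime.squarefree⟩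
  exact class_even (K := ℚ⟮sqrtNeg (l1 * l2)⟯) (qgen _) (l1 * l2) (Nat.mul_pos h1.pos h2.pos) (qgen_sq _) (qgen_span _) hsq hd8 l1 p ⟨_, rfl⟩ h1 (by rintro rfl; omega) hp hJ hJ1

end A7

theorem zetaP_prim (p : ℕ) (hp : p ≠ 0) : IsPrimitiveRoot (zetaP p) p :=
  Complex.isPrimitiveRoot_exp p hp

theorem zetaP_pow (p : ℕ) [Fact p.Prime] : zetaP p ^ p = 1 :=
  (zetaP_prim p (Fact.out (p := p.Prime)).ne_zero).pow_eq_one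

/-- the standard additive character -/
noncomputable def eChar (p : ℕ) [Fact p.Prime] (F : Type) [Field F] [Algebra (ZMod p) F] :
    AddChar F ℂ :=
  (AddChar.zmodChar p (zetaP_pow p)).compAddMonoidHom
    (Algebra.trace (ZMod p) F).toAddMonoidHom

section
variable (p : ℕ) [Fact p.Prime] (F : Type) [Field F] [Fintype F] [Algebra (ZMod p) F]

theorem eChar_apply (x : F) :
    eChar p F x = zetaP p ^ (Algebra.trace (ZMod p) F x).val := rfl

theorem exists_trace_ne_zero : ∃ a : F, Algebra.trace (ZMod p) F a ≠ 0 := by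
  by_contra! h
  have := (traceForm_nondegenerate (ZMod p) F).1 1 (by
    intro n; simp [Algebra.traceForm_apply, h])
  exact one_ne_zero this

theorem eChar_ne_one : eChar p F ≠ 1 := by
  obtain ⟨a, ha⟩ := exists_trace_ne_zero p F
  refine AddChar.ne_one_iff.2 ⟨a, fun h => ha ?_⟩
  rw [eChar_apply] at h
  have := (zetaP_prim p (Fact.out (p := p.Prime)).ne_zero).dvd_of_pow_eq_one _ h
  exact (ZMod.val_eq_zero _).1 (Nat.eq_zero_of_dvd_of_lt this (ZMod.val_lt _))

theorem eChar_prim : (eChar p F).IsPrimitive := AddChar.IsPrimitive.of_ne_one (eChar_ne_one p F)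

theorem gaussSumN_eq (χ : MulChar F ℂ) : gaussSumN p χ 1 = gaussSum χ (eChar p F) := by
  classical
  rw [gaussSumN, gaussSum, Finset.sum_filter]
  refine Finset.sum_congr rfl fun x _ => ?_
  by_cases hx : x = 0
  · simp [hx, MulChar.map_zero]
  · simp [hx, eChar_apply]

theorem trace_pow_p (x : F) :
    Algebra.trace (ZMod p) F (x ^ p) = Algebra.trace (ZMod p) F x := by
  have : CharP F p := charP_of_injective_algebraMap (algebraMap (ZMod p) F).injective p
  have := Algebra.trace_eq_of_algEquiv (FiniteField.frobeniusAlgEquivOfAlgebraic (ZMod p) F) x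
  simpa [FiniteField.coe_frobeniusAlgEquivOfAlgebraic, ZMod.card] using this

theorem gaussSum_pow_p (χ : MulChar F ℂ) :
    gaussSum (χ ^ p) (eChar p F) = gaussSum χ (eChar p F) := by
  have : CharP F p := charP_of_injective_algebraMap (algebraMap (ZMod p) F).injective p
  unfold gaussSum
  refine Finset.sum_bijective (fun x => x ^ p) (frobeniusEquiv F p).bijective (by simp) ?_
  intro x _
  rw [eChar_apply, eChar_apply, trace_pow_p, MulChar.pow_apply' χ (Fact.out (p := p.Prime)).ne_zero,
    map_pow]

theorem isIntegral_rootOfUnity {z : ℂ} {n : ℕ} (hn : 0 < n) (h : z ^ n = 1) : IsIntegral ℤ z :=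
  IsIntegral.of_pow hn (by rw [h]; exact isIntegral_one)

theorem isIntegral_zetaP : IsIntegral ℤ (zetaP p) :=
  isIntegral_rootOfUnity (Fact.out (p := p.Prime)).pos (zetaP_pow p)

theorem isIntegral_eChar (x : F) : IsIntegral ℤ (eChar p F x) := by
  rw [eChar_apply]; exact (isIntegral_zetaP p).pow _

omit [Fact p.Prime] in
theorem isIntegral_mulChar (χ : MulChar F ℂ) (x : F) : IsIntegral ℤ (χ x) := by
  classical
  by_cases hx : x = 0
  · rw [hx, MulChar.map_zero]; exact isIntegral_zero
  · refine isIntegral_rootOfUnity (n := Fintype.card F - 1) ?_ ?_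
    · have := Fintype.one_lt_card (α := F); omega
    · rw [← map_pow, FiniteField.pow_card_sub_one_eq_one x hx, map_one]

theorem isIntegral_gaussSum (χ : MulChar F ℂ) : IsIntegral ℤ (gaussSum χ (eChar p F)) :=
  IsIntegral.sum _ fun x _ => (isIntegral_mulChar F χ x).mul (isIntegral_eChar p F x)

omit [Fact p.Prime] in
theorem isIntegral_jacobiSum (χ ψ : MulChar F ℂ) : IsIntegral ℤ (jacobiSum χ ψ) :=
  IsIntegral.sum _ fun x _ => (isIntegral_mulChar F χ _).mul (isIntegral_mulChar F ψ _)

/-- sum of `x^{-1} T(x)` -/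
theorem sum_inv_mul_trace :
    ∑ x : F, x⁻¹ * algebraMap (ZMod p) F (Algebra.trace (ZMod p) F x) = -1 := by
  classical
  have hp : p.Prime := Fact.out
  have hq : Fintype.card F = p ^ Module.finrank (ZMod p) F := by
    rw [Module.card_eq_pow_finrank (K := ZMod p), ZMod.card]
  have hf : 0 < Module.finrank (ZMod p) F := Module.finrank_pos
  simp_rw [FiniteField.algebraMap_trace_eq_sum_pow, Finset.mul_sum, Nat.card_zmod]
  rw [Finset.sum_comm]
  have key : ∀ i ∈ Finset.range (Module.finrank (ZMod p) F),
      ∑ x : F, x⁻¹ * x ^ p ^ i = if i = 0 then -1 else 0 := by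
    intro i hi
    have h1 : ∀ x : F, x⁻¹ * x ^ p ^ i = if x = 0 then 0 else x ^ (p ^ i - 1) := by
      intro x
      split_ifs with h
      · simp [h]
      · rw [pow_sub₀ _ h (Nat.one_le_pow _ _ hp.pos)]; rw [pow_one, mul_comm]
    simp_rw [h1]
    split_ifs with h
    · subst h
      simp only [pow_zero, Nat.sub_self]
      rw [Finset.sum_ite]
      have hc : ({x : F | x = 0} : Finset F).card = 1 := by
        rw [Finset.card_eq_one]; exact ⟨0, by ext; simp⟩
      simp [Finset.filter_not, Finset.card_sdiff, hc]
      rw [Nat.cast_sub (Fintype.card_pos)]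
      simp
    · have hlt : p ^ i < p ^ Module.finrank (ZMod p) F :=
        Nat.pow_lt_pow_right hp.one_lt (Finset.mem_range.1 hi)
      have h1i : 1 < p ^ i := Nat.one_lt_pow h hp.one_lt
      have := FiniteField.sum_pow_lt_card_sub_one F (p ^ i - 1) (by omega)
      refine Eq.trans ?_ this
      refine Finset.sum_congr rfl fun x _ => ?_
      split_ifs with hx
      · rw [hx, zero_pow (by omega)]
      · rfl
  rw [Finset.sum_congr rfl key]
  simp [hf]
end

theorem exists_val (p : ℕ) [Fact p.Prime] : ∃ V : ValuationSubring ℂ,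
    (∀ x : ℂ, IsIntegral ℤ x → x ∈ V) ∧ V.valuation (p : ℂ) < 1 := by
  have hp : p.Prime := Fact.out
  let A : Subring ℂ := (integralClosure ℤ ℂ).toSubring
  have hpA : (p : ℂ) ∈ A := natCast_mem A p
  obtain ⟨V, h1, h2⟩ := Ideal.image_subset_nonunits_valuationSubring (A := A)
    (Ideal.span {⟨p, hpA⟩}) (by
      intro h
      rw [Ideal.span_singleton_eq_top] at h
      obtain ⟨y, hy⟩ := h.exists_right_inv
      have hy' : (p : ℂ) * (y : ℂ) = 1 := congrArg Subtype.val hy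
      have hyi : IsIntegral ℤ (y : ℂ) := y.2
      have hyq : (y : ℂ) = algebraMap ℚ ℂ ((p : ℚ)⁻¹) := by
        have : (p : ℂ) ≠ 0 := by exact_mod_cast hp.ne_zero
        push_cast; field_simp; simpa using by linear_combination hy'
      rw [hyq, isIntegral_algebraMap_iff (algebraMap ℚ ℂ).injective] at hyi
      obtain ⟨n, hn⟩ := IsIntegrallyClosed.isIntegral_iff.1 hyi
      have hn' : (n : ℚ) * p = 1 := by
        have : (p : ℚ) ≠ 0 := by exact_mod_cast hp.ne_zero
        have h3 : (n : ℚ) = (p : ℚ)⁻¹ := by simpa using hn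
        rw [h3]; field_simp
      have hn2 : (n : ℤ) * p = 1 := by exact_mod_cast hn'
      have : (p : ℤ) ∣ 1 := ⟨n, by rw [mul_comm]; exact hn2.symm⟩
      exact hp.one_lt.ne' (by exact_mod_cast Int.eq_one_of_dvd_one (by positivity) this))
  refine ⟨V, fun x hx => h1 hx, ?_⟩
  have := h2 ⟨⟨p, hpA⟩, Ideal.subset_span rfl, rfl⟩
  exact V.mem_nonunits_iff.1 this

section
variable (p : ℕ) [Fact p.Prime] (F : Type) [Field F] [Fintype F] [Algebra (ZMod p) F]

theorem exists_teich (V : ValuationSubring ℂ) (hint : ∀ x : ℂ, IsIntegral ℤ x → x ∈ V)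
    (hpV : V.valuation (p : ℂ) < 1) :
    ∃ (K : Type) (_ : Field K) (φ : V →+* K) (i : F →+* K) (ω : MulChar F ℂ),
      (∀ a : V, φ a = 0 ↔ V.valuation (a : ℂ) < 1) ∧
      ∀ (x : F) (a : V), (a : ℂ) = ω x → φ a = i x := by
  classical
  have hp : p.Prime := Fact.out
  let k := IsLocalRing.ResidueField V
  let K := AlgebraicClosure k
  let φ : V →+* K := (algebraMap k K).comp (IsLocalRing.residue V)
  have hφ : ∀ a : V, φ a = 0 ↔ V.valuation (a : ℂ) < 1 := by
    intro a
    rw [← V.valuation_lt_one_iff, ← IsLocalRing.residue_eq_zero_iff]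
    simp only [φ, RingHom.comp_apply]
    exact map_eq_zero_iff _ (algebraMap k K).injective
  have hpK : (p : K) = 0 := by
    rw [← map_natCast φ, hφ]; simpa using hpV
  haveI : CharP K p := (CharP.charP_iff_prime_eq_zero hp).2 hpK
  letI : Algebra (ZMod p) K := ZMod.algebra K p
  let i : F →ₐ[ZMod p] K := IsAlgClosed.lift
  set n := Fintype.card F - 1 with hn
  have hn0 : 0 < n := by have := Fintype.one_lt_card (α := F); omega
  obtain ⟨g, hg⟩ := IsCyclic.exists_generator (α := Fˣ)
  have hgn : (g : F) ^ n = 1 := FiniteField.pow_card_sub_one_eq_one _ g.ne_zero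
  obtain ⟨ζ, hζ⟩ : ∃ ζ : ℂ, IsPrimitiveRoot ζ n := ⟨_, Complex.isPrimitiveRoot_exp n hn0.ne'⟩
  have hζV : ζ ∈ V := hint _ (isIntegral_rootOfUnity hn0 hζ.pow_eq_one)
  have hζ' : IsPrimitiveRoot (⟨ζ, hζV⟩ : V) n :=
    IsPrimitiveRoot.of_map_of_injective (f := V.subtype) (by exact hζ) Subtype.val_injective
  obtain ⟨z, hzn, hz⟩ : ∃ z : V, z ^ n = 1 ∧ φ z = i g := by
    have h1 := X_pow_sub_one_eq_prod hn0 hζ'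
    have h2 := congrArg (fun P => Polynomial.eval (i g) (P.map φ)) h1
    simp only [Polynomial.map_sub, Polynomial.map_pow, Polynomial.map_X, Polynomial.map_one,
      Polynomial.map_prod, Polynomial.eval_prod, Polynomial.map_C, Polynomial.eval_sub,
      Polynomial.eval_pow, Polynomial.eval_X, Polynomial.eval_one, Polynomial.eval_C] at h2
    rw [← map_pow, hgn, map_one, sub_self, eq_comm, Finset.prod_eq_zero_iff] at h2
    obtain ⟨z, hz, h3⟩ := h2
    exact ⟨z, (mem_nthRootsFinset hn0 1).1 hz, (sub_eq_zero.1 h3).symm⟩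
  have hzC : (z : ℂ) ^ n = 1 := by exact_mod_cast congrArg Subtype.val hzn
  have hz0 : (z : ℂ) ≠ 0 := by
    intro h; rw [h, zero_pow hn0.ne'] at hzC; exact zero_ne_one hzC
  have hroot : Units.mk0 (z : ℂ) hz0 ∈ rootsOfUnity (Fintype.card Fˣ) ℂ := by
    rw [_root_.mem_rootsOfUnity, Fintype.card_units]
    ext; simpa using hzC
  let ω := MulChar.ofRootOfUnity hroot hg
  have hω : ω g = z := MulChar.ofRootOfUnity_spec hroot hg
  refine ⟨K, inferInstance, φ, i, ω, hφ, ?_⟩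
  intro x a ha
  by_cases hx : x = 0
  · rw [hx, MulChar.map_zero] at ha
    have : a = 0 := Subtype.ext ha
    rw [this, hx, map_zero, map_zero]
  · obtain ⟨j, hj⟩ := (Submonoid.mem_powers_iff (Units.mk0 x hx) g).1 (by
      have := hg (Units.mk0 x hx)
      rwa [← mem_powers_iff_mem_zpowers] at this)
    have hxj : x = (g : F) ^ j := by
      have := congrArg Units.val hj; simpa using this.symm
    have : a = z ^ j := by
      apply Subtype.ext
      rw [ha, hxj, map_pow, hω]; rfl
    rw [this, map_pow, hz, hxj]; simp

theorem val_p_eq (V : ValuationSubring ℂ) (hint : ∀ x : ℂ, IsIntegral ℤ x → x ∈ V) :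
    V.valuation (p : ℂ) = V.valuation (zetaP p - 1) ^ (p - 1) := by
  have hp : p.Prime := Fact.out
  have hζ := zetaP_prim p hp.ne_zero
  have hV : zetaP p ∈ V := hint _ (isIntegral_zetaP p)
  have hζ' : IsPrimitiveRoot (⟨zetaP p, hV⟩ : V) p :=
    IsPrimitiveRoot.of_map_of_injective (f := V.subtype) (by exact hζ) Subtype.val_injective
  obtain ⟨n, rfl⟩ : ∃ n, p = n + 1 := ⟨p - 1, by have := hp.pos; omega⟩
  have := hζ.prod_one_sub_pow_eq_order
  push_cast
  rw [← this, map_prod]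
  rw [Finset.prod_congr rfl (g := fun _ => V.valuation (zetaP (n + 1) - 1))]
  · simp
  intro j hj
  obtain ⟨u, hu⟩ := hζ'.associated_pow_add_sub_sub_one hp.two_le 0 (j := j + 1)
    (Nat.coprime_of_lt_prime (by omega) (by have := Finset.mem_range.1 hj; omega) hp).symm
  have hu' := congrArg (fun t : V => V.valuation (t : ℂ)) hu
  simp only [pow_zero, zero_add] at hu'
  rw [Valuation.map_sub_swap]
  have h2 : V.valuation ((u : V) : ℂ) = 1 := V.valuation_unit u
  push_cast at hu'
  rw [map_mul, h2, mul_one] at hu'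
  exact hu'.symm

theorem val_pi_lt (V : ValuationSubring ℂ) (hint : ∀ x : ℂ, IsIntegral ℤ x → x ∈ V)
    (hpV : V.valuation (p : ℂ) < 1) : V.valuation (zetaP p - 1) < 1 := by
  rw [val_p_eq p V hint] at hpV
  by_contra! h
  exact absurd hpV (not_lt.2 (one_le_pow₀ h))

/-- base step -/
theorem base_step (hq : 2 < Fintype.card F) (V : ValuationSubring ℂ)
    (hint : ∀ x : ℂ, IsIntegral ℤ x → x ∈ V)
    (hpV : V.valuation (p : ℂ) < 1) (K : Type) [Field K] (φ : V →+* K) (i : F →+* K)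
    (ω : MulChar F ℂ) (hφ : ∀ a : V, φ a = 0 ↔ V.valuation (a : ℂ) < 1)
    (hω : ∀ (x : F) (a : V), (a : ℂ) = ω x → φ a = i x) (hω1 : ω ≠ 1) :
    V.valuation (gaussSum ω⁻¹ (eChar p F)) = V.valuation (zetaP p - 1) := by
  classical
  have hV : zetaP p ∈ V := hint _ (isIntegral_zetaP p)
  have hωi : ∀ x, ω⁻¹ x ∈ V := fun x => hint _ (isIntegral_mulChar F _ x)
  let s : F → V := fun x => ∑ j ∈ Finset.range (Algebra.trace (ZMod p) F x).val, (⟨_, hV⟩ : V) ^ j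
  let t : V := ∑ x : F, (⟨ω⁻¹ x, hωi x⟩ : V) * s x
  have h1 : gaussSum ω⁻¹ (eChar p F) = (zetaP p - 1) * (t : ℂ) := by
    have h0 : ∑ x, ω⁻¹ x = 0 := MulChar.sum_eq_zero_of_ne_one (by simpa using hω1)
    rw [gaussSum]
    have : ∀ x, ω⁻¹ x * eChar p F x = ω⁻¹ x + (zetaP p - 1) * (ω⁻¹ x * (s x : ℂ)) := by
      intro x
      rw [eChar_apply]
      have h2 : (s x : ℂ) = ∑ j ∈ Finset.range (Algebra.trace (ZMod p) F x).val, zetaP p ^ j := by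
        simp [s]
      have h3 := mul_geom_sum (zetaP p) (Algebra.trace (ZMod p) F x).val
      rw [← h2] at h3
      linear_combination (ω⁻¹ x) * (-h3)
    simp_rw [this, Finset.sum_add_distrib, h0, ← Finset.mul_sum]
    simp [t]
  have hzφ : φ ⟨_, hV⟩ = 1 := by
    rw [← sub_eq_zero, ← map_one φ, ← map_sub, hφ]
    exact val_pi_lt p V hint hpV
  have hchar : CharP F p := charP_of_injective_algebraMap (algebraMap (ZMod p) F).injective p
  have h2 : φ t = -1 := by
    have : φ t = i (∑ x : F, x⁻¹ * algebraMap (ZMod p) F (Algebra.trace (ZMod p) F x)) := by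
      simp only [t, map_sum, map_mul]
      refine Finset.sum_congr rfl fun x _ => ?_
      congr 1
      · apply hω
        exact MulChar.inv_apply' _ _
      · simp only [s, map_sum, map_pow, hzφ, one_pow, Finset.sum_const, Finset.card_range]
        rw [nsmul_eq_mul, mul_one]
        have h5 := congrArg (algebraMap (ZMod p) F)
          (ZMod.natCast_zmod_val (Algebra.trace (ZMod p) F x))
        rw [← h5, map_natCast, map_natCast]
    rw [this, sum_inv_mul_trace, map_neg, map_one]
  have h3 : V.valuation (t : ℂ) = 1 := by
    refine le_antisymm (V.valuation_le_one t) ?_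
    by_contra! h
    rw [← hφ, h2] at h
    exact neg_ne_zero.2 one_ne_zero h
  rw [h1, map_mul, h3, mul_one]
end

section
variable (p : ℕ) [Fact p.Prime] (F : Type) [Field F] [Fintype F] [Algebra (ZMod p) F]

theorem teich_order (V : ValuationSubring ℂ) (K : Type) [Field K] (φ : V →+* K) (i : F →+* K)
    (ω : MulChar F ℂ)
    (hω : ∀ (x : F) (a : V), (a : ℂ) = ω x → φ a = i x) :
    orderOf ω = Fintype.card F - 1 := by
  classical
  refine Nat.dvd_antisymm (MulChar.orderOf_dvd_card_sub_one _ ω) ?_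
  rw [← FiniteField.forall_pow_eq_one_iff]
  intro x
  have h := pow_orderOf_eq_one ω
  set n := orderOf ω
  have h1 : ω ((x : F) ^ n) = 1 := by
    rw [map_pow, ← MulChar.pow_apply_coe, h, MulChar.one_apply_coe]
  have := hω ((x : F) ^ n) 1 (by rw [h1]; rfl)
  rw [map_one, eq_comm, map_eq_one_iff _ i.injective] at this
  ext; simpa using this

theorem mulChar_eq_pow (ω ψ : MulChar F ℂ) (h : orderOf ω = Fintype.card F - 1) :
    ∃ j < Fintype.card F - 1, ψ = ω ^ j := by
  classical
  set n := Fintype.card F - 1 with hn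
  have hn0 : 0 < n := by have := Fintype.one_lt_card (α := F); omega
  obtain ⟨g, hg⟩ := IsCyclic.exists_generator (α := Fˣ)
  have hgn : (g : F) ^ n = 1 := FiniteField.pow_card_sub_one_eq_one _ g.ne_zero
  have hprim : IsPrimitiveRoot (ω g) n := by
    refine ⟨by rw [← map_pow, hgn, map_one], fun l hl => ?_⟩
    rw [← h]
    apply orderOf_dvd_of_pow_eq_one
    rw [MulChar.eq_iff hg, MulChar.pow_apply_coe, hl, MulChar.one_apply_coe]
  haveI : NeZero n := ⟨hn0.ne'⟩
  obtain ⟨j, hj, h2⟩ := hprim.eq_pow_of_pow_eq_one (ξ := ψ g) (by rw [← map_pow, hgn, map_one])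
  exact ⟨j, hj, by rw [MulChar.eq_iff hg, MulChar.pow_apply_coe, h2]⟩

theorem mulChar_eq_pow' (ω ψ : MulChar F ℂ) (h : orderOf ω = Fintype.card F - 1) (m s : ℕ)
    (hm : orderOf ψ = m) (hs : Fintype.card F - 1 = m * s) :
    ∃ c < m, Nat.Coprime c m ∧ ψ = ω ^ (s * c) := by
  have hn0 : 0 < Fintype.card F - 1 := by have := Fintype.one_lt_card (α := F); omega
  have hs0 : 0 < s := by rw [hs] at hn0; exact Nat.pos_of_mul_pos_left hn0
  obtain ⟨j, hj, rfl⟩ := mulChar_eq_pow F ω ψ h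
  have h1 : m * s ∣ j * m := by
    rw [← hs, ← h]
    apply orderOf_dvd_of_pow_eq_one
    rw [pow_mul, ← hm, pow_orderOf_eq_one]
  have hm0 : 0 < m := by rw [hs] at hn0; exact Nat.pos_of_mul_pos_right hn0
  rw [mul_comm j, Nat.mul_dvd_mul_iff_left hm0] at h1
  obtain ⟨c, rfl⟩ := h1
  refine ⟨c, ?_, ?_, rfl⟩
  · rw [hs, mul_comm m] at hj; exact lt_of_mul_lt_mul_left hj hs0.le
  · have hg0 : 0 < Nat.gcd c m := Nat.gcd_pos_of_pos_right _ hm0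
    obtain ⟨c', hc'⟩ := Nat.gcd_dvd_left c m
    obtain ⟨m', hm'⟩ := Nat.gcd_dvd_right c m
    have hm'0 : 0 < m' := Nat.pos_of_ne_zero (by rintro rfl; omega)
    have h3 : (ω ^ (s * c)) ^ m' = 1 := by
      have : s * c * m' = (Fintype.card F - 1) * c' := by
        rw [hs]
        calc s * c * m' = s * (Nat.gcd c m * c') * m' := by rw [← hc']
          _ = (Nat.gcd c m * m') * s * c' := by ring
          _ = _ := by rw [← hm']
      rw [← pow_mul, this, pow_mul, ← h, pow_orderOf_eq_one, one_pow]
    have h4 : m ∣ m' := by rw [← hm]; exact orderOf_dvd_of_pow_eq_one h3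
    have h5 := Nat.le_of_dvd hm'0 h4
    have : Nat.gcd c m ≤ 1 := by
      by_contra! h6
      have : 2 * m' ≤ Nat.gcd c m * m' := Nat.mul_le_mul_right _ h6
      omega
    exact le_antisymm this hg0

theorem stick_step (V : ValuationSubring ℂ) (hint : ∀ x : ℂ, IsIntegral ℤ x → x ∈ V)
    (ω : MulChar F ℂ) (hord : orderOf ω = Fintype.card F - 1)
    (hbase : V.valuation (gaussSum ω⁻¹ (eChar p F)) = V.valuation (zetaP p - 1))
    (n w d : ℕ) (hnd : n + d < Fintype.card F - 1)
    (h : V.valuation (zetaP p - 1) ^ w ≤ V.valuation (gaussSum (ω⁻¹ ^ n) (eChar p F))) :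
    V.valuation (zetaP p - 1) ^ (w + d) ≤
      V.valuation (gaussSum (ω⁻¹ ^ (n + d)) (eChar p F)) := by
  induction d with
  | zero => simpa using h
  | succ d ih =>
    have ih := ih (by omega)
    have hne : ω⁻¹ ^ (n + d) * ω⁻¹ ≠ 1 := by
      rw [← pow_succ, inv_pow]
      intro h1
      have := orderOf_dvd_of_pow_eq_one (inv_eq_one.1 h1)
      rw [hord] at this
      have := Nat.le_of_dvd (by omega) this
      omega
    have h2 := congrArg V.valuation (jacobiSum_mul_nontrivial hne (eChar p F))
    rw [map_mul, map_mul, hbase, ← pow_succ] at h2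
    have hJ : V.valuation (jacobiSum (ω⁻¹ ^ (n + d)) ω⁻¹) ≤ 1 :=
      (V.valuation_le_one_iff _).2 (hint _ (isIntegral_jacobiSum F _ _))
    calc V.valuation (zetaP p - 1) ^ (w + (d + 1))
        = V.valuation (zetaP p - 1) ^ (w + d) * V.valuation (zetaP p - 1) := by
          rw [← add_assoc, pow_succ]
      _ ≤ V.valuation (gaussSum (ω⁻¹ ^ (n + d)) (eChar p F)) * V.valuation (zetaP p - 1) := by
          gcongr
      _ = _ := h2.symm
      _ ≤ V.valuation (gaussSum (ω⁻¹ ^ (n + d + 1)) (eChar p F)) * 1 := by gcongr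
      _ = _ := by rw [mul_one, add_assoc]

theorem stick_main (hq : 2 < Fintype.card F) (f : ℕ) (hf : Fintype.card F = p ^ f)
    (m : ℕ) (V : ValuationSubring ℂ) (hint : ∀ x : ℂ, IsIntegral ℤ x → x ∈ V)
    (hpV : V.valuation (p : ℂ) < 1) (ψ : MulChar F ℂ) (hψ : orderOf ψ = m) :
    ∃ c < m, Nat.Coprime c m ∧
      V.valuation (p : ℂ) ^ (∑ i ∈ Finset.range f, (p ^ i * c) % m) ≤
        V.valuation (gaussSum ψ (eChar p F)) ^ m := by
  have hp : p.Prime := Fact.out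
  obtain ⟨K, _, φ, i, ω, hφ, hω⟩ := exists_teich p F V hint hpV
  have hord := teich_order F V K φ i ω hω
  have hω1 : ω ≠ 1 := by
    rintro rfl; rw [orderOf_one] at hord; omega
  have hbase := base_step p F hq V hint hpV K φ i ω hφ hω hω1
  obtain ⟨s, hs⟩ : m ∣ Fintype.card F - 1 := by
    rw [← hψ]; exact MulChar.orderOf_dvd_card_sub_one _ ψ
  obtain ⟨c, hcm, hcop, hψc⟩ := mulChar_eq_pow' F ω⁻¹ ψ (by rw [orderOf_inv, hord]) m s hψ hs
  have hm0 : 0 < m := by omega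
  have hqs : p ^ f = m * s + 1 := by omega
  have hs0 : 0 < s := Nat.pos_of_ne_zero (by rintro rfl; omega)
  refine ⟨c, hcm, hcop, ?_⟩
  have key : ∀ j ≤ f, V.valuation (zetaP p - 1) ^ (∑ i ∈ Finset.range j, (p * ((p ^ i * c) % m)) / m)
      ≤ V.valuation (gaussSum (ω⁻¹ ^ ((p ^ j * c) / m)) (eChar p F)) := by
    intro j
    induction j with
    | zero =>
      intro _
      rw [pow_zero, one_mul, Nat.div_eq_of_lt hcm, pow_zero, gaussSum_one_left (eChar_ne_one p F)]
      simp
    | succ j ih =>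
      intro hj
      have ih := ih (by omega)
      have e1 : p ^ (j + 1) * c / m = p ^ j * c / m * p + p * (p ^ j * c % m) / m := by
        have : p ^ (j + 1) * c = p * (p ^ j * c % m) + m * (p ^ j * c / m * p) := by
          conv_lhs => rw [pow_succ, mul_right_comm, ← Nat.mod_add_div (p ^ j * c) m]
          ring
        rw [this, Nat.add_mul_div_left _ _ hm0, add_comm]
      rw [Finset.sum_range_succ, e1]
      refine stick_step p F V hint ω hord hbase _ _ _ ?_ ?_
      · rw [← e1, hs]
        have : p ^ (j + 1) * c ≤ p ^ f * c :=
          Nat.mul_le_mul_right _ (Nat.pow_le_pow_right hp.pos hj)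
        have h3 : p ^ f * c = c + m * (s * c) := by rw [hqs]; ring
        calc _ ≤ p ^ f * c / m := Nat.div_le_div_right this
          _ = s * c := by rw [h3, Nat.add_mul_div_left _ _ hm0, Nat.div_eq_of_lt hcm, zero_add]
          _ < m * s := by rw [mul_comm m]; exact Nat.mul_lt_mul_of_pos_left hcm hs0
      · rw [pow_mul, gaussSum_pow_p]; exact ih
  have hkf := key f le_rfl
  have h3 : p ^ f * c = c + m * (s * c) := by rw [hqs]; ring
  rw [h3, Nat.add_mul_div_left _ _ hm0, Nat.div_eq_of_lt hcm, zero_add, ← hψc] at hkf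
  have hsum : m * (∑ i ∈ Finset.range f, (p * ((p ^ i * c) % m)) / m) =
      (p - 1) * ∑ i ∈ Finset.range f, (p ^ i * c) % m := by
    have e2 : ∀ i, p * ((p ^ i * c) % m) =
        m * ((p * ((p ^ i * c) % m)) / m) + (p ^ (i + 1) * c) % m := by
      intro i
      conv_lhs => rw [← Nat.div_add_mod (p * ((p ^ i * c) % m)) m]
      congr 1
      rw [Nat.mul_mod, Nat.mod_mod, ← Nat.mul_mod, pow_succ]
      congr 1; ring
    have e3 := Finset.sum_congr rfl (fun i (_ : i ∈ Finset.range f) => e2 i)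
    rw [Finset.sum_add_distrib, ← Finset.mul_sum, ← Finset.mul_sum] at e3
    have e4 := Finset.sum_range_succ (fun i => (p ^ i * c) % m) f
    rw [Finset.sum_range_succ'] at e4
    have e5 : p ^ f * c % m = c % m := by rw [h3, Nat.add_mul_mod_self_left]
    rw [e5, pow_zero, one_mul] at e4
    rw [Nat.sub_mul, one_mul]
    omega
  rw [val_p_eq p V hint, ← pow_mul, ← hsum, mul_comm, pow_mul]
  gcongr
end

theorem pow_generates {n p : ℕ} [NeZero n] (hord : orderOf (p : ZMod n) = Nat.totient n)
    (a : ZMod n) (ha : IsUnit a) : ∃ k : ℕ, a = (p : ZMod n) ^ k := by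
  have hpos : 0 < orderOf (p : ZMod n) := by
    rw [hord]; exact Nat.totient_pos.2 (Nat.pos_of_ne_zero (NeZero.ne n))
  have hu : IsUnit (p : ZMod n) := (isOfFinOrder_iff_pow_eq_one.2 ⟨_, hpos, pow_orderOf_eq_one _⟩).isUnit
  obtain ⟨u, hu⟩ := hu
  obtain ⟨b, rfl⟩ := ha
  have h1 : Subgroup.zpowers u = ⊤ := by
    apply Subgroup.eq_top_of_card_eq
    rw [Nat.card_zpowers, Nat.card_eq_fintype_card, ZMod.card_units_eq_totient, ← hord, ← hu,
      orderOf_units]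
  have h2 : b ∈ Subgroup.zpowers u := by rw [h1]; trivial
  rw [← mem_powers_iff_mem_zpowers] at h2
  obtain ⟨k, hk⟩ := (Submonoid.mem_powers_iff _ _).1 h2
  exact ⟨k, by rw [← hk, ← hu]; simp⟩

theorem jac_neg (p l r : ℕ) (hl : l.Prime) (hl2 : l ≠ 2) (hr : 1 ≤ r)
    (hord : orderOf (p : ZMod (l ^ r)) = Nat.totient (l ^ r)) : jacobiSym p l = -1 := by
  haveI : NeZero (l ^ r) := ⟨pow_ne_zero _ hl.ne_zero⟩
  haveI : NeZero l := ⟨hl.ne_zero⟩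
  obtain ⟨a, ha⟩ := exists_nonres l hl hl2
  have hcop : IsCoprime a (l : ℤ) := by
    rw [Int.isCoprime_iff_gcd_eq_one]
    by_contra h
    rw [jacobiSym.eq_zero_iff_not_coprime.2 h] at ha; norm_num at ha
  have hu : IsUnit (a : ZMod (l ^ r)) := by
    rw [ZMod.coe_int_isUnit_iff_isCoprime]
    push_cast
    exact hcop.symm.pow_left
  obtain ⟨k, hk⟩ := pow_generates hord _ hu
  have h1 : (a : ZMod l) = (p : ZMod l) ^ k := by
    have := congrArg (ZMod.castHom (dvd_pow_self l (by omega : r ≠ 0)) (ZMod l)) hk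
    rw [map_pow, map_intCast, map_natCast] at this; exact this
  have h2 : jacobiSym a l = jacobiSym p l ^ k := by
    rw [← jacobiSym.pow_left]
    apply jacobiSym.mod_left'
    exact (ZMod.intCast_eq_intCast_iff _ _ _).1 (by push_cast; exact h1)
  rcases jacobiSym.trichotomy p l with h | h | h
  · rw [h, ha] at h2
    rcases Nat.eq_zero_or_pos k with h0 | h0
    · rw [h0] at h2; norm_num at h2
    · rw [zero_pow h0.ne'] at h2; norm_num at h2
  · rw [h, ha, one_pow] at h2; norm_num at h2
  · exact h

theorem ker_pow (m d p f : ℕ) [NeZero m] [NeZero d] (hd : d ∣ m)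
    (hJ : jacobiSym p d = 1)
    (hcop : p.Coprime m) (hord : orderOf (p : ZMod m) = f) (hf : 2 * f = Nat.totient m)
    (hex : ∃ a : ℤ, IsCoprime a m ∧ jacobiSym a d = -1)
    (a : ℤ) (ha : IsCoprime a m) (hJa : jacobiSym a d = 1) :
    ∃ i < f, (a : ZMod m) = (p : ZMod m) ^ i := by
  let Φ : (ZMod m)ˣ →* ℂˣ := (jchar d).toUnitHom.comp (ZMod.unitsMap hd)
  have hΦ : ∀ (u : (ZMod m)ˣ) (b : ℤ), (u : ZMod m) = b → ((Φ u : ℂˣ) : ℂ) = (jacobiSym b d : ℂ) := by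
    intro u b hb
    rw [← jchar_int]
    change ((jchar d).toUnitHom (ZMod.unitsMap hd u) : ℂ) = _
    rw [MulChar.coe_toUnitHom, ZMod.unitsMap_val, hb, ← ZMod.castHom_apply (h := hd), map_intCast]
  have hf0 : 0 < f := by
    have := Nat.totient_pos.2 (Nat.pos_of_ne_zero (NeZero.ne m)); omega
  have hu : IsUnit (p : ZMod m) := (ZMod.isUnit_iff_coprime _ _).2 hcop
  obtain ⟨u, hu⟩ := hu
  have hle : Subgroup.zpowers u ≤ Φ.ker := by
    rw [Subgroup.zpowers_le, MonoidHom.mem_ker]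
    ext
    rw [hΦ u p (by rw [hu]; simp), hJ]; simp
  have hK : Nat.card Φ.ker ≤ f := by
    have h1 : Φ.ker ≠ ⊤ := by
      intro htop
      obtain ⟨b, hb, hb'⟩ := hex
      obtain ⟨w, hw⟩ := (ZMod.coe_int_isUnit_iff_isCoprime b m).2 hb.symm
      have : w ∈ Φ.ker := by rw [htop]; trivial
      rw [MonoidHom.mem_ker] at this
      have h2 := hΦ w b hw
      rw [this, hb'] at h2
      norm_num at h2
    have h2 := Subgroup.card_mul_index Φ.ker
    rw [Nat.card_eq_fintype_card (α := (ZMod m)ˣ), ZMod.card_units_eq_totient, ← hf] at h2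
    have h3 : Φ.ker.index ≠ 1 := fun h => h1 (Subgroup.index_eq_one.1 h)
    have h4 : Φ.ker.index ≠ 0 := by intro h; rw [h] at h2; omega
    have h5 : 2 ≤ Φ.ker.index := by omega
    nlinarith
  have heq : Subgroup.zpowers u = Φ.ker := by
    apply Subgroup.eq_of_le_of_card_ge hle
    rw [Nat.card_zpowers, ← orderOf_units, hu, hord]
    exact hK
  obtain ⟨b, hb⟩ := (ZMod.coe_int_isUnit_iff_isCoprime a m).2 ha.symm
  have h6 : b ∈ Subgroup.zpowers u := by
    rw [heq, MonoidHom.mem_ker]; ext; rw [hΦ b a hb, hJa]; simp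
  rw [← mem_powers_iff_mem_zpowers] at h6
  obtain ⟨k, hk⟩ := (Submonoid.mem_powers_iff _ _).1 h6
  refine ⟨k % f, Nat.mod_lt _ hf0, ?_⟩
  rw [← hb, ← hk, ← hord, pow_mod_orderOf, ← hu]; simp

/-- sum over a coset -/
theorem S_bound (m d p f M : ℕ) (H : ℤ) [NeZero m] [NeZero d] (hm : m = d * M)
    (hd1 : 1 < d) (hcd : ∀ x : ℕ, x.Coprime d → x.Coprime m)
    (hJ : jacobiSym p d = 1)
    (hcop : p.Coprime m) (hord : orderOf (p : ZMod m) = f) (hf : 2 * f = Nat.totient m)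
    (hex : ∃ a : ℤ, IsCoprime a m ∧ jacobiSym a d = -1)
    (hsum0 : ∑ k ∈ Finset.range d, jacobiSym k d = 0)
    (hH : |∑ k ∈ Finset.range d, (k : ℤ) * jacobiSym k d| ≤ d * H)
    (c : ℕ) (hc : c.Coprime m) :
    2 * ((∑ i ∈ Finset.range f, (p ^ i * c) % m : ℕ) : ℤ) ≤ m * (f + H) := by
  have hd : d ∣ m := ⟨M, hm⟩
  have hm0 : 0 < m := Nat.pos_of_ne_zero (NeZero.ne m)
  have hM0 : 0 < M := Nat.pos_of_ne_zero (by rintro rfl; omega)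
  have hm1 : 1 < m := by nlinarith
  have hJc : jacobiSym c d = 1 ∨ jacobiSym c d = -1 := jacobiSym.eq_one_or_neg_one (by
    exact_mod_cast Nat.Coprime.coprime_dvd_right hd hc)
  have hJJ : jacobiSym c d * jacobiSym c d = 1 := by rcases hJc with h | h <;> rw [h] <;> norm_num
  have hJmod : ∀ a b : ℕ, (a : ZMod m) = b → jacobiSym a d = jacobiSym b d := by
    intro a b hab
    apply jacobiSym.mod_left'
    apply (ZMod.intCast_eq_intCast_iff _ _ _).1
    have := congrArg (ZMod.castHom hd (ZMod d)) hab
    simpa using this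
  -- the sum as a filtered sum
  have h1 : ∑ i ∈ Finset.range f, (p ^ i * c) % m =
      ∑ x ∈ (Finset.range m).filter (fun x : ℕ => x.Coprime m ∧ jacobiSym x d = jacobiSym c d), x := by
    refine Finset.sum_bij (fun i _ => (p ^ i * c) % m) ?_ ?_ ?_ (fun _ _ => rfl)
    · intro i _
      rw [Finset.mem_filter, Finset.mem_range]
      refine ⟨Nat.mod_lt _ hm0, ?_, ?_⟩
      · have : (p ^ i * c).Coprime m := Nat.Coprime.mul_left (hcop.pow_left i) hc
        unfold Nat.Coprime at this ⊢
        rw [← Nat.gcd_rec m, Nat.gcd_comm]; exact this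
      · rw [hJmod _ (p ^ i * c) (by simp)]
        push_cast
        rw [jacobiSym.mul_left, jacobiSym.pow_left, hJ, one_pow, one_mul]
    · intro i hi j hj hij
      have h2 : ((p ^ i * c : ℕ) : ZMod m) = ((p ^ j * c : ℕ) : ZMod m) :=
        (ZMod.natCast_eq_natCast_iff _ _ _).2 hij
      push_cast at h2
      have hcu : IsUnit (c : ZMod m) := (ZMod.isUnit_iff_coprime _ _).2 hc
      have h3 := hcu.mul_right_cancel h2
      rw [Finset.mem_range, ← hord] at hi hj
      exact pow_injOn_Iio_orderOf hi hj h3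
    · intro x hx
      rw [Finset.mem_filter, Finset.mem_range] at hx
      obtain ⟨hxm, hxc, hxJ⟩ := hx
      have hcu : IsUnit (c : ZMod m) := (ZMod.isUnit_iff_coprime _ _).2 hc
      obtain ⟨b, hb⟩ := hcu.exists_left_inv
      have hbv : ((b.val : ℕ) : ZMod m) = b := ZMod.natCast_zmod_val b
      have hbu : IsUnit b := IsUnit.of_mul_eq_one _ hb
      have hbJ : jacobiSym b.val d * jacobiSym c d = 1 := by
        rw [← jacobiSym.mul_left, ← Nat.cast_mul, hJmod _ 1 (by push_cast; rw [hbv, hb])]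
        simp
      obtain ⟨i, hi, hi2⟩ := ker_pow m d p f hd hJ hcop hord hf hex (x * b.val : ℕ) (by
        apply IsCoprime.symm
        rw [← ZMod.coe_int_isUnit_iff_isCoprime]
        push_cast
        rw [hbv]
        exact ((ZMod.isUnit_iff_coprime _ _).2 hxc).mul hbu) (by
        push_cast
        rw [jacobiSym.mul_left, hxJ, mul_comm, hbJ])
      refine ⟨i, Finset.mem_range.2 hi, ?_⟩
      have h5 : ((p ^ i * c : ℕ) : ZMod m) = ((x : ℕ) : ZMod m) := by
        push_cast at hi2 ⊢
        rw [← hi2, hbv, mul_assoc, hb, mul_one]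
      have h6 := (ZMod.natCast_eq_natCast_iff _ _ _).1 h5
      rw [show p ^ i * c % m = x % m from h6, Nat.mod_eq_of_lt hxm]
  have hT : 2 * ∑ x ∈ (Finset.range m).filter (fun x : ℕ => x.Coprime m), x =
      m * Nat.totient m := by
    have e1 : ∑ x ∈ (Finset.range m).filter (fun x : ℕ => x.Coprime m), x =
        ∑ x ∈ (Finset.range m).filter (fun x : ℕ => x.Coprime m), (m - x) := by
      have hx0 : ∀ x : ℕ, x.Coprime m → 0 < x := by
        intro x hx
        rcases Nat.eq_zero_or_pos x with h | h
        · rw [h, Nat.coprime_zero_left] at hx; omega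
        · exact h
      refine Finset.sum_nbij' (fun x => m - x) (fun x => m - x) ?_ ?_ ?_ ?_ ?_
      · intro x hx
        rw [Finset.mem_filter, Finset.mem_range] at hx ⊢
        have := hx0 x hx.2
        exact ⟨by omega, (Nat.coprime_self_sub_left hx.1.le).2 hx.2⟩
      · intro x hx
        rw [Finset.mem_filter, Finset.mem_range] at hx ⊢
        have := hx0 x hx.2
        exact ⟨by omega, (Nat.coprime_self_sub_left hx.1.le).2 hx.2⟩
      all_goals
        intro x hx
        rw [Finset.mem_filter, Finset.mem_range] at hx
        omega
    have e2 : ∑ x ∈ (Finset.range m).filter (fun x : ℕ => x.Coprime m), (x + (m - x)) =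
        m * Nat.totient m := by
      rw [Finset.sum_congr rfl (g := fun _ => m)]
      · rw [Finset.sum_const, smul_eq_mul, mul_comm, Nat.totient_eq_card_coprime]
        simp_rw [Nat.coprime_comm]
      · intro x hx
        rw [Finset.mem_filter, Finset.mem_range] at hx
        omega
    rw [Finset.sum_add_distrib, ← e1] at e2
    omega
  have hD : ∑ x ∈ Finset.range m, (x : ℤ) * jacobiSym x d =
      M * ∑ k ∈ Finset.range d, (k : ℤ) * jacobiSym k d := by
    have e1 : ∀ n : ℕ, ∑ x ∈ Finset.range (d * n), (x : ℤ) * jacobiSym x d =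
      n * ∑ k ∈ Finset.range d, (k : ℤ) * jacobiSym k d := by
      intro n
      induction n with
      | zero => simp
      | succ n ih =>
        rw [Nat.mul_succ, Finset.sum_range_add, ih]
        have e2 : ∀ x : ℕ, ((d * n + x : ℕ) : ℤ) * jacobiSym ((d * n + x : ℕ) : ℤ) d =
            d * n * jacobiSym x d + x * jacobiSym x d := by
          intro x
          have : jacobiSym ((d * n + x : ℕ) : ℤ) d = jacobiSym x d := by
            apply jacobiSym.mod_left'
            push_cast
            exact Int.mul_add_emod_self_left _ _ _
          rw [this]; push_cast; ring
        simp_rw [e2]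
        rw [Finset.sum_add_distrib, ← Finset.mul_sum, hsum0]
        push_cast; ring
    rw [← e1, hm]
  have h2S : 2 * ((∑ i ∈ Finset.range f, (p ^ i * c) % m : ℕ) : ℤ) =
      ((∑ x ∈ (Finset.range m).filter (fun x : ℕ => x.Coprime m), x : ℕ) : ℤ) +
      jacobiSym c d * ∑ x ∈ Finset.range m, (x : ℤ) * jacobiSym x d := by
    rw [h1, Finset.sum_filter, Finset.sum_filter]
    push_cast
    rw [Finset.mul_sum, Finset.mul_sum, ← Finset.sum_add_distrib]
    refine Finset.sum_congr rfl fun x _ => ?_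
    by_cases hx : x.Coprime m
    · have hxJ : jacobiSym x d = 1 ∨ jacobiSym x d = -1 := jacobiSym.eq_one_or_neg_one (by
        exact_mod_cast Nat.Coprime.coprime_dvd_right hd hx)
      have hiff : ∀ P : Prop, (x.Coprime m ∧ P) = P := fun P => propext (and_iff_right hx)
      rcases hJc with h | h <;> rcases hxJ with h' | h' <;>
        rw [h, h', if_pos hx] <;> simp only [hiff] <;> norm_num <;> ring
    · have h0 : jacobiSym x d = 0 := by
        apply jacobiSym.eq_zero_iff_not_coprime.2
        intro h
        exact hx (hcd x (by exact_mod_cast h))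
      simp [hx, h0]
  rw [h2S, hD]
  have hT' : 2 * ((∑ x ∈ (Finset.range m).filter (fun x : ℕ => x.Coprime m), x : ℕ) : ℤ) =
      2 * (m * f) := by
    rw [show 2 * ((m : ℤ) * f) = ((m * (2 * f) : ℕ) : ℤ) by push_cast; ring, hf, ← hT]
    push_cast; rfl
  have hT2 : ((∑ x ∈ (Finset.range m).filter (fun x : ℕ => x.Coprime m), x : ℕ) : ℤ) = m * f := by
    linarith
  rw [hT2]
  set D := ∑ k ∈ Finset.range d, (k : ℤ) * jacobiSym k d
  have hMz : (0 : ℤ) ≤ M := by positivity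
  have hb : jacobiSym c d * (M * D) ≤ m * H := by
    have hmz : (m : ℤ) * H = M * (d * H) := by rw [hm]; push_cast; ring
    rw [hmz]
    have := abs_le.1 hH
    rcases hJc with h | h <;> rw [h] <;> nlinarith
  linarith

theorem eq_one_or_neg_one_of_sq' {R : Type} [Field R] {x : R} (h : x ^ 2 = 1) : x = 1 ∨ x = -1 := by
  apply sq_eq_sq_iff_eq_or_eq_neg.1; rw [h, one_pow]

section
variable (F : Type) [Field F] [Fintype F]

theorem eta_gen (η : MulChar F ℂ) (h1 : η ≠ 1) (h2 : η ^ 2 = 1) (g : Fˣ)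
    (hg : ∀ x, x ∈ Subgroup.zpowers g) : η g = -1 := by
  have : η g ^ 2 = 1 := by rw [← MulChar.pow_apply_coe, h2, MulChar.one_apply_coe]
  rcases eq_one_or_neg_one_of_sq' this with h | h
  · exfalso; apply h1; rw [MulChar.eq_iff hg, h, MulChar.one_apply_coe]
  · exact h

theorem eta_eq [DecidableEq F] (hF : ringChar F ≠ 2) (η : MulChar F ℂ) (h1 : η ≠ 1)
    (h2 : η ^ 2 = 1) (x : F) : η x = (quadraticChar F x : ℂ) := by
  obtain ⟨g, hg⟩ := IsCyclic.exists_generator (α := Fˣ)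
  have hinj : Function.Injective (Int.castRingHom ℂ) := Int.cast_injective
  have h3 : (quadraticChar F).ringHomComp (Int.castRingHom ℂ) ≠ 1 := by
    rw [Ne, MulChar.ringHomComp_eq_one_iff hinj]; exact quadraticChar_ne_one hF
  have h4 : ((quadraticChar F).ringHomComp (Int.castRingHom ℂ)) ^ 2 = 1 := by
    rw [MulChar.ringHomComp_pow, (quadraticChar_isQuadratic F).sq_eq_one]; simp
  have : η = (quadraticChar F).ringHomComp (Int.castRingHom ℂ) := by
    rw [MulChar.eq_iff hg, eta_gen F η h1 h2 g hg, eta_gen F _ h3 h4 g hg]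
  rw [this]; rfl

theorem jacobi_double (hF : ringChar F ≠ 2) (η ψ : MulChar F ℂ) (h1 : η ≠ 1)
    (h2 : η ^ 2 = 1) (hψ : ψ ≠ 1) : ψ 4 * jacobiSum ψ ψ = jacobiSum η ψ := by
  classical
  have h20 : (2 : F) ≠ 0 := Ring.two_ne_zero hF
  have e1 : ψ 4 * jacobiSum ψ ψ = ∑ u : F, ψ (1 - u ^ 2) := by
    rw [jacobiSum, Finset.mul_sum]
    refine Finset.sum_bijective (fun x => 2 * x - 1) ?_ (by simp) ?_
    · refine ⟨fun a b h => ?_, fun b => ⟨(b + 1) / 2, by field_simp; ring⟩⟩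
      have : 2 * a = 2 * b := by linear_combination h
      exact mul_left_cancel₀ h20 this
    · intro x _
      rw [← map_mul, ← map_mul]; congr 1; ring
  have e2 : ∑ u : F, ψ (1 - u ^ 2) = ∑ s : F, (1 + η s) * ψ (1 - s) := by
    rw [← Finset.sum_fiberwise_of_maps_to (t := Finset.univ) (g := fun u : F => u ^ 2) (by simp)]
    refine Finset.sum_congr rfl fun s _ => ?_
    rw [Finset.sum_congr rfl (g := fun _ => ψ (1 - s))]
    · rw [Finset.sum_const, nsmul_eq_mul]
      congr 1
      have := quadraticChar_card_sqrts hF s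
      rw [eta_eq F hF η h1 h2 s, add_comm]
      rw [show ((quadraticChar F s : ℤ) : ℂ) + 1 = ((quadraticChar F s + 1 : ℤ) : ℂ) by
        push_cast; ring, ← this]
      push_cast
      congr 2
      ext; simp
    · intro u hu
      rw [(Finset.mem_filter.1 hu).2]
  rw [e1, e2]
  simp_rw [add_mul, one_mul, Finset.sum_add_distrib]
  have e3 : ∑ s : F, ψ (1 - s) = 0 := by
    rw [← MulChar.sum_eq_zero_of_ne_one hψ]
    exact Finset.sum_bijective (fun x => 1 - x) (Equiv.subLeft (1 : F)).bijective (by simp)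
      (fun _ _ => rfl)
  rw [e3, zero_add]; rfl

theorem dav_hasse (hF : ringChar F ≠ 2) (η ψ : MulChar F ℂ) (h1 : η ≠ 1)
    (h2 : η ^ 2 = 1) (hψ : ψ ^ 2 ≠ 1) (hψη : η * ψ ≠ 1) (e : AddChar F ℂ)
    (hne : gaussSum ψ e ≠ 0) :
    ψ 4 * gaussSum ψ e * gaussSum (η * ψ) e = gaussSum (ψ ^ 2) e * gaussSum η e := by
  have hψ1 : ψ ≠ 1 := by rintro rfl; simp at hψ
  have a1 := jacobiSum_mul_nontrivial (χ := ψ) (φ := ψ) (by rwa [← sq]) e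
  have a2 := jacobiSum_mul_nontrivial hψη e
  have a3 := jacobi_double F hF η ψ h1 h2 hψ1
  rw [← a3] at a2
  rw [← sq] at a1
  apply mul_right_cancel₀ hne
  linear_combination (ψ 4 * gaussSum (η * ψ) e) * (-a1) + gaussSum (ψ ^ 2) e * a2
end

section
variable (p : ℕ) [Fact p.Prime] (F : Type) [Field F] [Fintype F] [Algebra (ZMod p) F]

theorem eChar_pow_iter (k : ℕ) (x : F) : eChar p F (x ^ p ^ k) = eChar p F x := by
  induction k with
  | zero => simp
  | succ k ih =>
    rw [pow_succ, pow_mul, eChar_apply, trace_pow_p, ← eChar_apply, ih]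

theorem quad_gauss (hp2 : p ≠ 2) (k : ℕ) (hk : 0 < k) (hcard : Fintype.card F = p ^ (2 * k))
    (h4 : p ^ k % 4 = 1) (η : MulChar F ℂ) (h1 : η ≠ 1) (h2 : η ^ 2 = 1) :
    gaussSum η (eChar p F) = -(p : ℂ) ^ k := by
  classical
  have hp : p.Prime := Fact.out
  have hch : CharP F p := charP_of_injective_algebraMap (algebraMap (ZMod p) F).injective p
  set q := p ^ k with hq
  have hq1 : 1 < q := Nat.one_lt_pow hk.ne' hp.one_lt
  obtain ⟨t, ht⟩ : ∃ t, q = 4 * t + 1 := ⟨q / 4, by omega⟩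
  have hcq : Fintype.card F = q * q := by rw [hcard, hq, two_mul, pow_add]
  have hadd : ∀ x y : F, (x + y) ^ q = x ^ q + y ^ q := fun x y => add_pow_char_pow x y p k
  obtain ⟨g, hg⟩ := IsCyclic.exists_generator (α := Fˣ)
  have hηg := eta_gen F η h1 h2 g hg
  have hcu : Fintype.card Fˣ = (q - 1) * (q + 1) := by
    rw [Fintype.card_units, hcq, ht]; simp; ring_nf; omega
  have hgord : orderOf g = (q - 1) * (q + 1) := by
    rw [orderOf_eq_card_of_forall_mem_zpowers hg, Nat.card_eq_fintype_card, hcu]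
  have hgp : IsPrimitiveRoot (g : F) ((q - 1) * (q + 1)) := by
    rw [← hgord]; exact IsPrimitiveRoot.coe_units_iff.2 (IsPrimitiveRoot.orderOf g)
  have hodd : Odd p := hp.odd_of_ne_two hp2
  let A : AddSubgroup F :=
    { carrier := {y | y ^ q = y}
      add_mem' := by intro a b ha hb; simp only [Set.mem_ofPred_eq] at *; rw [hadd, ha, hb]
      zero_mem' := by simp only [Set.mem_ofPred_eq]; rw [zero_pow (by omega)]
      neg_mem' := by
        intro a ha; simp only [Set.mem_ofPred_eq] at *
        rw [(show Odd q from hodd.pow).neg_pow, ha] }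
  have hA : ∀ y, y ∈ A ↔ y ^ q = y := fun y => Iff.rfl
  have hA' : ∀ y, y ∈ A ↔ y = 0 ∨ y ^ (q - 1) = 1 := by
    intro y
    rw [hA]
    by_cases hy : y = 0
    · simp [hy, show q ≠ 0 by omega]
    · simp only [hy, false_or]
      rw [show q = (q - 1) + 1 by omega, pow_succ, Nat.add_sub_cancel]
      exact mul_eq_right₀ hy
  have hAcard : Fintype.card A = q := by
    have hprim : IsPrimitiveRoot ((g : F) ^ (q + 1)) (q - 1) :=
      hgp.pow (Nat.mul_pos (by omega) (by omega)) (mul_comm _ _)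
    have := hprim.card_nthRootsFinset
    rw [Fintype.card_subtype]
    have hs : (Finset.univ.filter (fun x : F => x ∈ A)) =
        insert 0 (nthRootsFinset (q - 1) (1 : F)) := by
      ext y
      simp only [Finset.mem_filter, Finset.mem_univ, true_and, Finset.mem_insert]
      rw [hA', mem_nthRootsFinset (by omega)]
    rw [hs, Finset.card_insert_of_notMem, this]
    · omega
    · rw [mem_nthRootsFinset (by omega), zero_pow (by omega)]; exact zero_ne_one
  -- orthogonality
  let P : F → Prop := fun x => ∀ y ∈ A, eChar p F (x * y) = 1
  have horth : ∀ x : F, ∑ y : A, eChar p F (x * y) = if P x then (q : ℂ) else 0 := by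
    intro x
    let ξ : AddChar A ℂ := (AddChar.mulShift (eChar p F) x).compAddMonoidHom A.subtype
    have hξ : ∀ y : A, ξ y = eChar p F (x * y) := fun y => by
      simp [ξ, AddChar.mulShift_apply]
    have := AddChar.sum_eq_ite ξ
    simp_rw [hξ] at this
    rw [this]
    have hiff : ξ = 0 ↔ P x := by
      constructor
      · intro h y hy
        have := DFunLike.congr_fun h ⟨y, hy⟩
        rw [hξ] at this; simpa using this
      · intro h; ext y; rw [hξ]; exact h y y.2
    simp only [hiff, hAcard]
  have hPcard : (Finset.univ.filter P).card = q := by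
    have e1 : ∑ x : F, ∑ y : A, eChar p F (x * y) = (Finset.univ.filter P).card * q := by
      simp_rw [horth]
      rw [← Finset.sum_filter, Finset.sum_const, nsmul_eq_mul]
    have e2 : ∑ x : F, ∑ y : A, eChar p F (x * y) = q * q := by
      rw [Finset.sum_comm]
      have : ∀ y : A, ∑ x : F, eChar p F (x * y) = if y = 0 then (q * q : ℂ) else 0 := by
        intro y
        rw [AddChar.sum_mulShift _ (eChar_prim p F)]
        simp [hcq]
      simp_rw [this]; simp
    have hq0 : (q : ℂ) ≠ 0 := by exact_mod_cast (by omega : q ≠ 0)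
    have e3 := mul_right_cancel₀ hq0 (e1.symm.trans e2)
    exact_mod_cast e3
  -- delta
  let δ : F := (g : F) ^ (2 * t + 1)
  have hδ0 : δ ≠ 0 := pow_ne_zero _ g.ne_zero
  have hδ : δ ^ q = -δ := by
    have hh : ((g : F) ^ (2 * t * (q + 1))) = -1 := by
      have h3 : ((g : F) ^ (2 * t * (q + 1))) ^ 2 = 1 := by
        rw [← pow_mul, ← hgp.pow_eq_one]; congr 1; rw [ht]; simp; ring
      rcases eq_one_or_neg_one_of_sq' h3 with h | h
      · have := hgp.dvd_of_pow_eq_one _ h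
        have := Nat.le_of_dvd (by rw [ht] at *; have : 0 < t := by omega
                                  positivity) this
        rw [ht] at this
        simp at this
        nlinarith
      · exact h
    have : δ ^ q = δ * (g : F) ^ (2 * t * (q + 1)) := by
      simp only [δ]; rw [← pow_mul, ← pow_add]; congr 1; rw [ht]; ring
    rw [this, hh]; ring
  have hηδ : η δ = -1 := by
    simp only [δ]; rw [map_pow, hηg]
    exact Odd.neg_one_pow ⟨t, rfl⟩
  have hηA : ∀ y ∈ A, y ≠ 0 → η y = 1 := by
    intro y hy h0
    obtain ⟨j, hj⟩ := (Submonoid.mem_powers_iff (Units.mk0 y h0) g).1 (by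
      have := hg (Units.mk0 y h0)
      rwa [← mem_powers_iff_mem_zpowers] at this)
    have hxj : y = (g : F) ^ j := by
      have := congrArg Units.val hj; simpa using this.symm
    have h3 : y ^ (q - 1) = 1 := ((hA' y).1 hy).resolve_left h0
    rw [hxj, ← pow_mul] at h3
    have h4 := hgp.dvd_of_pow_eq_one _ h3
    rw [mul_comm j, Nat.mul_dvd_mul_iff_left (by omega)] at h4
    obtain ⟨c, hc⟩ := h4
    rw [hxj, map_pow, hηg, hc, ht]
    exact Even.neg_one_pow ⟨(2 * t + 1) * c, by ring⟩
  have hPδ : ∀ y ∈ A, P (δ * y) := by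
    intro y hy z hz
    have h3 : (δ * y * z) ^ q = -(δ * y * z) := by
      rw [mul_pow, mul_pow, hδ, (hA y).1 hy, (hA z).1 hz]; ring
    have h4 : eChar p F (δ * y * z) = eChar p F (-(δ * y * z)) := by
      rw [← h3, hq, eChar_pow_iter]
    have h5 : eChar p F (δ * y * z) ^ 2 = 1 := by
      rw [sq]; nth_rewrite 2 [h4]; rw [← AddChar.map_add_eq_mul]; simp
    have h6 : eChar p F (δ * y * z) ^ p = 1 := by
      rw [← AddChar.map_nsmul_eq_pow]; simp
    obtain ⟨r, hr⟩ := hodd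
    generalize eChar p F (δ * y * z) = w at h5 h6 ⊢
    rw [hr, pow_succ, pow_mul, h5, one_pow, one_mul] at h6
    exact h6
  have hPeq : Finset.univ.filter P = (Finset.univ : Finset A).image (fun y : A => δ * (y : F)) := by
    symm
    apply Finset.eq_of_subset_of_card_le
    · intro x hx
      obtain ⟨y, -, rfl⟩ := Finset.mem_image.1 hx
      exact Finset.mem_filter.2 ⟨Finset.mem_univ _, hPδ y y.2⟩
    · rw [hPcard, Finset.card_image_of_injective, Finset.card_univ, hAcard]
      intro a b hab
      exact Subtype.ext (mul_left_cancel₀ hδ0 hab)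
  have hL : ∑ x : F, η x * ∑ y : A, eChar p F (x * y) = -(q : ℂ) * (q - 1) := by
    simp_rw [horth, mul_ite, mul_zero]
    rw [← Finset.sum_filter, hPeq, Finset.sum_image (by
      intro a _ b _ hab
      exact Subtype.ext (mul_left_cancel₀ hδ0 hab))]
    have : ∀ y : A, η (δ * y) * (q : ℂ) = if y = 0 then 0 else -(q : ℂ) := by
      intro y
      split_ifs with h
      · rw [h]; simp [MulChar.map_zero]
      · rw [map_mul, hηδ, hηA y y.2 (by simpa using h)]; ring
    simp_rw [this]
    rw [Finset.sum_ite, Finset.sum_const_zero, zero_add, Finset.sum_const]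
    rw [Finset.filter_not, Finset.filter_eq', if_pos (Finset.mem_univ _),
      ← Finset.erase_eq, Finset.card_erase_of_mem (Finset.mem_univ _), Finset.card_univ, hAcard]
    rw [nsmul_eq_mul, Nat.cast_sub hq1.le]; push_cast; ring
  have hR : ∑ x : F, η x * ∑ y : A, eChar p F (x * y) = (q - 1) * gaussSum η (eChar p F) := by
    simp_rw [Finset.mul_sum]
    rw [Finset.sum_comm]
    have : ∀ y : A, ∑ x : F, η x * eChar p F (x * y) =
        if y = 0 then 0 else gaussSum η (eChar p F) := by
      intro y
      split_ifs with h
      · rw [h]; simp [MulChar.sum_eq_zero_of_ne_one h1]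
      · have h0 : (y : F) ≠ 0 := by simpa using h
        have h3 := gaussSum_mulShift η (eChar p F) (Units.mk0 (y : F) h0)
        rw [Units.val_mk0, hηA y y.2 h0, one_mul] at h3
        rw [← h3, gaussSum]
        simp_rw [AddChar.mulShift_apply, mul_comm]
    simp_rw [this]
    rw [Finset.sum_ite, Finset.sum_const_zero, zero_add, Finset.sum_const]
    rw [Finset.filter_not, Finset.filter_eq', if_pos (Finset.mem_univ _),
      ← Finset.erase_eq, Finset.card_erase_of_mem (Finset.mem_univ _), Finset.card_univ, hAcard]
    rw [nsmul_eq_mul, Nat.cast_sub hq1.le]; push_cast; ring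
  have hq10 : (q : ℂ) - 1 ≠ 0 := by
    rw [sub_ne_zero]; exact_mod_cast hq1.ne'
  apply mul_left_cancel₀ hq10
  rw [← hR, hL]; rw [hq]; push_cast; ring
end

/-- `x` is algebraic with known Galois conjugates `X a` under automorphisms acting by `a`-th powers
on `n`-th roots of unity -/
def GoodConj (n : ℕ) (x : ℂ) (X : ℕ → ℂ) : Prop :=
  ∃ y : algebraicClosure ℚ ℂ, (y : ℂ) = x ∧
    ∀ (σ : algebraicClosure ℚ ℂ ≃ₐ[ℚ] algebraicClosure ℚ ℂ) (a : ℕ),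
      (∀ z : algebraicClosure ℚ ℂ, z ^ n = 1 → σ z = z ^ a) → ((σ y : algebraicClosure ℚ ℂ) : ℂ) = X a

theorem GoodConj.add {n : ℕ} {x x' : ℂ} {X X' : ℕ → ℂ} (h : GoodConj n x X) (h' : GoodConj n x' X') :
    GoodConj n (x + x') (fun a => X a + X' a) := by
  obtain ⟨y, hy, h⟩ := h
  obtain ⟨y', hy', h'⟩ := h'
  refine ⟨y + y', by simp [hy, hy'], fun σ a ha => ?_⟩
  show _ = X a + X' a
  rw [map_add, ← h σ a ha, ← h' σ a ha]; rfl

theorem GoodConj.sub {n : ℕ} {x x' : ℂ} {X X' : ℕ → ℂ} (h : GoodConj n x X) (h' : GoodConj n x' X') :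
    GoodConj n (x - x') (fun a => X a - X' a) := by
  obtain ⟨y, hy, h⟩ := h
  obtain ⟨y', hy', h'⟩ := h'
  refine ⟨y - y', by simp [hy, hy'], fun σ a ha => ?_⟩
  show _ = X a - X' a
  rw [map_sub, ← h σ a ha, ← h' σ a ha]; rfl

theorem GoodConj.mul {n : ℕ} {x x' : ℂ} {X X' : ℕ → ℂ} (h : GoodConj n x X) (h' : GoodConj n x' X') :
    GoodConj n (x * x') (fun a => X a * X' a) := by
  obtain ⟨y, hy, h⟩ := h
  obtain ⟨y', hy', h'⟩ := h'
  refine ⟨y * y', by simp [hy, hy'], fun σ a ha => ?_⟩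
  show _ = X a * X' a
  rw [map_mul, ← h σ a ha, ← h' σ a ha]; rfl

theorem GoodConj.int (n : ℕ) (c : ℤ) : GoodConj n (c : ℂ) (fun _ => (c : ℂ)) :=
  ⟨(c : algebraicClosure ℚ ℂ), by simp, fun σ a _ => by rw [map_intCast]; simp⟩

theorem GoodConj.root {n : ℕ} (hn : 0 < n) {z : ℂ} (hz : z ^ n = 1) :
    GoodConj n z (fun a => z ^ a) := by
  have hmem : z ∈ algebraicClosure ℚ ℂ := by
    rw [mem_algebraicClosure_iff]
    exact (IsIntegral.of_pow hn (by rw [hz]; exact isIntegral_one)).isAlgebraic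
  refine ⟨⟨z, hmem⟩, rfl, fun σ a ha => ?_⟩
  rw [ha _ (Subtype.ext (by simpa using hz))]; rfl

theorem GoodConj.sum {n : ℕ} {ι : Type} (s : Finset ι) {x : ι → ℂ} {X : ι → ℕ → ℂ}
    (h : ∀ i ∈ s, GoodConj n (x i) (X i)) :
    GoodConj n (∑ i ∈ s, x i) (fun a => ∑ i ∈ s, X i a) := by
  classical
  induction s using Finset.induction_on with
  | empty => simpa using GoodConj.int n 0
  | insert i s hi ih =>
    simp only [Finset.sum_insert hi]
    exact (h i (Finset.mem_insert_self _ _)).add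
      (ih fun j hj => h j (Finset.mem_insert_of_mem hj))

theorem GoodConj.rational {n : ℕ} (hn : 0 < n) {x : ℂ} {X : ℕ → ℂ} (h : GoodConj n x X)
    (hX : ∀ a : ℕ, a.Coprime n → X a = x) : ∃ r : ℚ, x = r := by
  obtain ⟨y, hy, h⟩ := h
  have hfix : ∀ σ : algebraicClosure ℚ ℂ ≃ₐ[ℚ] algebraicClosure ℚ ℂ, σ y = y := by
    intro σ
    have hζ0 := Complex.isPrimitiveRoot_exp n hn.ne'
    set ζ0 := cexp (2 * Real.pi * I / n)
    have hmem : ζ0 ∈ algebraicClosure ℚ ℂ := by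
      rw [mem_algebraicClosure_iff]
      exact (IsIntegral.of_pow hn (by rw [hζ0.pow_eq_one]; exact isIntegral_one)).isAlgebraic
    have hζ : IsPrimitiveRoot (⟨ζ0, hmem⟩ : algebraicClosure ℚ ℂ) n :=
      IsPrimitiveRoot.of_map_of_injective (f := (algebraicClosure ℚ ℂ).val) (by exact hζ0)
        Subtype.val_injective
    set ζ : algebraicClosure ℚ ℂ := ⟨ζ0, hmem⟩
    have hσζ : IsPrimitiveRoot (σ ζ) n := hζ.map_of_injective σ.injective
    haveI : NeZero n := ⟨hn.ne'⟩
    obtain ⟨a, ha, hζa⟩ := hζ.eq_pow_of_pow_eq_one hσζ.pow_eq_one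
    have hcop : a.Coprime n := by
      rw [← hζa] at hσζ
      exact (hζ.pow_iff_coprime hn a).1 hσζ
    have hact : ∀ z : algebraicClosure ℚ ℂ, z ^ n = 1 → σ z = z ^ a := by
      intro z hz
      obtain ⟨i, -, rfl⟩ := hζ.eq_pow_of_pow_eq_one hz
      rw [map_pow, ← hζa, ← pow_mul, ← pow_mul, mul_comm]
    apply Subtype.ext
    rw [h σ a hact, hX a hcop, hy]
  have hac : IsAlgClosure ℚ (algebraicClosure ℚ ℂ) := algebraicClosure.isAlgClosure ℚ ℂ
  have : Normal ℚ (algebraicClosure ℚ ℂ) := IsAlgClosure.normal ℚ (algebraicClosure ℚ ℂ)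
  haveI : IsGalois ℚ (algebraicClosure ℚ ℂ) := {}
  have := (InfiniteGalois.mem_bot_iff_fixed y).2 hfix
  obtain ⟨r, hr⟩ := IntermediateField.mem_bot.1 this
  refine ⟨r, ?_⟩
  rw [← hy, ← hr]; rfl

section
variable (p : ℕ) [Fact p.Prime] (F : Type) [Field F] [Fintype F] [Algebra (ZMod p) F]

theorem gauss_good (n m : ℕ) (hn : n = m * p) (hm : 0 < m) (ψ : MulChar F ℂ) (hψ : ψ ^ m = 1)
    (htriv : ∀ c : ZMod p, c ≠ 0 → ψ (algebraMap (ZMod p) F c) = 1) :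
    ∃ X : ℕ → ℂ, GoodConj n (gaussSum ψ (eChar p F)) X ∧
      ∀ a : ℕ, a.Coprime n → X a = gaussSum (ψ ^ a) (eChar p F) := by
  classical
  have hp : p.Prime := Fact.out
  have hn0 : 0 < n := by rw [hn]; exact Nat.mul_pos hm hp.pos
  have e1 : ∀ χ : MulChar F ℂ, gaussSum χ (eChar p F) =
      ∑ x ∈ Finset.univ.filter (fun x : F => x ≠ 0), χ x * eChar p F x := by
    intro χ
    rw [gaussSum, Finset.sum_filter]
    refine Finset.sum_congr rfl fun x _ => ?_
    by_cases hx : x = 0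
    · simp [hx, MulChar.map_zero]
    · simp [hx]
  have hψ1 : ∀ x : F, x ≠ 0 → ψ x ^ m = 1 := by
    intro x hx
    have := MulChar.pow_apply_coe ψ m (Units.mk0 x hx)
    rw [hψ, MulChar.one_apply_coe] at this
    simpa using this.symm
  have he1 : ∀ x : F, eChar p F x ^ p = 1 := by
    intro x
    rw [eChar_apply, ← pow_mul, mul_comm, pow_mul, zetaP_pow, one_pow]
  refine ⟨fun a => ∑ x ∈ Finset.univ.filter (fun x : F => x ≠ 0), ψ x ^ a * eChar p F x ^ a, ?_, ?_⟩
  · rw [e1]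
    exact GoodConj.sum _ fun x hx => (GoodConj.root hn0 (z := ψ x) (by
      rw [hn, pow_mul, hψ1 x (Finset.mem_filter.1 hx).2, one_pow])).mul
      (GoodConj.root hn0 (z := eChar p F x) (by rw [hn, mul_comm, pow_mul, he1, one_pow]))
  · intro a ha
    have hpa : (a : ZMod p) ≠ 0 := by
      rw [Ne, ZMod.natCast_eq_zero_iff]
      intro h
      have h1 : p ∣ Nat.gcd a n := Nat.dvd_gcd h (by rw [hn]; exact dvd_mul_left _ _)
      rw [ha] at h1
      exact hp.one_lt.ne' (Nat.dvd_one.1 h1)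
    have haF : (algebraMap (ZMod p) F (a : ZMod p)) ≠ 0 := by
      rwa [Ne, map_eq_zero_iff _ (algebraMap (ZMod p) F).injective]
    have h3 := gaussSum_mulShift (ψ ^ a) (eChar p F) (Units.mk0 _ haF)
    rw [MulChar.pow_apply_coe, Units.val_mk0, htriv _ hpa, one_pow, one_mul] at h3
    rw [← h3, gaussSum]
    beta_reduce
    rw [Finset.sum_filter]
    refine Finset.sum_congr rfl fun x _ => ?_
    by_cases hx : x = 0
    · simp [hx, MulChar.map_zero]
    · rw [if_pos hx, AddChar.mulShift_apply, map_natCast, ← nsmul_eq_mul,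
        AddChar.map_nsmul_eq_pow]
      have := MulChar.pow_apply_coe ψ a (Units.mk0 x hx)
      rw [Units.val_mk0] at this
      rw [this]
end

theorem tau_good (n d : ℕ) [NeZero d] (hn : 0 < n) (hd : d ∣ n) :
    ∃ X : ℕ → ℂ, GoodConj n (gaussSum (jchar d) ZMod.stdAddChar) X ∧
      ∀ a : ℕ, a.Coprime n → X a = (jacobiSym a d : ℂ) * gaussSum (jchar d) ZMod.stdAddChar := by
  have hstd : ∀ k : ZMod d, (ZMod.stdAddChar k : ℂ) ^ d = 1 := by
    intro k
    rw [← AddChar.map_nsmul_eq_pow]; simp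
  refine ⟨fun a => ∑ k, jchar d k * ZMod.stdAddChar k ^ a, ?_, ?_⟩
  · rw [gaussSum]
    refine GoodConj.sum _ fun k _ => GoodConj.mul (X := fun _ => jchar d k)
      ?_ (GoodConj.root hn (by obtain ⟨t, rfl⟩ := hd; rw [pow_mul, hstd, one_pow]))
    rw [jchar_val]
    exact GoodConj.int n _
  · intro a ha
    beta_reduce
    have hu : IsUnit (a : ZMod d) :=
      (ZMod.isUnit_iff_coprime _ _).2 (Nat.Coprime.coprime_dvd_right hd ha)
    obtain ⟨u, hu⟩ := hu
    have h3 := gaussSum_mulShift (jchar d) ZMod.stdAddChar u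
    have h4 : (jchar d u : ℂ) = (jacobiSym a d : ℂ) := by rw [hu, jchar_nat]
    have h5 : (jacobiSym a d : ℂ) * (jacobiSym a d : ℂ) = 1 := by
      have := jacobiSym.sq_one (a := a) (b := d) (by
        exact_mod_cast Nat.Coprime.coprime_dvd_right hd ha)
      rw [← sq]; exact_mod_cast this
    have h6 : ∑ k, jchar d k * ZMod.stdAddChar k ^ a =
        gaussSum (jchar d) (ZMod.stdAddChar.mulShift u) := by
      rw [gaussSum]
      refine Finset.sum_congr rfl fun k _ => ?_
      rw [AddChar.mulShift_apply, hu, ← nsmul_eq_mul, AddChar.map_nsmul_eq_pow]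
    rw [h6, ← h3, h4, ← mul_assoc, h5, one_mul]

theorem order_two_mul (p m : ℕ) (hp : p % 2 = 1) (hm : m % 2 = 1) :
    orderOf (p : ZMod (2 * m)) = orderOf (p : ZMod m) := by
  refine orderOf_eq_orderOf_iff.2 fun n => ?_
  have e : ∀ K : ℕ, ((p : ZMod K) ^ n = 1) ↔ p ^ n ≡ 1 [MOD K] := by
    intro K
    rw [← ZMod.natCast_eq_natCast_iff]; push_cast; rfl
  rw [e, e, ← Nat.modEq_and_modEq_iff_modEq_mul (by
    rw [Nat.coprime_two_left]; exact Nat.odd_iff.2 hm)]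
  have : p ^ n ≡ 1 [MOD 2] := by
    have h1 : p ≡ 1 [MOD 2] := hp
    simpa using h1.pow n
  tauto

theorem tot_facts (l1 l2 r1 r2 : ℕ) (h1 : l1.Prime) (h2 : l2.Prime) (hne : l1 ≠ l2)
    (h12 : l1 % 4 = 3) (h22 : l2 % 4 = 1) (hr1 : 1 ≤ r1) (hr2 : 1 ≤ r2) :
    Nat.totient (2 * (l1 ^ r1 * l2 ^ r2)) = Nat.totient (l1 ^ r1 * l2 ^ r2) ∧
    8 ∣ Nat.totient (l1 ^ r1 * l2 ^ r2) ∧ 0 < Nat.totient (l1 ^ r1 * l2 ^ r2) := by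
  have hodd : (l1 ^ r1 * l2 ^ r2) % 2 = 1 := by
    apply Nat.odd_iff.1
    exact (Odd.pow (Nat.odd_iff.2 (by omega))).mul (Odd.pow (Nat.odd_iff.2 (by omega)))
  refine ⟨?_, ?_, ?_⟩
  · rw [Nat.totient_mul (by rw [Nat.coprime_two_left]; exact Nat.odd_iff.2 hodd)]; simp
  · rw [Nat.totient_mul (((Nat.coprime_primes h1 h2).2 hne).pow _ _),
      Nat.totient_prime_pow h1 (by omega), Nat.totient_prime_pow h2 (by omega)]
    have e1 : 2 ∣ l1 - 1 := by omega
    have e2 : 4 ∣ l2 - 1 := by omega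
    exact mul_dvd_mul (a := 2) (c := 4) (e1.mul_left _) (e2.mul_left _)
  · exact Nat.totient_pos.2 (Nat.pos_of_ne_zero (by
      intro h; rw [h] at hodd; omega))

section
variable (p : ℕ) [Fact p.Prime] (F : Type) [Field F] [Fintype F] [Algebra (ZMod p) F]

theorem psi_triv (m : ℕ) (hm : m.Coprime (p - 1)) (ψ : MulChar F ℂ) (hψ : ψ ^ m = 1)
    (c : ZMod p) (hc : c ≠ 0) : ψ (algebraMap (ZMod p) F c) = 1 := by
  have hcF : algebraMap (ZMod p) F c ≠ 0 := by
    rwa [Ne, map_eq_zero_iff _ (algebraMap (ZMod p) F).injective]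
  have h1 : ψ (algebraMap (ZMod p) F c) ^ m = 1 := by
    have := MulChar.pow_apply_coe ψ m (Units.mk0 _ hcF)
    rw [hψ, MulChar.one_apply_coe] at this
    simpa using this.symm
  have h2 : ψ (algebraMap (ZMod p) F c) ^ (p - 1) = 1 := by
    rw [← map_pow, ← map_pow, ZMod.pow_card_sub_one_eq_one hc, map_one, map_one]
  have h3 := Nat.dvd_gcd (orderOf_dvd_of_pow_eq_one h1) (orderOf_dvd_of_pow_eq_one h2)
  rw [hm] at h3
  exact orderOf_eq_one_iff.1 (Nat.dvd_one.1 h3)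

theorem gauss_pow_pi (ψ : MulChar F ℂ) (i : ℕ) :
    gaussSum (ψ ^ (p ^ i)) (eChar p F) = gaussSum ψ (eChar p F) := by
  induction i with
  | zero => simp
  | succ i ih => rw [pow_succ, pow_mul, gaussSum_pow_p, ih]

theorem psi_pow_congr (m : ℕ) (ψ : MulChar F ℂ) (hψ : ψ ^ m = 1) (a b : ℤ)
    (h : (a : ZMod m) = b) : ψ ^ a = ψ ^ b := by
  obtain ⟨t, ht⟩ := (ZMod.intCast_eq_intCast_iff_dvd_sub _ _ _).1 h
  have : b = a + m * t := by linarith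
  rw [this, zpow_add, zpow_mul, zpow_natCast, hψ, one_zpow, mul_one]

theorem gauss_conj (m d f : ℕ) [NeZero m] [NeZero d] (hd : d ∣ m) (hd4 : d % 4 = 3)
    (hJ : jacobiSym p d = 1) (hcop : p.Coprime m) (hord : orderOf (p : ZMod m) = f)
    (hf : 2 * f = Nat.totient m) (hex : ∃ a : ℤ, IsCoprime a (m : ℤ) ∧ jacobiSym a d = -1)
    (ψ : MulChar F ℂ) (hψ : ψ ^ m = 1) (a : ℕ) (ha : a.Coprime m) :
    (jacobiSym a d = 1 → gaussSum (ψ ^ a) (eChar p F) = gaussSum ψ (eChar p F)) ∧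
    (jacobiSym a d = -1 → gaussSum (ψ ^ a) (eChar p F) = gaussSum ψ⁻¹ (eChar p F)) := by
  have haz : IsCoprime (a : ℤ) (m : ℤ) := Nat.isCoprime_iff_coprime.2 ha
  constructor
  · intro h
    obtain ⟨i, -, hi⟩ := ker_pow m d p f hd hJ hcop hord hf hex a haz h
    have := psi_pow_congr F m ψ hψ a ((p ^ i : ℕ) : ℤ) (by rw [hi]; push_cast; rfl)
    rw [zpow_natCast, zpow_natCast] at this
    rw [this, gauss_pow_pi]
  · intro h
    have hJn : jacobiSym (-(a : ℤ)) d = 1 := by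
      rw [jacobiSym.neg _ (Nat.odd_iff.2 (by omega)), h, ZMod.χ₄_nat_three_mod_four hd4]; norm_num
    obtain ⟨i, -, hi⟩ := ker_pow m d p f hd hJ hcop hord hf hex (-(a : ℤ)) haz.neg_left hJn
    have := psi_pow_congr F m ψ hψ (-(a : ℤ)) ((p ^ i : ℕ) : ℤ) (by rw [hi]; push_cast; rfl)
    rw [zpow_natCast, zpow_neg, zpow_natCast] at this
    have h2 : ψ ^ a = ψ⁻¹ ^ (p ^ i) := by rw [inv_pow, ← this, inv_inv]
    rw [h2, gauss_pow_pi]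

theorem gauss_mul_inv (f : ℕ) (hcard : Fintype.card F = p ^ f) (ψ : MulChar F ℂ) (h1 : ψ ≠ 1)
    (hneg : ψ (-1) = 1) :
    gaussSum ψ (eChar p F) * gaussSum ψ⁻¹ (eChar p F) = (p : ℂ) ^ f := by
  have h := gaussSum_mul_gaussSum_eq_card h1 (eChar_prim p F)
  have h2 := gaussSum_mulShift ψ⁻¹ (eChar p F) (-1 : Fˣ)
  have h3 : ψ⁻¹ (((-1 : Fˣ)) : F) = 1 := by
    rw [MulChar.inv_apply']; simp [hneg]
  rw [h3, one_mul] at h2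
  have h4 : (eChar p F)⁻¹ = (eChar p F).mulShift (((-1 : Fˣ)) : F) := by
    ext x; rw [AddChar.inv_apply, AddChar.mulShift_apply]; simp
  rw [← h2, ← h4, h, hcard]; push_cast; rfl
end

theorem val_int_dvd (p : ℕ) (hp : p.Prime) (V : ValuationSubring ℂ)
    (hint : ∀ x : ℂ, IsIntegral ℤ x → x ∈ V) (hpV : V.valuation (p : ℂ) < 1)
    (r : ℤ) (k : ℕ) (h : V.valuation (r : ℂ) ≤ V.valuation (p : ℂ) ^ k) : (p : ℤ) ^ k ∣ r := by
  rcases eq_or_ne r 0 with rfl | hr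
  · exact dvd_zero _
  have hfin : FiniteMultiplicity (p : ℤ) r :=
    Int.finiteMultiplicity_iff.2 ⟨by simpa using hp.ne_one, hr⟩
  obtain ⟨u, hu, hpu⟩ := hfin.exists_eq_pow_mul_and_not_dvd
  set j := multiplicity (p : ℤ) r
  have hle : ∀ z : ℤ, V.valuation (z : ℂ) ≤ 1 := fun z =>
    (V.valuation_le_one_iff _).2 (hint _ (by
      have := isIntegral_algebraMap (R := ℤ) (A := ℂ) (x := z)
      simpa using this))
  have hvu : V.valuation (u : ℂ) = 1 := by
    refine le_antisymm (hle u) ?_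
    by_contra hlt
    push Not at hlt
    have hco : IsCoprime (p : ℤ) u := by
      rw [Int.isCoprime_iff_gcd_eq_one, Int.gcd_comm]
      exact (Int.isCoprime_iff_gcd_eq_one.1
        (((Nat.prime_iff_prime_int.1 hp).irreducible.coprime_iff_not_dvd.2 hpu).symm))
    obtain ⟨x, y, hxy⟩ := hco
    have h1 : V.valuation (((x * p + y * u : ℤ)) : ℂ) < 1 := by
      push_cast
      refine lt_of_le_of_lt (V.valuation.map_add _ _) (max_lt ?_ ?_)
      · rw [map_mul]
        exact lt_of_le_of_lt (mul_le_mul' (hle x) le_rfl) (by simpa using hpV)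
      · rw [map_mul]
        exact lt_of_le_of_lt (mul_le_mul' (hle y) le_rfl) (by simpa using hlt)
    rw [hxy] at h1
    simp at h1
  have hp0 : V.valuation (p : ℂ) ≠ 0 := by
    rw [Valuation.ne_zero_iff]; exact_mod_cast hp.ne_zero
  have hkj : k ≤ j := by
    by_contra hlt
    push Not at hlt
    rw [hu] at h
    push_cast at h
    rw [map_mul, map_pow, hvu, mul_one] at h
    exact absurd h (not_le.2 (pow_lt_pow_right_of_lt_one₀ (zero_lt_iff.2 hp0) hpV hlt))
  rw [hu]
  exact Dvd.dvd.mul_right (pow_dvd_pow _ hkj) _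

theorem core_ab (p f h d : ℕ) (hp : p.Prime) (hfe : Even f) (hhe : Even h) (hd : Squarefree d)
    (hd0 : 0 < d) (V : ValuationSubring ℂ)
    (hint : ∀ x : ℂ, IsIntegral ℤ x → x ∈ V) (hpV : V.valuation (p : ℂ) < 1)
    (g g' : ℂ) (hg : IsIntegral ℤ g) (hg' : IsIntegral ℤ g') (hgg : g * g' = (p : ℂ) ^ f)
    (r s : ℚ) (hr : g + g' = r) (hs : (g' - g) * sqrtNeg d = s)
    (hv : V.valuation g ^ 2 * V.valuation (p : ℂ) ^ h ≤ V.valuation (p : ℂ) ^ f)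
    (hv' : V.valuation g' ^ 2 * V.valuation (p : ℂ) ^ h ≤ V.valuation (p : ℂ) ^ f) :
    ∃ a b : ℤ, 4 * (p : ℤ) ^ h = a ^ 2 + d * b ^ 2 ∧
      g' ^ 2 = (p : ℂ) ^ ((f : ℤ) - h) * (((a : ℂ) + b * sqrtNeg d) / 2) ^ 2 := by
  have hpC : (p : ℂ) ≠ 0 := by exact_mod_cast hp.ne_zero
  have hpQ : (p : ℚ) ≠ 0 := by exact_mod_cast hp.ne_zero
  have hdC : (d : ℂ) ≠ 0 := by exact_mod_cast hd0.ne'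
  have hp0 : V.valuation (p : ℂ) ≠ 0 := by rw [Valuation.ne_zero_iff]; exact hpC
  obtain ⟨f', rfl⟩ := hfe
  obtain ⟨h', rfl⟩ := hhe
  -- r is an integer
  obtain ⟨r0, hr0⟩ : ∃ r0 : ℤ, r = r0 := by
    have h1 : IsIntegral ℤ (algebraMap ℚ ℂ r) := by
      have := hg.add hg'
      rw [hr] at this; simpa using this
    have h2 : IsIntegral ℤ r := (isIntegral_algebraMap_iff (algebraMap ℚ ℂ).injective).1 h1
    obtain ⟨y, hy⟩ := IsIntegrallyClosed.isIntegral_iff.1 h2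
    exact ⟨y, by rw [← hy]; simp⟩
  subst hr0
  have hA : ∃ a : ℤ, (r0 : ℚ) = a * (p : ℚ) ^ ((f' : ℤ) - h') := by
    rcases le_or_gt f' h' with hle | hlt
    · refine ⟨r0 * p ^ (h' - f'), ?_⟩
      push_cast
      rw [mul_assoc, ← zpow_natCast, ← zpow_add₀ hpQ, Nat.cast_sub hle]
      simp
    · have key : ∀ x : ℂ, V.valuation x ^ 2 * V.valuation (p : ℂ) ^ (h' + h') ≤
          V.valuation (p : ℂ) ^ (f' + f') → V.valuation x ≤ V.valuation (p : ℂ) ^ (f' - h') := by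
        intro x hx
        have e : f' + f' = (f' - h') * 2 + (h' + h') := by omega
        rw [e, pow_add _ ((f' - h') * 2), pow_mul] at hx
        have h3 := le_of_mul_le_mul_right hx (zero_lt_iff.2 (pow_ne_zero _ hp0))
        exact (pow_le_pow_iff_left₀ zero_le zero_le two_ne_zero).1 h3
      have h4 : V.valuation ((r0 : ℤ) : ℂ) ≤ V.valuation (p : ℂ) ^ (f' - h') := by
        have : ((r0 : ℤ) : ℂ) = g + g' := by rw [hr]; simp
        rw [this]
        exact (V.valuation.map_add _ _).trans (max_le (key g hv) (key g' hv'))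
      obtain ⟨a, ha⟩ := val_int_dvd p hp V hint hpV r0 _ h4
      refine ⟨a, ?_⟩
      rw [ha, ← Nat.cast_sub hlt.le, zpow_natCast]; push_cast; ring
  obtain ⟨a, ha⟩ := hA
  have hK : (p : ℂ) ^ ((f' : ℤ) - h') ≠ 0 := zpow_ne_zero _ hpC
  have hKK : ((p : ℂ) ^ ((f' : ℤ) - h')) ^ 2 * (p : ℂ) ^ (h' + h') = (p : ℂ) ^ (f' + f') := by
    rw [← zpow_natCast, ← zpow_natCast, ← zpow_natCast, ← zpow_mul, ← zpow_add₀ hpC]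
    congr 1; push_cast; ring
  have hKK' : (p : ℂ) ^ (((f' + f' : ℕ) : ℤ) - ((h' + h' : ℕ) : ℤ)) =
      ((p : ℂ) ^ ((f' : ℤ) - h')) ^ 2 := by
    rw [← zpow_natCast, ← zpow_mul]; congr 1; push_cast; ring
  set K : ℂ := (p : ℂ) ^ ((f' : ℤ) - h') with hKdef
  have haC : g + g' = a * K := by
    rw [hr, ha]; push_cast; rfl
  set b : ℚ := -s / (d * (p : ℚ) ^ ((f' : ℤ) - h')) with hb
  have hbC : g' - g = b * sqrtNeg d * K := by
    have h5 : (b : ℂ) = -s / (d * K) := by rw [hb]; push_cast; rfl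
    rw [h5, ← hs]
    have := sqrtNeg_sq d
    field_simp
    rw [mul_comm] at *
    linear_combination (g' - g) * this
  have hsq := sqrtNeg_sq d
  have h6 : (4 * (p : ℂ) ^ (h' + h')) = a ^ 2 + d * (b : ℂ) ^ 2 := by
    have h7 : K ^ 2 * (4 * (p : ℂ) ^ (h' + h')) = K ^ 2 * (a ^ 2 + d * (b : ℂ) ^ 2) := by
      have e1 : (g + g') ^ 2 - (g' - g) ^ 2 = 4 * (g * g') := by ring
      rw [haC, hbC, hgg] at e1
      linear_combination 4 * hKK - e1 - (b : ℂ) ^ 2 * K ^ 2 * hsq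
    exact mul_left_cancel₀ (pow_ne_zero 2 hK) h7
  have h8 : (d : ℚ) * b ^ 2 = ((4 * (p : ℤ) ^ (h' + h') - a ^ 2 : ℤ) : ℚ) := by
    have : (((d : ℚ) * b ^ 2 : ℚ) : ℂ) = (((4 * (p : ℤ) ^ (h' + h') - a ^ 2 : ℤ) : ℚ) : ℂ) := by
      push_cast; linear_combination -h6
    exact_mod_cast this
  obtain ⟨b0, hb0⟩ := rat_int_of_sq d hd b _ h8
  refine ⟨a, b0, ?_, ?_⟩
  · rw [hb0] at h8
    have : (d : ℤ) * b0 ^ 2 = 4 * (p : ℤ) ^ (h' + h') - a ^ 2 := by exact_mod_cast h8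
    linarith
  · have hbb : (b : ℂ) = (b0 : ℂ) := by rw [hb0]; simp
    rw [hKK']
    have h9 : g' = K * ((a + b0 * sqrtNeg d) / 2) := by
      rw [← hbb]; linear_combination (haC + hbC) / 2
    rw [h9]; ring

section
variable (p : ℕ) [Fact p.Prime] (F : Type) [Field F] [Fintype F] [Algebra (ZMod p) F]

theorem val_bound (m f h : ℕ) (hm : 0 < m) (V : ValuationSubring ℂ)
    (hpV : V.valuation (p : ℂ) < 1) (g g' : ℂ) (hgg : g * g' = (p : ℂ) ^ f) (S : ℕ)
    (hS : 2 * S ≤ m * (f + h)) (hv : V.valuation (p : ℂ) ^ S ≤ V.valuation g' ^ m) :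
    V.valuation g ^ 2 * V.valuation (p : ℂ) ^ h ≤ V.valuation (p : ℂ) ^ f := by
  have hp : p.Prime := Fact.out
  have hp0 : V.valuation (p : ℂ) ≠ 0 := by
    rw [Valuation.ne_zero_iff]; exact_mod_cast hp.ne_zero
  have h1 : V.valuation (p : ℂ) ^ (f + h) ≤ V.valuation g' ^ 2 := by
    refine (pow_le_pow_iff_left₀ zero_le zero_le hm.ne').1 ?_
    calc (V.valuation (p : ℂ) ^ (f + h)) ^ m = V.valuation (p : ℂ) ^ (m * (f + h)) := by
          rw [← pow_mul, mul_comm]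
      _ ≤ V.valuation (p : ℂ) ^ (2 * S) := pow_le_pow_of_le_one zero_le hpV.le hS
      _ = (V.valuation (p : ℂ) ^ S) ^ 2 := by rw [← pow_mul, mul_comm]
      _ ≤ (V.valuation g' ^ m) ^ 2 := pow_le_pow_left₀ zero_le hv 2
      _ = (V.valuation g' ^ 2) ^ m := by rw [← pow_mul, ← pow_mul, mul_comm]
  have h2 : V.valuation g * V.valuation g' = V.valuation (p : ℂ) ^ f := by
    rw [← map_mul, hgg, map_pow]
  refine le_of_mul_le_mul_right ?_ (zero_lt_iff.2 (pow_ne_zero f hp0))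
  calc V.valuation g ^ 2 * V.valuation (p : ℂ) ^ h * V.valuation (p : ℂ) ^ f
      = V.valuation g ^ 2 * V.valuation (p : ℂ) ^ (f + h) := by
        rw [mul_assoc, ← pow_add, add_comm h f]
    _ ≤ V.valuation g ^ 2 * V.valuation g' ^ 2 := mul_le_mul' le_rfl h1
    _ = V.valuation (p : ℂ) ^ f * V.valuation (p : ℂ) ^ f := by
        rw [← mul_pow, h2, sq]

theorem case_three (m d f h : ℕ) [NeZero m] [NeZero d] (hd : d ∣ m) (hd4 : d % 4 = 3)
    (hprim : (jchar d).IsPrimitive) (hsq : Squarefree d)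
    (hJ : jacobiSym p d = 1) (hcop : p.Coprime m) (hord : orderOf (p : ZMod m) = f)
    (hf : 2 * f = Nat.totient m) (hfe : Even f) (hhe : Even h) (hcop1 : m.Coprime (p - 1))
    (hex : ∃ a : ℤ, IsCoprime a (m : ℤ) ∧ jacobiSym a d = -1)
    (hq : 2 < Fintype.card F) (hcard : Fintype.card F = p ^ f)
    (hS : ∀ c : ℕ, c.Coprime m → 2 * (∑ i ∈ Finset.range f, (p ^ i * c) % m) ≤ m * (f + h))
    (ψ : MulChar F ℂ) (hψ : orderOf ψ = m) (hψ1 : ψ ≠ 1) :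
    ∃ a b : ℤ, 4 * (p : ℤ) ^ h = a ^ 2 + d * b ^ 2 ∧
      gaussSum ψ⁻¹ (eChar p F) ^ 2 =
        (p : ℂ) ^ ((f : ℤ) - h) * (((a : ℂ) + b * sqrtNeg d) / 2) ^ 2 := by
  have hp : p.Prime := Fact.out
  have hm0 : 0 < m := Nat.pos_of_ne_zero (NeZero.ne m)
  have hd0 : 0 < d := Nat.pos_of_ne_zero (NeZero.ne d)
  have hψm : ψ ^ m = 1 := by rw [← hψ]; exact pow_orderOf_eq_one ψ
  have hψm' : ψ⁻¹ ^ m = 1 := by rw [inv_pow, hψm, inv_one]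
  have htr := psi_triv p F m hcop1 ψ hψm
  have htr' := psi_triv p F m hcop1 ψ⁻¹ hψm'
  have hneg : ψ (-1) = 1 := by
    have := htr (-1) (neg_ne_zero.2 one_ne_zero)
    simpa using this
  have hgg := gauss_mul_inv p F f hcard ψ hψ1 hneg
  obtain ⟨V, hint, hpV⟩ := exists_val p
  have hn0 : 0 < m * p := Nat.mul_pos hm0 hp.pos
  obtain ⟨X, hX, hXa⟩ := gauss_good p F (m * p) m rfl hm0 ψ hψm htr
  obtain ⟨X', hX', hXa'⟩ := gauss_good p F (m * p) m rfl hm0 ψ⁻¹ hψm' htr'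
  obtain ⟨T, hT, hTa⟩ := tau_good (m * p) d hn0 (hd.mul_right p)
  have hJpm : ∀ a : ℕ, a.Coprime m → jacobiSym a d = 1 ∨ jacobiSym a d = -1 := fun a ha =>
    jacobiSym.eq_one_or_neg_one (by exact_mod_cast Nat.Coprime.coprime_dvd_right hd ha)
  have hX1 : ∀ a : ℕ, a.Coprime m → a.Coprime (m * p) → 
      (jacobiSym a d = 1 ∧ X a = gaussSum ψ (eChar p F) ∧ X' a = gaussSum ψ⁻¹ (eChar p F)) ∨
      (jacobiSym a d = -1 ∧ X a = gaussSum ψ⁻¹ (eChar p F) ∧ X' a = gaussSum ψ (eChar p F)) := by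
    intro a ha han
    have c1 := gauss_conj p F m d f hd hd4 hJ hcop hord hf hex ψ hψm a ha
    have c2 := gauss_conj p F m d f hd hd4 hJ hcop hord hf hex ψ⁻¹ hψm' a ha
    rw [hXa a han, hXa' a han]
    rcases hJpm a ha with h1 | h1
    · exact Or.inl ⟨h1, c1.1 h1, c2.1 h1⟩
    · refine Or.inr ⟨h1, c1.2 h1, ?_⟩
      rw [c2.2 h1, inv_inv]
  obtain ⟨r, hr⟩ := (hX.add hX').rational hn0 (by
    intro a ha
    have ham : a.Coprime m := Nat.Coprime.coprime_mul_right_right ha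
    rcases hX1 a ham ha with ⟨-, e1, e2⟩ | ⟨-, e1, e2⟩
    · beta_reduce; rw [e1, e2]
    · beta_reduce; rw [e1, e2, add_comm])
  obtain ⟨s, hs⟩ := ((hX'.sub hX).mul hT).rational hn0 (by
    intro a ha
    have ham : a.Coprime m := Nat.Coprime.coprime_mul_right_right ha
    beta_reduce
    rw [hTa a ha]
    rcases hX1 a ham ha with ⟨e0, e1, e2⟩ | ⟨e0, e1, e2⟩
    · rw [e1, e2, e0]; push_cast; ring
    · rw [e1, e2, e0]; push_cast; ring)
  have hτ := gaussSum_std_sq (jchar d) hprim (jchar_sq d) (jchar_odd d hd4)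
  have hs' : ∃ s' : ℚ, (gaussSum ψ⁻¹ (eChar p F) - gaussSum ψ (eChar p F)) * sqrtNeg d = s' := by
    rcases sq_eq_sq_iff_eq_or_eq_neg.1 ((sqrtNeg_sq d).trans hτ.symm) with e | e
    · exact ⟨s, by rw [e, hs]⟩
    · exact ⟨-s, by rw [e, mul_neg, hs]; push_cast; rfl⟩
  obtain ⟨s', hs'⟩ := hs'
  obtain ⟨c, -, hc, hvc⟩ := stick_main p F hq f hcard m V hint hpV ψ hψ
  obtain ⟨c', -, hc', hvc'⟩ := stick_main p F hq f hcard m V hint hpV ψ⁻¹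
    (by rw [orderOf_inv, hψ])
  exact core_ab p f h d hp hfe hhe hsq hd0 V hint hpV _ _ (isIntegral_gaussSum p F ψ)
    (isIntegral_gaussSum p F ψ⁻¹) hgg r s' hr hs'
    (val_bound p m f h hm0 V hpV _ _ hgg _ (hS c' hc') hvc')
    (val_bound p m f h hm0 V hpV _ _ (by rw [mul_comm]; exact hgg) _ (hS c hc) hvc)

end

theorem sign_fix (l p h a : ℤ) (k : ℕ) (hl : Prime l) (h1 : a ^ 2 ≡ (2 * p ^ k) ^ 2 [ZMOD l]) :
    a ≡ 2 * p ^ k [ZMOD l] ∨ -a ≡ 2 * p ^ k [ZMOD l] := by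
  have h2 := h1.symm.dvd
  have h3 : a ^ 2 - (2 * p ^ k) ^ 2 = (a - 2 * p ^ k) * (a + 2 * p ^ k) := by ring
  rw [h3] at h2
  rcases hl.dvd_or_dvd h2 with h4 | h4
  · exact Or.inl (Int.modEq_iff_dvd.2 h4).symm
  · right
    refine Int.modEq_iff_dvd.2 ?_
    rwa [sub_neg_eq_add, add_comm]

theorem jac_sum_zero (d : ℕ) [NeZero d] (hd4 : d % 4 = 3) : ∑ k ∈ Finset.range d, jacobiSym k d = 0 := by
  have hj1 : jchar d ≠ 1 := by
    intro h
    have := jchar_odd d hd4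
    rw [h, DirichletCharacter.Odd, MulChar.one_apply (isUnit_one.neg)] at this
    norm_num at this
  have h0 := MulChar.sum_eq_zero_of_ne_one hj1
  have h2 : ((∑ k ∈ Finset.range d, jacobiSym k d : ℤ) : ℂ) =
      ∑ a : ZMod d, jchar d a := by
    push_cast
    refine Finset.sum_bij' (fun k _ => (k : ZMod d)) (fun a _ => a.val) ?_ ?_ ?_ ?_ ?_
    · intro k _; exact Finset.mem_univ _
    · intro a _; exact Finset.mem_range.2 a.val_lt
    · intro k hk; exact ZMod.val_cast_of_lt (Finset.mem_range.1 hk)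
    · intro a _; simp
    · intro k _; rw [jchar_nat]
  rw [h0] at h2
  exact_mod_cast h2

set_option maxHeartbeats 1000000 in
theorem statement9 (p l1 l2 r1 r2 N f : ℕ) (hp : p.Prime)
    (hl1 : l1.Prime) (hl2 : l2.Prime) (hne : l1 ≠ l2)
    (hl1m : l1 % 4 = 3) (hl2m : l2 % 4 = 1)
    (hr1 : 1 ≤ r1) (hr2 : 1 ≤ r2) (hN : N = 2 * (l1 ^ r1 * l2 ^ r2)) (hNp : Nat.gcd N p = 1)
    (hord1 : orderOf (p : ZMod (l1 ^ r1)) = Nat.totient (l1 ^ r1))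
    (hord2 : orderOf (p : ZMod (l2 ^ r2)) = Nat.totient (l2 ^ r2))
    (hf : orderOf (p : ZMod N) = f) (hind : f = Nat.totient N / 2)
    (F : Type) [Field F] [Fintype F] [Algebra (ZMod p) F]
    (hcard : Fintype.card F = p ^ f)
    (χ : MulChar F ℂ) (hχord : orderOf χ = N) :
    (l1 * l2 % 8 = 7 → gaussSumN p χ 1 = -(p : ℂ) ^ ((f : ℤ) / 2)) ∧
    (l1 * l2 % 8 = 3 →
      ∃ a b : ℤ,
        4 * (p : ℤ) ^ classNumSqrtNeg (l1 * l2) = a ^ 2 + (l1 : ℤ) * (l2 : ℤ) * b ^ 2 ∧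
        a ≡ 2 * (p : ℤ) ^ (classNumSqrtNeg (l1 * l2) / 2) [ZMOD (l1 : ℤ)] ∧
        gaussSumN p χ 1 =
          -(p : ℂ) ^ ((f : ℤ) / 2 - (classNumSqrtNeg (l1 * l2) : ℤ)) *
            (((a : ℂ) + (b : ℂ) * sqrtNeg (l1 * l2)) / 2) ^ 2) := by
  haveI : Fact p.Prime := ⟨hp⟩
  have hpC : (p : ℂ) ≠ 0 := by exact_mod_cast hp.ne_zero
  obtain ⟨ht1, ht2, ht3⟩ := tot_facts l1 l2 r1 r2 hl1 hl2 hne hl1m hl2m hr1 hr2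
  have hmodd : (l1 ^ r1 * l2 ^ r2) % 2 = 1 := by
    apply Nat.odd_iff.1
    exact (Odd.pow (Nat.odd_iff.2 (by omega))).mul (Odd.pow (Nat.odd_iff.2 (by omega)))
  have hl12 : l1 ≠ 2 := by omega
  have hl22 : l2 ≠ 2 := by omega
  have hJ1 := jac_neg p l1 r1 hl1 hl12 hr1 hord1
  have hJ2 := jac_neg p l2 r2 hl2 hl22 hr2 hord2
  haveI i1 : NeZero l1 := ⟨hl1.ne_zero⟩
  haveI i2 : NeZero l2 := ⟨hl2.ne_zero⟩
  have hJ : jacobiSym p (l1 * l2) = 1 := by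
    rw [jacobiSym.mul_right, hJ1, hJ2]; norm_num
  have hd4 : (l1 * l2) % 4 = 3 := by rw [Nat.mul_mod, hl1m, hl2m]
  have hcc : l1.Coprime l2 := (Nat.coprime_primes hl1 hl2).2 hne
  have hmM : l1 ^ r1 * l2 ^ r2 = (l1 * l2) * (l1 ^ (r1 - 1) * l2 ^ (r2 - 1)) := by
    obtain ⟨s1, rfl⟩ : ∃ s, r1 = s + 1 := ⟨r1 - 1, by omega⟩
    obtain ⟨s2, rfl⟩ : ∃ s, r2 = s + 1 := ⟨r2 - 1, by omega⟩
    simp only [Nat.add_sub_cancel]; ring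
  have hcd : ∀ x : ℕ, x.Coprime (l1 * l2) → x.Coprime (l1 ^ r1 * l2 ^ r2) := by
    intro x hx
    exact Nat.Coprime.mul_right (Nat.Coprime.pow_right _ (Nat.Coprime.coprime_mul_right_right hx))
      (Nat.Coprime.pow_right _ (Nat.Coprime.coprime_mul_left_right hx))
  have hex : ∃ a : ℤ, IsCoprime a ((l1 ^ r1 * l2 ^ r2 : ℕ) : ℤ) ∧ jacobiSym a (l1 * l2) = -1 := by
    obtain ⟨a, ha1, ha2⟩ := exists_nonres' l1 hl1 hl12 l2 hcc
    have ha3 : jacobiSym a l2 = 1 := by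
      rw [← jacobiSym.one_left l2]
      apply jacobiSym.mod_left'
      exact (ZMod.intCast_eq_intCast_iff a 1 l2).1 (by simpa using ha2)
    have c1 : IsCoprime a (l1 : ℤ) := by
      rw [Int.isCoprime_iff_gcd_eq_one]
      by_contra hc
      rw [jacobiSym.eq_zero_iff_not_coprime.2 hc] at ha1; norm_num at ha1
    have c2 : IsCoprime a (l2 : ℤ) := by
      rw [Int.isCoprime_iff_gcd_eq_one]
      by_contra hc
      rw [jacobiSym.eq_zero_iff_not_coprime.2 hc] at ha3; norm_num at ha3
    refine ⟨a, ?_, ?_⟩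
    · push_cast
      exact (c1.pow_right).mul_right (c2.pow_right)
    · rw [jacobiSym.mul_right, ha1, ha3]; norm_num
  have hp2 : p % 2 = 1 := by
    rcases hp.eq_two_or_odd with h | h
    · exfalso
      have : 2 ∣ Nat.gcd N p := Nat.dvd_gcd (by rw [hN]; exact dvd_mul_right _ _) (by rw [h])
      rw [hNp] at this; omega
    · exact h
  have hpne2 : p ≠ 2 := by omega
  have hpm : p.Coprime (l1 ^ r1 * l2 ^ r2) := by
    have : (2 * (l1 ^ r1 * l2 ^ r2)).Coprime p := by rw [← hN]; exact hNp
    exact (Nat.Coprime.coprime_mul_left this).symm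
  have hone : ∀ l : ℕ, l.Prime → jacobiSym p l = -1 → l.Coprime (p - 1) := by
    intro l hl hJl
    rw [hl.coprime_iff_not_dvd]
    intro hdv
    have : jacobiSym p l = 1 := by
      rw [← jacobiSym.one_left l]
      apply jacobiSym.mod_left'
      have h1 : (1 : ℕ) ≡ p [MOD l] := (Nat.modEq_iff_dvd' hp.one_le).2 hdv
      exact_mod_cast h1.symm
    rw [this] at hJl; norm_num at hJl
  have hcop1 : (l1 ^ r1 * l2 ^ r2).Coprime (p - 1) :=
    Nat.Coprime.mul_left ((hone l1 hl1 hJ1).pow_left _) ((hone l2 hl2 hJ2).pow_left _)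
  have hordm : orderOf (p : ZMod (l1 ^ r1 * l2 ^ r2)) = f := by
    rw [← order_two_mul p _ hp2 hmodd, ← hN, hf]
  rw [hN, ht1] at hind
  have hf2 : 2 * f = Nat.totient (l1 ^ r1 * l2 ^ r2) := by omega
  obtain ⟨t, ht⟩ : ∃ t, f = 4 * t := ⟨f / 4, by omega⟩
  have ht0 : 0 < t := by omega
  have hm1 : 1 < l1 ^ r1 * l2 ^ r2 := by
    have : l1 * l2 ∣ l1 ^ r1 * l2 ^ r2 := ⟨_, hmM⟩
    have h3 := Nat.le_of_dvd (by omega) this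
    have := hl1.two_le; have := hl2.two_le
    nlinarith
  have hdm : l1 * l2 ∣ l1 ^ r1 * l2 ^ r2 := ⟨_, hmM⟩
  generalize l1 ^ r1 * l2 ^ r2 = m at *
  haveI im : NeZero m := ⟨by omega⟩
  have hm2 : m ≠ 2 := by omega
  -- the characters
  set η := χ ^ m with hη
  set ψ := χ ^ (m + 1) with hψd
  have hχN : χ ^ (2 * m) = 1 := by rw [← hN, ← hχord]; exact pow_orderOf_eq_one χ
  have hη2 : η ^ 2 = 1 := by rw [hη, ← pow_mul, mul_comm, hχN]
  have hη1 : η ≠ 1 := by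
    intro h
    have := orderOf_dvd_of_pow_eq_one h
    rw [hχord, hN] at this
    have := Nat.le_of_dvd (by omega) this
    omega
  have hηψ : η * ψ = χ := by
    rw [hη, hψd, ← pow_add, show m + (m + 1) = 2 * m + 1 by ring, pow_succ, hχN, one_mul]
  have hψm : orderOf ψ = m := by
    obtain ⟨j, hj⟩ : ∃ j, m + 1 = 2 * j := ⟨(m + 1) / 2, by omega⟩
    have hg : Nat.gcd (2 * m) (m + 1) = 2 := by
      rw [hj, Nat.gcd_mul_left]
      have : Nat.gcd m j = 1 := by
        have h1 : Nat.gcd m j ∣ m := Nat.gcd_dvd_left _ _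
        have h2 : Nat.gcd m j ∣ m + 1 := by rw [hj]; exact (Nat.gcd_dvd_right m j).mul_left 2
        have h3 := (Nat.dvd_add_right h1).1 h2
        exact Nat.dvd_one.1 h3
      rw [this]
    rw [hψd, orderOf_pow, hχord, hN, hg]; omega
  have hψpm : ψ ^ m = 1 := by
    have := pow_orderOf_eq_one ψ
    rwa [hψm] at this
  have hψ1 : ψ ≠ 1 := by
    intro h; rw [h, orderOf_one] at hψm; omega
  have hψ2 : ψ ^ 2 ≠ 1 := by
    intro h
    have := orderOf_dvd_of_pow_eq_one h
    rw [hψm] at this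
    have := Nat.le_of_dvd (by omega) this
    omega
  have hχ1 : χ ≠ 1 := by
    intro h; rw [h, orderOf_one] at hχord; omega
  have hch : CharP F p := charP_of_injective_algebraMap (algebraMap (ZMod p) F).injective p
  have hrc : ringChar F ≠ 2 := by rw [ringChar.eq F p]; exact hpne2
  have htr := psi_triv p F m hcop1 ψ hψpm
  have hneg : ψ (-1) = 1 := by
    have := htr (-1) (neg_ne_zero.2 one_ne_zero)
    simpa using this
  have h4 : ψ 4 = 1 := by
    have := htr 4 (by
      have h : ((4 : ℕ) : ZMod p) ≠ 0 := by
        rw [Ne, ZMod.natCast_eq_zero_iff]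
        intro h
        have : p ∣ 2 ^ 2 := by simpa using h
        exact hpne2 ((Nat.prime_dvd_prime_iff_eq hp Nat.prime_two).1 (hp.dvd_of_dvd_pow this))
      simpa using h)
    rwa [map_ofNat] at this
  have hgg := gauss_mul_inv p F f hcard ψ hψ1 hneg
  have hg0 : gaussSum ψ (eChar p F) ≠ 0 := by
    intro h; rw [h, zero_mul] at hgg; exact pow_ne_zero f hpC hgg.symm
  have hDH := dav_hasse F hrc η ψ hη1 hη2 hψ2 (by rw [hηψ]; exact hχ1) (eChar p F) hg0
  have hpt : p ^ (2 * t) % 4 = 1 := by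
    rw [pow_mul, Nat.pow_mod]
    have : p ^ 2 % 4 = 1 := by
      have : p % 4 = 1 ∨ p % 4 = 3 := by omega
      rcases this with h | h <;> simp [Nat.pow_mod, h]
    rw [this]; simp
  have hQ := quad_gauss p F hpne2 (2 * t) (by omega) (by rw [hcard, ht]; congr 1; ring) hpt η hη1 hη2
  rw [hηψ, h4, one_mul, hQ] at hDH
  have hconj := gauss_conj p F m (l1 * l2) f hdm hd4 hJ hpm hordm hf2 hex ψ hψpm 2
    (by rw [Nat.coprime_two_left]; exact Nat.odd_iff.2 hmodd)
  have hdodd : Odd (l1 * l2) := Nat.odd_iff.2 (by omega)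
  have hJ2' : jacobiSym (2 : ℕ) (l1 * l2) = ZMod.χ₈ (l1 * l2 : ℕ) := by
    exact_mod_cast jacobiSym.at_two hdodd
  rw [gaussSumN_eq p F χ]
  have hf2t : (f : ℤ) / 2 = ((2 * t : ℕ) : ℤ) := by rw [ht]; push_cast; omega
  constructor
  · intro hd8
    have e : jacobiSym (2 : ℕ) (l1 * l2) = 1 := by
      rw [hJ2', ZMod.χ₈_nat_eq_if_mod_eight]; simp [hd8]; omega
    rw [hconj.1 e] at hDH
    rw [hf2t, zpow_natCast]
    exact mul_left_cancel₀ hg0 hDH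
  · intro hd8
    have e : jacobiSym (2 : ℕ) (l1 * l2) = -1 := by
      rw [hJ2', ZMod.χ₈_nat_eq_if_mod_eight]; simp [hd8]; omega
    rw [hconj.2 e] at hDH
    have hprim := jchar_prim l1 l2 (l1 * l2) hl1 hl2 hl12 hl22 hne rfl
    have hsqf : Squarefree (l1 * l2) := (Nat.squarefree_mul hcc).2
      ⟨hl1.prime.squarefree, hl2.prime.squarefree⟩
    have heven := class_even' l1 l2 p hl1 hl2 hne hd8 hp hJ hJ1
    have hineq := class_ineq' l1 l2 hl1 hl2 hne hd8
    generalize classNumSqrtNeg (l1 * l2) = h at *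
    have hsum0 := jac_sum_zero (l1 * l2) hd4
    have hd1 : 1 < l1 * l2 := by
      have := hl1.two_le; have := hl2.two_le; nlinarith
    have hS : ∀ c : ℕ, c.Coprime m →
        2 * (∑ i ∈ Finset.range f, (p ^ i * c) % m) ≤ m * (f + h) := by
      intro c hc
      have := S_bound m (l1 * l2) p f _ h hmM hd1 hcd hJ hpm hordm hf2 hex hsum0 hineq c hc
      exact_mod_cast this
    have hq : 2 < Fintype.card F := by
      rw [hcard]
      have h3 : 3 ≤ p := by have := hp.two_le; omega
      calc 2 < p := h3
        _ = p ^ 1 := (pow_one p).symm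
        _ ≤ p ^ f := Nat.pow_le_pow_right hp.pos (by omega)
    obtain ⟨a, b, hab, hg'⟩ := case_three p F m (l1 * l2) f h hdm hd4 hprim hsqf hJ hpm hordm hf2
      ⟨2 * t, by omega⟩ heven hcop1 hex hq hcard hS ψ hψm hψ1
    have hG : gaussSum χ (eChar p F) =
        -(p : ℂ) ^ ((f : ℤ) / 2 - (h : ℤ)) * (((a : ℂ) + b * sqrtNeg (l1 * l2)) / 2) ^ 2 := by
      have hmul : (p : ℂ) ^ f * gaussSum χ (eChar p F) =
          -(p : ℂ) ^ (2 * t) * gaussSum ψ⁻¹ (eChar p F) ^ 2 := by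
        rw [← hgg]
        linear_combination gaussSum ψ⁻¹ (eChar p F) * hDH
      have hpf : (p : ℂ) ^ f ≠ 0 := pow_ne_zero _ hpC
      apply mul_left_cancel₀ hpf
      rw [hmul, hg', hf2t]
      have ez : (p : ℂ) ^ (2 * t) * (p : ℂ) ^ ((f : ℤ) - h) =
          (p : ℂ) ^ f * (p : ℂ) ^ (((2 * t : ℕ) : ℤ) - h) := by
        rw [← zpow_natCast, ← zpow_natCast, ← zpow_add₀ hpC, ← zpow_add₀ hpC]
        congr 1; ring
      linear_combination -(((a : ℂ) + b * sqrtNeg (l1 * l2)) / 2) ^ 2 * ez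
    have hab' : 4 * (p : ℤ) ^ h = a ^ 2 + (l1 : ℤ) * (l2 : ℤ) * b ^ 2 := by
      rw [hab]; push_cast; ring
    have hmod : a ^ 2 ≡ (2 * (p : ℤ) ^ (h / 2)) ^ 2 [ZMOD (l1 : ℤ)] := by
      obtain ⟨h', rfl⟩ := heven
      refine Int.modEq_iff_dvd.2 ⟨l2 * b ^ 2, ?_⟩
      have : (h' + h') / 2 = h' := by omega
      rw [this]
      linear_combination hab'
    rcases sign_fix l1 p 0 a (h / 2) (Nat.prime_iff_prime_int.1 hl1) hmod with hs | hs
    · exact ⟨a, b, hab', hs, hG⟩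
    · refine ⟨-a, -b, by rw [hab']; ring, hs, ?_⟩
      rw [hG]; push_cast; ring
end

section
/- Case F1 restriction lemma: Let l be a prime with l ≡ 1 (mod 4), let r ≥ 1, let N = 4 l^r, and suppose p ≡ 3 (mod 4), the multiplicative order of p modulo l^r is φ(l^r), and f = φ(N)/2. Then the restriction of χ to the prime field is trivial: χ(ι(y)) = 1 for every nonzero y ∈ F_p, where ι : F_p → F_q is the canonical field embedding. -/
open Complex Polynomial IntermediateField

theorem statement11 (p l r N f : ℕ) (hp : p.Prime) (hl : l.Prime) (hl4 : l % 4 = 1)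
    (hr : 1 ≤ r) (hN : N = 4 * l ^ r) (hNp : Nat.gcd N p = 1) (hp4 : p % 4 = 3)
    (hord : orderOf (p : ZMod (l ^ r)) = Nat.totient (l ^ r))
    (hf : orderOf (p : ZMod N) = f) (hind : f = Nat.totient N / 2)
    (F : Type) [Field F] [Fintype F] [Algebra (ZMod p) F]
    (hcard : Fintype.card F = p ^ f)
    (χ : MulChar F ℂ) (hχord : orderOf χ = N) :
    ∀ y : ZMod p, y ≠ 0 → χ (algebraMap (ZMod p) F y) = 1 := by
  intro y hy
  haveI : Fact p.Prime := ⟨hp⟩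
  have hp3 : 3 ≤ p := by omega
  have hl5 : 5 ≤ l := by
    have := hl.two_le
    omega
  have hcop : Nat.Coprime 4 (l ^ r) := by
    apply Nat.Coprime.pow_right
    have h2 : Nat.Coprime 2 l := by
      rw [Nat.coprime_two_left]
      exact Nat.odd_iff.mpr (by omega)
    exact Nat.Coprime.pow_left 2 h2
  have htot : Nat.totient (l ^ r) = l ^ (r - 1) * (l - 1) := Nat.totient_prime_pow hl (by omega)
  have h4t : Nat.totient 4 = 2 := by decide
  have hfv : f = l ^ (r - 1) * (l - 1) := by
    rw [hind, hN, Nat.totient_mul hcop, h4t, htot]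
    omega
  -- the norm exponent
  obtain ⟨M, hM⟩ : ∃ M, M = ∑ i ∈ Finset.range f, p ^ i := ⟨_, rfl⟩
  have hMeq : (p - 1) * M = p ^ f - 1 := by
    rw [hM, mul_comm]
    have h2 := geom_sum_mul_of_one_le (x := p) (by omega) f
    exact h2
  have h4M : 4 ∣ M := by
    obtain ⟨k, hk⟩ : Even f := by
      rw [hfv]
      exact Even.mul_left (Nat.even_iff.mpr (by omega)) _
    have key : ∀ k : ℕ, 4 ∣ ∑ i ∈ Finset.range (k + k), p ^ i := by
      intro k
      induction k with
      | zero => simp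
      | succ k ih =>
        have : k + 1 + (k + 1) = (k + k) + 1 + 1 := by ring
        rw [this, Finset.sum_range_succ, Finset.sum_range_succ, add_assoc]
        refine dvd_add ih ?_
        have : p ^ (k + k) + p ^ (k + k + 1) = p ^ (k + k) * (p + 1) := by ring
        rw [this]
        exact Dvd.dvd.mul_left (by omega) _
    rw [hM, hk]
    exact key k
  have hnl : ¬ l ∣ p - 1 := by
    intro hd
    have h1 : ((l : ℤ)) ∣ (p : ℤ) - 1 := by
      have := Int.natCast_dvd_natCast.mpr hd
      rwa [Nat.cast_sub (by omega), Nat.cast_one] at this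
    have h2 := dvd_sub_pow_of_dvd_sub h1 (r - 1)
    rw [Nat.sub_add_cancel hr, one_pow] at h2
    have h3 : (p : ZMod (l ^ r)) ^ (l ^ (r - 1)) = 1 := by
      have := (ZMod.intCast_zmod_eq_zero_iff_dvd ((p : ℤ) ^ (l ^ (r - 1)) - 1) (l ^ r))
      have h4 := (ZMod.intCast_zmod_eq_zero_iff_dvd ((p : ℤ) ^ (l ^ (r - 1)) - 1) (l ^ r)).mpr
        (by exact_mod_cast h2)
      push_cast at h4
      exact sub_eq_zero.mp h4
    have h5 := orderOf_dvd_of_pow_eq_one h3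
    rw [hord, htot] at h5
    have hpos : 0 < l ^ (r - 1) := Nat.pow_pos (by omega)
    have h6 := Nat.le_of_dvd hpos h5
    have : l ^ (r - 1) * 2 ≤ l ^ (r - 1) * (l - 1) := Nat.mul_le_mul_left _ (by omega)
    omega
  have hlM : l ^ r ∣ M := by
    have hc : Nat.Coprime (l ^ r) (p - 1) :=
      Nat.Coprime.pow_left _ ((Nat.Prime.coprime_iff_not_dvd hl).mpr hnl)
    refine hc.dvd_of_dvd_mul_left ?_
    rw [hMeq]
    have h1 : (p : ZMod (l ^ r)) ^ f = 1 := by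
      rw [hfv, ← htot, ← hord]
      exact pow_orderOf_eq_one _
    rw [← ZMod.natCast_eq_zero_iff, Nat.cast_sub (Nat.one_le_pow _ _ (by omega))]
    push_cast
    rw [h1, sub_self]
  have hNM : N ∣ M := by
    rw [hN]
    exact hcop.mul_dvd_of_dvd_of_dvd h4M hlM
  -- generator
  have hy' : algebraMap (ZMod p) F y ≠ 0 := by
    simpa using hy
  obtain ⟨g, hg⟩ := IsCyclic.exists_generator (α := Fˣ)
  obtain ⟨k, hk⟩ := (mem_powers_iff_mem_zpowers.mpr (hg (Units.mk0 _ hy')))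
  have hk' : g ^ k = Units.mk0 _ hy' := hk
  have hyp : (Units.mk0 _ hy') ^ (p - 1) = 1 := by
    ext
    simp only [Units.val_pow_eq_pow_val, Units.val_mk0, Units.val_one]
    rw [← map_pow, ZMod.pow_card_sub_one_eq_one hy, map_one]
  rw [← hk', ← pow_mul] at hyp
  have hog : orderOf g = p ^ f - 1 := by
    rw [orderOf_eq_card_of_forall_mem_zpowers hg, Nat.card_units, Nat.card_eq_fintype_card, hcard]
  have hdk := orderOf_dvd_of_pow_eq_one hyp
  rw [hog, ← hMeq, mul_comm k] at hdk
  have hMk : M ∣ k := Nat.dvd_of_mul_dvd_mul_left (by omega) hdk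
  have hval : algebraMap (ZMod p) F y = (g : F) ^ k := by
    have := congrArg Units.val hk'
    simpa using this.symm
  have hχk : χ ^ k = 1 := orderOf_dvd_iff_pow_eq_one.mp (hχord ▸ hNM.trans hMk)
  rw [hval, map_pow, ← MulChar.pow_apply_coe, hχk, MulChar.one_apply_coe]
end

section
/- Counting lemma: Let l be a prime with l ≡ 3 (mod 4) and let r ≥ 1. Among the integers s with 1 ≤ s ≤ 2 l^r and gcd(s, 2l) = 1, exactly φ(l^r)/2 + 1 of them satisfy s ≡ 1 (mod 4), and exactly φ(l^r)/2 - 1 of them satisfy s ≡ 3 (mod 4). -/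
open Complex Polynomial IntermediateField

theorem aux_count (k : ℕ) :
    ((Finset.Icc 1 (2 * (2 * k + 1))).filter (fun s => s % 4 = 1)).card = k + 1 ∧
    ((Finset.Icc 1 (2 * (2 * k + 1))).filter (fun s => s % 4 = 3)).card = k := by
  constructor
  · have : (Finset.Icc 1 (2 * (2 * k + 1))).filter (fun s => s % 4 = 1)
        = (Finset.range (k + 1)).image (fun j => 4 * j + 1) := by
      ext x
      simp only [Finset.mem_filter, Finset.mem_Icc, Finset.mem_image, Finset.mem_range]
      constructor
      · rintro ⟨_, _⟩
        exact ⟨x / 4, by omega, by omega⟩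
      · rintro ⟨j, _, rfl⟩
        omega
    rw [this, Finset.card_image_of_injective _ (fun a b h => by simp at h; exact h)]
    simp
  · have : (Finset.Icc 1 (2 * (2 * k + 1))).filter (fun s => s % 4 = 3)
        = (Finset.range k).image (fun j => 4 * j + 3) := by
      ext x
      simp only [Finset.mem_filter, Finset.mem_Icc, Finset.mem_image, Finset.mem_range]
      constructor
      · rintro ⟨_, _⟩
        exact ⟨x / 4, by omega, by omega⟩
      · rintro ⟨j, _, rfl⟩
        omega
    rw [this, Finset.card_image_of_injective _ (fun a b h => by simp at h; exact h)]
    simp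

theorem aux_split (l M v w : ℕ) (hl : l.Prime) (hl4 : l % 4 = 3)
    (hvw : v = 1 ∧ w = 3 ∨ v = 3 ∧ w = 1) :
    ((Finset.Icc 1 (2 * (l * M))).filter (fun s => s % 4 = v)).card =
    ((Finset.Icc 1 (2 * (l * M))).filter (fun s => Nat.gcd s (2 * l) = 1 ∧ s % 4 = v)).card +
    ((Finset.Icc 1 (2 * M)).filter (fun s => s % 4 = w)).card := by
  have hpos := hl.pos
  rw [← Finset.card_image_of_injective (Finset.filter (fun s => s % 4 = w) (Finset.Icc 1 (2 * M)))
    (show Function.Injective (fun t => l * t) from fun a b h => Nat.eq_of_mul_eq_mul_left hpos h), ← Finset.card_union_of_disjoint]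
  · congr 1
    ext x
    have key : ∀ t, (l * t) % 4 = v ↔ t % 4 = w := by
      intro t
      rw [Nat.mul_mod, hl4]
      have := Nat.mod_lt t (show 0 < 4 by norm_num)
      omega
    simp only [Finset.mem_filter, Finset.mem_Icc, Finset.mem_image, Finset.mem_union]
    constructor
    · rintro ⟨⟨h1, h2⟩, h3⟩
      by_cases hd : l ∣ x
      · right
        obtain ⟨t, rfl⟩ := hd
        refine ⟨t, ⟨⟨Nat.pos_of_ne_zero ?_, ?_⟩, (key t).1 h3⟩, rfl⟩
        · rintro rfl
          simp at h1
        · exact Nat.le_of_mul_le_mul_left (by linarith) hpos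
      · left
        refine ⟨⟨h1, h2⟩, ?_, h3⟩
        apply Nat.Coprime.mul_right
        · rw [Nat.coprime_comm, Nat.coprime_two_left, Nat.odd_iff]
          omega
        · exact ((Nat.Prime.coprime_iff_not_dvd hl).2 hd).symm
    · rintro (⟨h, -, h3⟩ | ⟨t, ⟨⟨h1, h2⟩, h3⟩, rfl⟩)
      · exact ⟨h, h3⟩
      · exact ⟨⟨Nat.mul_pos hpos h1, by nlinarith⟩, (key t).2 h3⟩
  · rw [Finset.disjoint_left]
    intro x hx hy
    simp only [Finset.mem_filter, Finset.mem_image] at hx hy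
    obtain ⟨t, -, rfl⟩ := hy
    have h : l ∣ Nat.gcd (l * t) (2 * l) := Nat.dvd_gcd ⟨t, rfl⟩ ⟨2, by ring⟩
    rw [hx.2.1] at h
    exact hl.one_lt.ne' (Nat.dvd_one.1 h)

theorem statement12 (l r : ℕ) (hl : l.Prime) (hl4 : l % 4 = 3) (hr : 1 ≤ r) :
    ((Finset.Icc 1 (2 * l ^ r)).filter
        (fun s => Nat.gcd s (2 * l) = 1 ∧ s % 4 = 1)).card =
      Nat.totient (l ^ r) / 2 + 1 ∧
    ((Finset.Icc 1 (2 * l ^ r)).filter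
        (fun s => Nat.gcd s (2 * l) = 1 ∧ s % 4 = 3)).card =
      Nat.totient (l ^ r) / 2 - 1 := by
  obtain ⟨n, rfl⟩ : ∃ n, r = n + 1 := ⟨r - 1, by omega⟩
  rw [Nat.totient_prime_pow_succ hl, pow_succ' l n]
  have hlo : Odd l := by rw [Nat.odd_iff]; omega
  obtain ⟨m, hm⟩ := hlo.pow (n := n)
  obtain ⟨k, hk⟩ := hlo.mul (hlo.pow (n := n))
  have e1 := aux_split l (l ^ n) 1 3 hl hl4 (by simp)
  have e3 := aux_split l (l ^ n) 3 1 hl hl4 (by simp)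
  have c1 := aux_count k
  have c2 := aux_count m
  rw [← hk] at c1
  rw [← hm] at c2
  rw [c1.1, c2.2] at e1
  rw [c1.2, c2.1] at e3
  have ht : l ^ n * (l - 1) + l ^ n = l * l ^ n := by
    obtain ⟨q, rfl⟩ : ∃ q, l = q + 1 := ⟨l - 1, by omega⟩
    simp only [Nat.add_sub_cancel]
    ring
  omega
end
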